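/- There exist constants c > 0 and x₀ > 0 (depending on a₁, a₂) such that for all x ≥ x₀, G(x) := max{g_u(p−1) : p ≤ x, p prime} satisfies G(x) ≥ c·x^{0.1} (unconditionally; this is the bound obtained in the paper's remark using Linnik-type bounds together with ℓ(n) ≤ 2n²). -/

import Mathlib

open scoped BigOperators

/-- `gu u n = gcd(n, u n)`. -/
noncomputable def gu (u : ℕ → ℤ) (n : ℕ) : ℕ := Int.gcd (n : ℤ) (u n)

/-- Rank of appearance of `m` in the sequence `u`. -/
noncomputable def zu (u : ℕ → ℤ) (m : ℕ) : ℕ := sInf {n : ℕ | 0 < n ∧ (m : ℤ) ∣ u n}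

/-- `ℓ(m) = lcm(m, z_u(m))`. -/
noncomputable def ellu (u : ℕ → ℤ) (m : ℕ) : ℕ := Nat.lcm m (zu u m)

/-- The arithmetic function `ρ_λ`. -/
noncomputable def rho (lam n : ℕ) : ℝ :=
  (Nat.factorial lam : ℝ) *
    ∑ f ∈ (Fintype.piFinset fun _ : n.primeFactors => Finset.range (lam + 1)) |>.filter
        (fun f => ∑ p, f p = lam),
      ∏ p : n.primeFactors,
        (((n.factorization (p : ℕ) : ℝ) ^ f p - ((n.factorization (p : ℕ) : ℝ) - 1) ^ f p) *
          Real.log ((p : ℕ) : ℝ) ^ f p / (Nat.factorial (f p) : ℝ))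

/-- The set of primes `≤ x`. -/
noncomputable def primesUpTo (x : ℝ) : Finset ℕ :=
  (Finset.range (⌊x⌋₊ + 1)).filter Nat.Prime

/-- `π(x)`, the number of primes `≤ x`. -/
noncomputable def primePi (x : ℝ) : ℕ := (primesUpTo x).card

/-- `π(x; b, a)`, the number of primes `p ≤ x` with `p ≡ a (mod b)`. -/
noncomputable def primePiMod (x : ℝ) (b a : ℕ) : ℕ :=
  ((primesUpTo x).filter fun p => p % b = a % b).card

/-- `Δ(x; b, a) = π(x; b, a) - π(x)/φ(b)`. -/
noncomputable def chebErr (x : ℝ) (b a : ℕ) : ℝ :=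
  (primePiMod x b a : ℝ) - (primePi x : ℝ) / (Nat.totient b : ℝ)

namespace LT
open Finset

lemma sum_block (g : ℕ → ℝ) (R r : ℕ) :
    ∑ n ∈ range (R * r), g n = ∑ j ∈ range R, ∑ i ∈ range r, g (j * r + i) := by
  induction R with
  | zero => simp
  | succ k ih => rw [Nat.succ_mul, sum_range_add, ih, sum_range_succ]

lemma sum_extend (g : ℕ → ℝ) (R r : ℕ) (hr : 0 < r) (hg : ∀ n, R ≤ n → g n = 0) :
    ∑ n ∈ range R, g n = ∑ n ∈ range (R * r), g n := by
  apply sum_subset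
  · intro n hn
    simp only [mem_range] at *
    nlinarith
  · intro n _ hn
    simp only [mem_range, not_lt] at hn
    exact hg n hn

lemma class_sum (f : ℕ → ℝ) (R r : ℕ) (hf : ∀ n, R ≤ n → f n = 0) (hr : 0 < r) (c : ℕ) (hc : c < r) :
    ∑ n ∈ range R, (if n % r = c then f n else 0) = ∑ j ∈ range R, f (j * r + c) := by
  rw [sum_extend _ R r hr (by intro n hn; simp [hf n hn]), sum_block]
  refine sum_congr rfl fun j _ => ?_
  rw [sum_eq_single c]
  · simp [Nat.mod_eq_of_lt hc]
  · intro i hi hic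
    have : (j * r + i) % r = i := by
      rw [mul_comm, Nat.mul_add_mod]; exact Nat.mod_eq_of_lt (mem_range.1 hi)
    rw [this]; simp [hic]
  · intro h; exact absurd (mem_range.2 hc) h

lemma tv_class_le (f : ℕ → ℝ) (R r : ℕ) (hf : ∀ n, R ≤ n → f n = 0) (hr : 0 < r)
    (c c' : ℕ) (hcc : c ≤ c') (hc' : c' < r) :
    |∑ n ∈ range R, (if n % r = c' then f n else 0) - ∑ n ∈ range R, (if n % r = c then f n else 0)|
      ≤ ∑ n ∈ range R, |f (n + 1) - f n| := by
  rw [class_sum f R r hf hr c (by omega), class_sum f R r hf hr c' hc', ← sum_sub_distrib]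
  rw [sum_extend (fun n => |f (n+1) - f n|) R r hr
    (by intro n hn; simp [hf n hn, hf (n+1) (by omega)]), sum_block]
  refine (abs_sum_le_sum_abs _ _).trans (sum_le_sum fun j _ => ?_)
  have h1 : f (j * r + c') - f (j * r + c) = ∑ i ∈ Ico c c', (f (j * r + i + 1) - f (j * r + i)) := by
    have := Finset.sum_Ico_sub (fun i => f (j * r + i)) hcc
    rw [← this]; rfl
  rw [h1]
  refine (abs_sum_le_sum_abs _ _).trans ?_
  apply sum_le_sum_of_subset_of_nonneg
  · intro i hi
    simp only [mem_Ico, mem_range] at *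
    omega
  · intros; positivity

lemma tv_class (f : ℕ → ℝ) (R r : ℕ) (hf : ∀ n, R ≤ n → f n = 0) (hr : 0 < r)
    (c c' : ℕ) (hc : c < r) (hc' : c' < r) :
    |∑ n ∈ range R, (if n % r = c then f n else 0) - ∑ n ∈ range R, (if n % r = c' then f n else 0)|
      ≤ ∑ n ∈ range R, |f (n + 1) - f n| := by
  rcases le_total c c' with h | h
  · rw [abs_sub_comm]; exact tv_class_le f R r hf hr c c' h hc'
  · exact tv_class_le f R r hf hr c' c h hc

/-- Total discrepancy bound `K` of a weight over residue classes. -/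
def Disc (s : Finset ℕ) (f : ℕ → ℝ) (K : ℝ) : Prop :=
  ∀ q : ℕ, 0 < q → ∀ a b : ℕ, a.Coprime q → b.Coprime q →
    |∑ n ∈ s, (if n % q = a % q then f n else 0) - ∑ n ∈ s, (if n % q = b % q then f n else 0)| ≤ K

lemma disc_dvd (f : ℕ → ℝ) (R : ℕ) (hf : ∀ n, R ≤ n → f n = 0) (h : ℕ) (hh : 0 < h) :
    Disc (range R) (fun n => if h ∣ n then f n else 0) (∑ n ∈ range R, |f (n + 1) - f n|) := by
  intro q hq a b ha hb
  by_cases hc : h.Coprime q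
  · have key : ∀ a, ∃ c < h * q, ∀ n, (n % q = a % q ∧ h ∣ n) ↔ n % (h * q) = c := by
      intro a
      obtain ⟨c, hc1, hc2⟩ := Nat.chineseRemainder hc 0 a
      refine ⟨c % (h * q), Nat.mod_lt _ (by positivity), fun n => ?_⟩
      have e1 : n % (h * q) = c % (h * q) ↔ n ≡ c [MOD h] ∧ n ≡ c [MOD q] :=
        (Nat.modEq_and_modEq_iff_modEq_mul hc).symm
      rw [e1]
      constructor
      · rintro ⟨h1, h2⟩
        exact ⟨((Nat.modEq_zero_iff_dvd.2 h2)).trans hc1.symm, Nat.ModEq.trans h1 hc2.symm⟩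
      · rintro ⟨h1, h2⟩
        exact ⟨h2.trans hc2, Nat.modEq_zero_iff_dvd.1 (h1.trans hc1)⟩
    obtain ⟨c, hc, hc'⟩ := key a
    obtain ⟨d, hd, hd'⟩ := key b
    have := tv_class f R (h * q) hf (by positivity) c d hc hd
    convert this using 4 with n _ n _
    · rw [← ite_and, if_congr (hc' n) rfl rfl]
    · rw [← ite_and, if_congr (hd' n) rfl rfl]
  · have key : ∀ a : ℕ, a.Coprime q → ∑ n ∈ range R, (if n % q = a % q then (if h ∣ n then f n else 0) else 0) = 0 := by
      intro a ha
      refine sum_eq_zero fun n _ => ?_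
      split_ifs with h1 h2
      · exfalso
        obtain ⟨p, hp, hp1, hp2⟩ := Nat.Prime.not_coprime_iff_dvd.1 hc
        have : p ∣ a := by
          have h3 : n ≡ a [MOD p] := Nat.ModEq.of_dvd hp2 h1
          exact (Nat.ModEq.dvd_iff h3 dvd_rfl).1 (hp1.trans h2)
        exact Nat.not_coprime_of_dvd_of_dvd hp.one_lt this hp2 ha
      all_goals rfl
    rw [key a ha, key b hb]
    simp
    exact sum_nonneg fun _ _ => abs_nonneg _

lemma Disc.mono {s : Finset ℕ} {f : ℕ → ℝ} {K K' : ℝ} (h : Disc s f K) (hK : K ≤ K') : Disc s f K' :=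
  fun q hq a b ha hb => (h q hq a b ha hb).trans hK

lemma Disc.sum {ι : Type*} {s : Finset ℕ} (T : Finset ι) (f : ι → ℕ → ℝ) (K : ι → ℝ) (c : ι → ℝ)
    (h : ∀ i ∈ T, Disc s (f i) (K i)) :
    Disc s (fun n => ∑ i ∈ T, c i * f i n) (∑ i ∈ T, |c i| * K i) := by
  intro q hq a b ha hb
  have e : ∀ a, ∑ n ∈ s, (if n % q = a % q then ∑ i ∈ T, c i * f i n else 0)
      = ∑ i ∈ T, c i * ∑ n ∈ s, (if n % q = a % q then f i n else 0) := by
    intro a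
    simp_rw [mul_sum]
    rw [sum_comm]
    refine sum_congr rfl fun n _ => ?_
    split_ifs <;> simp
  rw [e, e, ← sum_sub_distrib]
  refine (abs_sum_le_sum_abs _ _).trans (sum_le_sum fun i hi => ?_)
  rw [← mul_sub, abs_mul]
  exact mul_le_mul_of_nonneg_left (h i hi q hq a b ha hb) (abs_nonneg _)

/-- Units representatives. -/
def UU (D : ℕ) : Finset ℕ := (range D).filter (fun a => a.Coprime D)

lemma card_UU (D : ℕ) : (UU D).card = D.totient := by
  unfold UU
  rw [Nat.totient]
  congr 1
  ext a; simp [Nat.coprime_comm]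

lemma coprime_mod {n D : ℕ} : (n % D).Coprime D ↔ n.Coprime D := by
  unfold Nat.Coprime
  rw [← Nat.gcd_rec, Nat.gcd_comm]
  
lemma sum_UU (D : ℕ) (hD : 0 < D) (n : ℕ) (g : ℝ) :
    ∑ a ∈ UU D, (if n % D = a then g else 0) = if n.Coprime D then g else 0 := by
  rw [sum_ite_eq]
  refine if_congr ?_ rfl rfl
  simp [UU, Nat.mod_lt _ hD]

/-- average over units vs one class -/
lemma Disc.avg {s : Finset ℕ} {f : ℕ → ℝ} {K : ℝ} (h : Disc s f K) (D : ℕ) (hD : 0 < D) (a : ℕ)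
    (ha : a.Coprime D) :
    |∑ n ∈ s, (if n % D = a % D then f n else 0)
      - (1 / (D.totient : ℝ)) * ∑ n ∈ s, (if n.Coprime D then f n else 0)| ≤ K := by
  have hφ : (0:ℝ) < D.totient := by exact_mod_cast Nat.totient_pos.2 hD
  have e : ∑ n ∈ s, (if n.Coprime D then f n else 0) =
      ∑ b ∈ UU D, ∑ n ∈ s, (if n % D = b % D then f n else 0) := by
    rw [sum_comm]
    refine sum_congr rfl fun n _ => ?_
    rw [← sum_UU D hD]
    refine sum_congr rfl fun b hb => ?_
    rw [Nat.mod_eq_of_lt (mem_range.1 (mem_filter.1 hb).1)]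
  have e2 : ∑ n ∈ s, (if n % D = a % D then f n else 0)
      - (1 / (D.totient : ℝ)) * ∑ n ∈ s, (if n.Coprime D then f n else 0) =
      (1 / (D.totient : ℝ)) * ∑ b ∈ UU D, (∑ n ∈ s, (if n % D = a % D then f n else 0) -
        ∑ n ∈ s, (if n % D = b % D then f n else 0)) := by
    rw [sum_sub_distrib, sum_const, card_UU, e, nsmul_eq_mul]
    field_simp
  rw [e2, abs_mul, abs_of_pos (by positivity)]
  have : |∑ b ∈ UU D, (∑ n ∈ s, (if n % D = a % D then f n else 0) -
        ∑ n ∈ s, (if n % D = b % D then f n else 0))| ≤ D.totient * K := by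
    refine (abs_sum_le_sum_abs _ _).trans ?_
    refine (sum_le_sum (fun b hb => h D hD a b ha (mem_filter.1 hb).2)).trans ?_
    rw [sum_const, show (filter (fun b => b.Coprime D) (range D)).card = D.totient from card_UU D, nsmul_eq_mul]
  rw [one_div, inv_mul_le_iff₀ hφ]
  exact this

end LT

namespace LT
open Finset

lemma duality {ι : Type*} (T : Finset ι) (s : Finset ℕ) (ω : ι → ℝ) (c : ι → ℕ → ℝ) (W f : ℕ → ℝ)
    (hW : ∀ n ∈ s, 0 < W n) (hω : ∀ i ∈ T, 0 ≤ ω i) (R : ℝ) (hR0 : 0 ≤ R)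
    (hR : ∀ i ∈ T, ∑ j ∈ T, ω j * |∑ n ∈ s, W n * c i n * c j n| ≤ R) :
    ∑ i ∈ T, ω i * (∑ n ∈ s, f n * c i n) ^ 2 ≤ R * ∑ n ∈ s, f n ^ 2 / W n := by
  set S : ι → ℝ := fun i => ∑ n ∈ s, f n * c i n with hS
  set t := ∑ i ∈ T, ω i * (S i) ^ 2 with ht
  set g : ℕ → ℝ := fun n => ∑ i ∈ T, ω i * S i * c i n with hg
  have h1 : t = ∑ n ∈ s, f n * g n := by
    simp only [ht, hg, mul_sum]
    rw [sum_comm]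
    refine sum_congr rfl fun i _ => ?_
    rw [sq]
    nth_rewrite 2 [hS]
    simp only [mul_sum]
    exact sum_congr rfl fun n _ => by ring
  have h2 : ∑ n ∈ s, W n * g n ^ 2 ≤ R * t := by
    have e : ∑ n ∈ s, W n * g n ^ 2 = ∑ i ∈ T, ∑ j ∈ T, ω i * ω j * (S i * S j) * ∑ n ∈ s, W n * c i n * c j n := by
      have e0 : ∀ n, W n * g n ^ 2 = ∑ i ∈ T, ∑ j ∈ T, ω i * ω j * (S i * S j) * (W n * c i n * c j n) := by
        intro n
        rw [hg, sq, sum_mul_sum, mul_sum]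
        refine sum_congr rfl fun i _ => ?_
        rw [mul_sum]
        exact sum_congr rfl fun j _ => by ring
      simp_rw [e0, mul_sum]
      rw [sum_comm]
      refine sum_congr rfl fun i _ => ?_
      rw [sum_comm]
    rw [e]
    have e2 : ∀ i ∈ T, ∀ j ∈ T, ω i * ω j * (S i * S j) * ∑ n ∈ s, W n * c i n * c j n ≤
        (ω i * S i ^ 2 * (ω j * |∑ n ∈ s, W n * c i n * c j n|)
        + ω j * S j ^ 2 * (ω i * |∑ n ∈ s, W n * c j n * c i n|)) / 2 := by
      intro i hi j hj
      have hh : ∑ n ∈ s, W n * c j n * c i n = ∑ n ∈ s, W n * c i n * c j n :=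
        sum_congr rfl fun n _ => by ring
      rw [hh]
      set z := ∑ n ∈ s, W n * c i n * c j n
      have ha : (S i * S j) * z ≤ (S i ^ 2 + S j ^ 2) / 2 * |z| := by
        calc (S i * S j) * z ≤ |(S i * S j) * z| := le_abs_self _
          _ = |S i * S j| * |z| := abs_mul _ _
          _ ≤ _ := by
            apply mul_le_mul_of_nonneg_right _ (abs_nonneg _)
            rw [abs_le]; constructor <;> nlinarith [sq_nonneg (S i - S j), sq_nonneg (S i + S j)]
      have hb := mul_nonneg (hω i hi) (hω j hj)
      nlinarith [mul_le_mul_of_nonneg_left ha hb]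
    have e3 : ∑ i ∈ T, ∑ j ∈ T, ω i * S i ^ 2 * (ω j * |∑ n ∈ s, W n * c i n * c j n|) ≤ R * t := by
      rw [ht, mul_sum]
      refine sum_le_sum fun i hi => ?_
      rw [← mul_sum, mul_comm R]
      exact mul_le_mul_of_nonneg_left (hR i hi) (mul_nonneg (hω i hi) (sq_nonneg _))
    calc _ ≤ ∑ i ∈ T, ∑ j ∈ T, (ω i * S i ^ 2 * (ω j * |∑ n ∈ s, W n * c i n * c j n|)
        + ω j * S j ^ 2 * (ω i * |∑ n ∈ s, W n * c j n * c i n|)) / 2 :=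
          sum_le_sum fun i hi => sum_le_sum fun j hj => e2 i hi j hj
      _ = (∑ i ∈ T, ∑ j ∈ T, ω i * S i ^ 2 * (ω j * |∑ n ∈ s, W n * c i n * c j n|) +
          ∑ i ∈ T, ∑ j ∈ T, ω j * S j ^ 2 * (ω i * |∑ n ∈ s, W n * c j n * c i n|)) / 2 := by
          simp only [← sum_div, ← sum_add_distrib]
      _ = (∑ i ∈ T, ∑ j ∈ T, ω i * S i ^ 2 * (ω j * |∑ n ∈ s, W n * c i n * c j n|) +
          ∑ j ∈ T, ∑ i ∈ T, ω j * S j ^ 2 * (ω i * |∑ n ∈ s, W n * c j n * c i n|)) / 2 := by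
          congr 2
          exact sum_comm
      _ ≤ R * t := by linarith
  have h3 : t ^ 2 ≤ (∑ n ∈ s, f n ^ 2 / W n) * (∑ n ∈ s, W n * g n ^ 2) := by
    rw [h1]
    apply sum_sq_le_sum_mul_sum_of_sq_le_mul
    · intro n hn; exact div_nonneg (sq_nonneg _) (hW n hn).le
    · intro n hn; exact mul_nonneg (hW n hn).le (sq_nonneg _)
    · intro n hn
      have := (hW n hn).ne'
      apply le_of_eq
      field_simp
  have h4 : 0 ≤ ∑ n ∈ s, f n ^ 2 / W n := sum_nonneg fun n hn => div_nonneg (sq_nonneg _) (hW n hn).le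
  have h0 : 0 ≤ t := sum_nonneg fun i hi => mul_nonneg (hω i hi) (sq_nonneg _)
  have h5 : t ^ 2 ≤ (∑ n ∈ s, f n ^ 2 / W n) * (R * t) := h3.trans (mul_le_mul_of_nonneg_left h2 h4)
  rcases h0.eq_or_lt with h | h
  · rw [← h]; positivity
  · nlinarith

noncomputable def cc (D a n : ℕ) : ℝ :=
  (if n % D = a then 1 else 0) - (if n.Coprime D then 1 / (D.totient : ℝ) else 0)

noncomputable def VarD (D : ℕ) (s : Finset ℕ) (f : ℕ → ℝ) : ℝ :=
  ∑ a ∈ UU D, (∑ n ∈ s, f n * cc D a n) ^ 2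

lemma cc_eq (D a n : ℕ) (hD : 0 < D) :
    cc D a n = 1 / (D.totient : ℝ) * ∑ b ∈ UU D, ((if n % D = a then 1 else 0) - (if n % D = b then 1 else 0)) := by
  have hφ : (0:ℝ) < D.totient := by exact_mod_cast Nat.totient_pos.2 hD
  rw [sum_sub_distrib, sum_UU D hD, sum_const, card_UU, nsmul_eq_mul, cc]
  split_ifs <;> field_simp <;> ring

lemma row_diff (s : Finset ℕ) (W : ℕ → ℝ) (K : ℝ) (hK : Disc s W K) (D D' a a' : ℕ)
    (hD : 0 < D) (hD' : 0 < D') (hc : D.Coprime D') (ha : a ∈ UU D) (ha' : a' ∈ UU D') :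
    |∑ n ∈ s, W n * cc D a n * cc D' a' n| ≤ 2 * K := by
  have hφ : (0:ℝ) < D.totient := by exact_mod_cast Nat.totient_pos.2 hD
  have hφ' : (0:ℝ) < D'.totient := by exact_mod_cast Nat.totient_pos.2 hD'
  set N : ℕ → ℕ → ℝ := fun a a' => ∑ n ∈ s, W n * (if n % D = a then 1 else 0) * (if n % D' = a' then 1 else 0) with hN
  have key : ∀ a ∈ UU D, ∀ b ∈ UU D, ∀ a' ∈ UU D', |N a a' - N b a'| ≤ K := by
    have h0 : ∀ a ∈ UU D, ∀ a' ∈ UU D', ∃ c : ℕ, c.Coprime (D * D') ∧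
        N a a' = ∑ n ∈ s, (if n % (D * D') = c % (D * D') then W n else 0) := by
      intro a ha a' ha'
      simp only [UU, mem_filter, mem_range] at ha ha'
      obtain ⟨c, hc1, hc2⟩ := Nat.chineseRemainder hc a a'
      refine ⟨c, ?_, ?_⟩
      · apply Nat.Coprime.mul_right
        · rw [← coprime_mod, hc1, coprime_mod]; exact ha.2
        · rw [← coprime_mod, hc2, coprime_mod]; exact ha'.2
      · refine sum_congr rfl fun n _ => ?_
        have e1 : n % (D * D') = c % (D * D') ↔ n ≡ c [MOD D] ∧ n ≡ c [MOD D'] :=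
          (Nat.modEq_and_modEq_iff_modEq_mul hc).symm
        have e2 : n % D = a ↔ n ≡ c [MOD D] := by
          constructor
          · intro h; exact (show n % D = a % D by rw [h, Nat.mod_eq_of_lt ha.1]).trans hc1.symm
          · intro h; have := Nat.ModEq.trans h hc1; rw [Nat.ModEq, Nat.mod_eq_of_lt ha.1] at this; exact this
        have e3 : n % D' = a' ↔ n ≡ c [MOD D'] := by
          constructor
          · intro h; exact (show n % D' = a' % D' by rw [h, Nat.mod_eq_of_lt ha'.1]).trans hc2.symm
          · intro h; have := Nat.ModEq.trans h hc2; rw [Nat.ModEq, Nat.mod_eq_of_lt ha'.1] at this; exact this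
        simp only [e1, e2, e3]
        split_ifs <;> simp_all
    intro a ha b hb a' ha'
    obtain ⟨c, hc1, hc2⟩ := h0 a ha a' ha'
    obtain ⟨d, hd1, hd2⟩ := h0 b hb a' ha'
    rw [hc2, hd2]
    exact hK (D * D') (by positivity) c d hc1 hd1
  have e : ∑ n ∈ s, W n * cc D a n * cc D' a' n = 1 / (D.totient : ℝ) * (1 / (D'.totient : ℝ)) *
      ∑ b ∈ UU D, ∑ b' ∈ UU D', ((N a a' - N b a') - (N a b' - N b b')) := by
    have : ∀ n, W n * cc D a n * cc D' a' n = 1 / (D.totient : ℝ) * (1 / (D'.totient : ℝ)) *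
      ∑ b ∈ UU D, ∑ b' ∈ UU D', W n * ((if n % D = a then 1 else 0) - (if n % D = b then 1 else 0)) *
        ((if n % D' = a' then 1 else 0) - (if n % D' = b' then 1 else 0)) := by
      intro n
      rw [cc_eq D a n hD, cc_eq D' a' n hD']
      have : ∀ (p q : ℕ → ℝ), ∑ b ∈ UU D, ∑ b' ∈ UU D', W n * p b * q b' = W n * ((∑ b ∈ UU D, p b) * ∑ b' ∈ UU D', q b') := by
        intro p q
        rw [sum_mul_sum, mul_sum]
        refine sum_congr rfl fun b _ => ?_
        rw [mul_sum]
        exact sum_congr rfl fun b' _ => by ring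
      rw [this]
      ring
    simp_rw [this]
    rw [← mul_sum, sum_comm]
    congr 1
    refine sum_congr rfl fun b _ => ?_
    rw [sum_comm]
    refine sum_congr rfl fun b' _ => ?_
    simp only [hN, ← sum_sub_distrib]
    refine sum_congr rfl fun n _ => ?_
    ring
  rw [e, abs_mul, abs_of_pos (by positivity)]
  have : |∑ b ∈ UU D, ∑ b' ∈ UU D', ((N a a' - N b a') - (N a b' - N b b'))| ≤ D.totient * (D'.totient * (2 * K)) := by
    refine (abs_sum_le_sum_abs _ _).trans ?_
    rw [← card_UU D, ← nsmul_eq_mul]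
    apply sum_le_card_nsmul
    intro b hb
    refine (abs_sum_le_sum_abs _ _).trans ?_
    rw [← card_UU D', ← nsmul_eq_mul]
    apply sum_le_card_nsmul
    intro b' hb'
    have h1 := key a ha b hb a' ha'
    have h2 := key a ha b hb b' hb'
    rw [abs_le] at *
    constructor <;> linarith
  calc _ ≤ 1 / (D.totient : ℝ) * (1 / (D'.totient : ℝ)) * (D.totient * (D'.totient * (2 * K))) := by gcongr
    _ = _ := by field_simp

lemma row_same (s : Finset ℕ) (W : ℕ → ℝ) (hW : ∀ n ∈ s, 0 ≤ W n) (K : ℝ) (hK : Disc s W K) (D a : ℕ)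
    (hD : 0 < D) (ha : a ∈ UU D) :
    ∑ a' ∈ UU D, (D.totient : ℝ) * |∑ n ∈ s, W n * cc D a n * cc D a' n| ≤
      4 * ∑ n ∈ s, W n + 2 * D.totient * K := by
  have hφ : (0:ℝ) < D.totient := by exact_mod_cast Nat.totient_pos.2 hD
  have ha' := ha
  simp only [UU, mem_filter, mem_range] at ha'
  set Na : ℝ := ∑ n ∈ s, (if n % D = a then W n else 0) with hNa
  set Nc : ℝ := ∑ n ∈ s, (if n.Coprime D then W n else 0) with hNc
  have h1 : (D.totient : ℝ) * Na ≤ Nc + D.totient * K := by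
    have := hK.avg D hD a ha'.2
    rw [Nat.mod_eq_of_lt ha'.1] at this
    have := (abs_le.1 this).2
    have h2 := mul_le_mul_of_nonneg_left this hφ.le
    rw [mul_sub] at h2
    have : (D.totient : ℝ) * (1 / (D.totient : ℝ) * Nc) = Nc := by field_simp
    linarith
  have h2 : Nc ≤ ∑ n ∈ s, W n := by
    refine sum_le_sum fun n hn => ?_
    split_ifs
    · exact le_rfl
    · exact hW n hn
  have h3 : ∀ n ∈ s, ∑ a' ∈ UU D, (D.totient : ℝ) * (W n * |cc D a n| * |cc D a' n|) ≤
      2 * D.totient * (if n % D = a then W n else 0) + 2 * (if n.Coprime D then W n else 0) := by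
    intro n hn
    have b1 : ∀ x, |cc D x n| ≤ (if n % D = x then 1 else 0) + (if n.Coprime D then 1 / (D.totient : ℝ) else 0) := by
      intro x
      rw [cc]
      refine (abs_sub _ _).trans ?_
      apply le_of_eq
      congr 1
      · split_ifs <;> simp
      · split_ifs <;> simp
    have b2 : ∑ a' ∈ UU D, |cc D a' n| ≤ if n.Coprime D then 2 else 0 := by
      refine (sum_le_sum fun x _ => b1 x).trans ?_
      rw [sum_add_distrib, sum_UU D hD, sum_const, card_UU, nsmul_eq_mul]
      split_ifs
      · apply le_of_eq; field_simp; norm_num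
      · simp
    rw [← mul_sum, ← mul_sum]
    have hw := hW n hn
    by_cases hcop : n.Coprime D
    · rw [if_pos hcop] at b2 ⊢
      have b3 := b1 a
      rw [if_pos hcop] at b3
      calc (D.totient : ℝ) * (W n * |cc D a n| * ∑ i ∈ UU D, |cc D i n|) ≤
        D.totient * (W n * ((if n % D = a then 1 else 0) + 1 / (D.totient : ℝ)) * 2) := by gcongr
        _ = _ := by split_ifs <;> field_simp <;> ring
    · rw [if_neg hcop] at b2 ⊢
      have b4 : ∑ i ∈ UU D, |cc D i n| = 0 := le_antisymm b2 (sum_nonneg fun _ _ => abs_nonneg _)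
      rw [b4]
      have : (0:ℝ) ≤ if n % D = a then W n else 0 := by split_ifs <;> [exact hw; rfl]
      simp only [mul_zero, add_zero]
      positivity
  calc _ ≤ ∑ a' ∈ UU D, (D.totient : ℝ) * ∑ n ∈ s, W n * |cc D a n| * |cc D a' n| := by
        refine sum_le_sum fun a' _ => ?_
        gcongr
        refine (abs_sum_le_sum_abs _ _).trans (sum_le_sum fun n hn => ?_)
        rw [abs_mul, abs_mul, abs_of_nonneg (hW n hn)]
    _ = ∑ n ∈ s, ∑ a' ∈ UU D, (D.totient : ℝ) * (W n * |cc D a n| * |cc D a' n|) := by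
        simp_rw [mul_sum]; rw [sum_comm]
    _ ≤ ∑ n ∈ s, (2 * D.totient * (if n % D = a then W n else 0) + 2 * (if n.Coprime D then W n else 0)) :=
        sum_le_sum h3
    _ = 2 * D.totient * Na + 2 * Nc := by rw [sum_add_distrib, ← mul_sum, ← mul_sum]
    _ ≤ _ := by nlinarith

theorem large_sieve (s : Finset ℕ) (W f : ℕ → ℝ) (hW : ∀ n ∈ s, 0 < W n) (K : ℝ) (hK0 : 0 ≤ K) (hK : Disc s W K)
    (G : Finset ℕ) (Q : ℝ) (hG : ∀ D ∈ G, 0 < D ∧ (D : ℝ) ≤ Q)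
    (hcop : ∀ D ∈ G, ∀ D' ∈ G, D ≠ D' → D.Coprime D') :
    ∑ D ∈ G, (D.totient : ℝ) * VarD D s f ≤
      (4 * ∑ n ∈ s, W n + 2 * K * Q ^ 2 * G.card) * ∑ n ∈ s, f n ^ 2 / W n := by
  have := duality (G.sigma (fun D => UU D)) s (fun i => (i.1.totient : ℝ)) (fun i => cc i.1 i.2) W f hW
    (fun i _ => by positivity) (4 * ∑ n ∈ s, W n + 2 * K * Q ^ 2 * G.card) ?_ ?_
  swap
  · have := sum_nonneg fun n hn => (hW n hn).le
    positivity
  · rw [sum_sigma] at this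
    refine le_trans (le_of_eq ?_) this
    refine sum_congr rfl fun D _ => ?_
    rw [VarD, mul_sum]
  · rintro ⟨D, a⟩ hi
    rw [mem_sigma] at hi
    obtain ⟨hD, ha⟩ := hi
    simp only at hD ha
    rw [sum_sigma, ← add_sum_erase _ _ hD]
    simp only
    have h1 := row_same s W (fun n hn => (hW n hn).le) K hK D a (hG D hD).1 ha
    have hφ : ∀ D ∈ G, (D.totient : ℝ) ≤ Q := fun D hD => le_trans (by exact_mod_cast Nat.totient_le D) (hG D hD).2
    have hQ1 : 1 ≤ Q := le_trans (by exact_mod_cast (hG D hD).1) (hG D hD).2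
    have h2 : ∑ D' ∈ G.erase D, ∑ a' ∈ UU D', (D'.totient : ℝ) * |∑ n ∈ s, W n * cc D a n * cc D' a' n|
        ≤ (G.erase D).card • (2 * K * Q ^ 2) := by
      apply sum_le_card_nsmul
      intro D' hD'
      obtain ⟨hne, hD'⟩ := mem_erase.1 hD'
      calc _ ≤ (UU D').card • ((D'.totient : ℝ) * (2 * K)) := by
            apply sum_le_card_nsmul
            intro a' ha'
            gcongr
            exact row_diff s W K hK D D' a a' (hG D hD).1 (hG D' hD').1 (hcop D hD D' hD' hne.symm) ha ha'
        _ = (D'.totient : ℝ) ^ 2 * (2 * K) := by rw [card_UU, nsmul_eq_mul]; ring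
        _ ≤ Q ^ 2 * (2 * K) := by gcongr; exact hφ D' hD'
        _ = _ := by ring
    rw [card_erase_of_mem hD, nsmul_eq_mul, Nat.cast_sub (card_pos.2 ⟨D, hD⟩)] at h2
    have h3 : 2 * (D.totient : ℝ) * K ≤ 2 * K * Q ^ 2 := by
      have := hφ D hD
      have h4 : (D.totient : ℝ) ≤ Q ^ 2 := by nlinarith
      nlinarith
    push_cast at h2
    linarith

end LT

namespace LT
open Finset
open scoped ArithmeticFunction.Moebius

lemma hyper (F : ℕ → ℕ → ℝ) (N : ℕ) :
    ∑ n ∈ Ioc 0 N, ∑ k ∈ n.divisors, F k (n / k) = ∑ k ∈ Ioc 0 N, ∑ j ∈ Ioc 0 (N / k), F k j := by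
  rw [sum_sigma', sum_sigma']
  refine sum_bij' (fun x _ => ⟨x.2, x.1 / x.2⟩) (fun x _ => ⟨x.1 * x.2, x.1⟩) ?_ ?_ ?_ ?_ ?_
  · rintro ⟨n, k⟩ h
    simp only [mem_sigma, mem_Ioc, Nat.mem_divisors] at h ⊢
    obtain ⟨⟨h1, h2⟩, h3, h4⟩ := h
    have := Nat.le_of_dvd h1 h3
    have hk := Nat.pos_of_dvd_of_pos h3 h1
    exact ⟨⟨hk, by omega⟩, Nat.div_pos this hk, Nat.div_le_div_right h2⟩
  · rintro ⟨k, j⟩ h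
    simp only [mem_sigma, mem_Ioc, Nat.mem_divisors] at h ⊢
    obtain ⟨⟨h1, h2⟩, h3, h4⟩ := h
    refine ⟨⟨by positivity, ?_⟩, Dvd.intro _ rfl, by positivity⟩
    rw [Nat.le_div_iff_mul_le h1] at h4
    linarith [mul_comm j k]
  · rintro ⟨n, k⟩ h
    simp only [mem_sigma, mem_Ioc, Nat.mem_divisors] at h ⊢
    rw [Nat.mul_div_cancel' h.2.1]
  · rintro ⟨k, j⟩ h
    simp only [mem_sigma, mem_Ioc] at h ⊢
    rw [Nat.mul_div_cancel_left _ h.1.1]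
  · rintro ⟨n, k⟩ h
    rfl

lemma coprime_part (δ : ℕ) (n : ℕ) : 0 < n →
    ∃ m, m ∣ n ∧ m.Coprime δ ∧ ∀ k, k.Coprime δ → k ∣ n → k ∣ m := by
  induction n using Nat.strong_induction_on with
  | _ n ih =>
    intro hn
    by_cases h : n.Coprime δ
    · exact ⟨n, dvd_rfl, h, fun k _ h => h⟩
    · obtain ⟨p, hp, hp1, hp2⟩ := Nat.Prime.not_coprime_iff_dvd.1 h
      obtain ⟨t, rfl⟩ := hp1
      have ht : 0 < t := Nat.pos_of_mul_pos_left hn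
      obtain ⟨m, h1, h2, h3⟩ := ih t (by nlinarith [hp.two_le]) ht
      refine ⟨m, h1.mul_left p, h2, fun k hk hkd => h3 k hk ?_⟩
      have : k.Coprime p := Nat.Coprime.coprime_dvd_right hp2 hk
      exact this.dvd_of_dvd_mul_left hkd

/-- Sum of Moebius over divisors coprime to `δ`. -/
noncomputable def gg (δ n : ℕ) : ℝ := ∑ k ∈ n.divisors, if k.Coprime δ then (μ k : ℝ) else 0

lemma sum_moebius (n : ℕ) : ∑ k ∈ n.divisors, (μ k : ℝ) = if n = 1 then 1 else 0 := by
  have := congrArg (fun f => f n) ArithmeticFunction.moebius_mul_coe_zeta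
  simp only [ArithmeticFunction.coe_mul_zeta_apply, ArithmeticFunction.one_apply] at this
  exact_mod_cast congrArg (fun x : ℤ => (x : ℝ)) this

lemma gg_eq (δ n : ℕ) (hn : 0 < n) :
    gg δ n = 0 ∨ (gg δ n = 1 ∧ ∀ p, p.Prime → p ∣ n → p ∣ δ) := by
  obtain ⟨m, h1, h2, h3⟩ := coprime_part δ n hn
  have e : gg δ n = ∑ k ∈ m.divisors, (μ k : ℝ) := by
    rw [gg, ← sum_filter]
    congr 1
    ext k
    simp only [mem_filter, Nat.mem_divisors]
    constructor
    · rintro ⟨⟨a, b⟩, c⟩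
      exact ⟨h3 k c a, (Nat.pos_of_dvd_of_pos h1 hn).ne'⟩
    · rintro ⟨a, b⟩
      exact ⟨⟨a.trans h1, hn.ne'⟩, Nat.Coprime.coprime_dvd_left a h2⟩
  rw [e, sum_moebius]
  split_ifs with h
  · right
    refine ⟨rfl, fun p hp hpn => ?_⟩
    by_contra hpd
    have := h3 p ((Nat.Prime.coprime_iff_not_dvd hp).2 hpd) hpn
    rw [h] at this
    exact hp.one_lt.ne' (Nat.dvd_one.1 this)
  · left; rfl

lemma gg_nonneg (δ n : ℕ) (hn : 0 < n) : 0 ≤ gg δ n := by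
  rcases gg_eq δ n hn with h | h
  · rw [h]
  · rw [h.1]; norm_num

lemma gg_le_one (δ n : ℕ) (hn : 0 < n) : gg δ n ≤ 1 := by
  rcases gg_eq δ n hn with h | h
  · rw [h]; norm_num
  · rw [h.1]

lemma ratio_eq (δ : ℕ) (hδ : 0 < δ) :
    ∏ p ∈ δ.primeFactors, (1 - (p : ℝ)⁻¹)⁻¹ = δ / δ.totient := by
  have h := Nat.totient_eq_mul_prod_factors δ
  have h' : (δ.totient : ℝ) = δ * ∏ p ∈ δ.primeFactors, (1 - (p : ℝ)⁻¹) := by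
    have h1 := congrArg (fun x : ℚ => (x : ℝ)) h
    push_cast at h1
    exact h1
  have hφ : (0:ℝ) < δ.totient := by exact_mod_cast Nat.totient_pos.2 hδ
  rw [prod_inv_distrib, eq_div_iff hφ.ne', h']
  have : ∏ p ∈ δ.primeFactors, (1 - (p : ℝ)⁻¹) ≠ 0 := by
    intro h0; rw [h0] at h'; simp at h'; omega
  generalize ∏ p ∈ δ.primeFactors, (1 - (p : ℝ)⁻¹) = z at *
  field_simp

lemma sum_gg_div (δ : ℕ) (hδ : 0 < δ) (N : ℕ) :
    ∑ n ∈ Ioc 0 N, gg δ n / n ≤ δ / δ.totient := by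
  let f : ℕ →* ℝ := ⟨⟨fun n => (n : ℝ)⁻¹, by simp⟩, by intro a b; simp [mul_comm]⟩
  have hs := EulerProduct.summable_and_hasSum_factoredNumbers_prod_filter_prime_geometric (f := f)
    (by
      intro p hp
      simp only [f, MonoidHom.coe_mk, OneHom.coe_mk, norm_inv, RCLike.norm_natCast]
      exact inv_lt_one_of_one_lt₀ (by exact_mod_cast hp.one_lt)) δ.primeFactors
  have h2 := hs.2
  have e : ∏ p ∈ δ.primeFactors with p.Prime, (1 - f p)⁻¹ = δ / δ.totient := by
    rw [← ratio_eq δ hδ, filter_true_of_mem (fun p hp => Nat.prime_of_mem_primeFactors hp)]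
    rfl
  rw [e] at h2
  set T := (Ioc 0 N).filter (fun n => gg δ n ≠ 0) with hT
  have hmem : ∀ n ∈ T, n ∈ Nat.factoredNumbers δ.primeFactors := by
    intro n hn
    rw [hT, mem_filter, mem_Ioc] at hn
    rcases gg_eq δ n hn.1.1 with h | h
    · exact absurd h hn.2
    · rw [Nat.mem_factoredNumbers']
      intro p hp hpn
      exact Nat.mem_primeFactors.2 ⟨hp, h.2 p hp hpn, hδ.ne'⟩
  have h3 : ∑ n ∈ Ioc 0 N, gg δ n / n ≤ ∑ n ∈ T, (n : ℝ)⁻¹ := by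
    rw [hT, sum_filter]
    refine sum_le_sum fun n hn => ?_
    have hn := (mem_Ioc.1 hn).1
    split_ifs with h
    · rw [div_eq_mul_inv]
      have := gg_le_one δ n hn
      have h5 : (0:ℝ) ≤ (n:ℝ)⁻¹ := by positivity
      nlinarith
    · rw [not_not] at h; simp [h]
  refine h3.trans ?_
  have h4 := sum_le_hasSum (T.subtype (fun n => n ∈ Nat.factoredNumbers δ.primeFactors))
    (fun i _ => by simp [f]) h2
  refine le_trans (le_of_eq ?_) h4
  rw [sum_subtype_of_mem (fun n => f n) hmem]
  rfl

lemma sum_mu_div (δ N : ℕ) :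
    |∑ k ∈ Ioc 0 N, if k.Coprime δ then (μ k : ℝ) / k else 0| ≤ 2 := by
  rcases Nat.eq_zero_or_pos N with rfl | hN
  · simp
  have h1 : ∑ n ∈ Ioc 0 N, gg δ n = ∑ k ∈ Ioc 0 N, (if k.Coprime δ then (μ k : ℝ) else 0) * ((N / k : ℕ) : ℝ) := by
    have := hyper (fun k _ => if k.Coprime δ then (μ k : ℝ) else 0) N
    simp only [gg]
    rw [this]
    refine sum_congr rfl fun k _ => ?_
    simp [mul_comm]
  have h2 : |∑ n ∈ Ioc 0 N, gg δ n| ≤ N := by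
    rw [abs_of_nonneg (sum_nonneg fun n hn => gg_nonneg δ n (mem_Ioc.1 hn).1)]
    calc _ ≤ ∑ n ∈ Ioc 0 N, (1:ℝ) := sum_le_sum fun n hn => gg_le_one δ n (mem_Ioc.1 hn).1
      _ = N := by simp
  have h3 : |(N:ℝ) * (∑ k ∈ Ioc 0 N, if k.Coprime δ then (μ k : ℝ) / k else 0) - ∑ n ∈ Ioc 0 N, gg δ n| ≤ N := by
    rw [h1, mul_sum, ← sum_sub_distrib]
    refine (abs_sum_le_sum_abs _ _).trans ?_
    calc _ ≤ ∑ n ∈ Ioc 0 N, (1:ℝ) := by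
          refine sum_le_sum fun k hk => ?_
          have hk := (mem_Ioc.1 hk).1
          have hmu : |(μ k : ℝ)| ≤ 1 := by exact_mod_cast ArithmeticFunction.abs_moebius_le_one (n := k)
          split_ifs
          · have : (N:ℝ) * ((μ k : ℝ) / k) - (μ k : ℝ) * ((N / k : ℕ) : ℝ) = (μ k : ℝ) * ((N:ℝ) / k - ((N / k : ℕ) : ℝ)) := by ring
            rw [this, abs_mul]
            have h5 : |(N:ℝ) / k - ((N / k : ℕ) : ℝ)| ≤ 1 := by
              have e1 : ((N / k : ℕ) : ℝ) ≤ (N:ℝ) / k := Nat.cast_div_le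
              have e2 : (N:ℝ) / k < ((N / k : ℕ) : ℝ) + 1 := by
                rw [div_lt_iff₀ (by exact_mod_cast hk)]
                have := Nat.lt_div_mul_add hk (a := N)
                have h6 : N < (N / k + 1) * k := by linarith [add_mul (N/k) 1 k]
                exact_mod_cast h6
              rw [abs_le]; constructor <;> linarith
            calc _ ≤ (1:ℝ) * 1 := by gcongr
              _ = 1 := by norm_num
          · simp
      _ = N := by simp
  have hN' : (0:ℝ) < N := by exact_mod_cast hN
  set S := ∑ k ∈ Ioc 0 N, if k.Coprime δ then (μ k : ℝ) / k else 0
  have : (N:ℝ) * |S| ≤ N * 2 := by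
    rw [← abs_of_pos hN', ← abs_mul, abs_of_pos hN']
    rw [abs_le] at *
    constructor <;> linarith
  exact le_of_mul_le_mul_left this hN'

lemma harm_log (v : ℝ) (hv : 1 ≤ v) :
    |∑ j ∈ Ioc 0 ⌊v⌋₊, (1:ℝ) / j - Real.log v - Real.eulerMascheroniConstant| ≤ 2 / v := by
  set n := ⌊v⌋₊ with hn
  have hn1 : 1 ≤ n := Nat.one_le_floor_iff v |>.2 hv
  have e : ∑ j ∈ Ioc 0 n, (1:ℝ) / j = ((harmonic n : ℚ) : ℝ) := by
    rw [harmonic_eq_sum_Icc]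
    push_cast
    refine sum_congr (by ext; simp; omega) fun j _ => by rw [one_div]
  have h1 := Real.eulerMascheroniSeq_lt_eulerMascheroniConstant n
  have h2 := Real.eulerMascheroniConstant_lt_eulerMascheroniSeq' n
  rw [Real.eulerMascheroniSeq] at h1
  rw [Real.eulerMascheroniSeq', if_neg (by omega)] at h2
  have hv1 : (n:ℝ) ≤ v := Nat.floor_le (by linarith)
  have hv2 : v < n + 1 := Nat.lt_floor_add_one v
  have hn' : (1:ℝ) ≤ n := by exact_mod_cast hn1
  rw [e]
  have h3 : Real.log v - Real.log n ≤ 2 / v := by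
    rw [← Real.log_div (by linarith) (by linarith)]
    have := Real.log_le_sub_one_of_pos (show 0 < v / n by positivity)
    refine this.trans ?_
    rw [div_sub_one (by linarith), div_le_div_iff₀ (by linarith) (by linarith)]
    nlinarith
  have h4 : Real.log (n + 1) - Real.log v ≤ 2 / v := by
    rw [← Real.log_div (by linarith) (by linarith)]
    have := Real.log_le_sub_one_of_pos (show 0 < (n + 1 : ℝ) / v by positivity)
    refine this.trans ?_
    rw [div_sub_one (by linarith), div_le_div_iff₀ (by linarith) (by linarith)]
    nlinarith
  rw [abs_le]
  constructor <;> linarith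

lemma H_bound (δ : ℕ) (hδ : 0 < δ) (Y : ℝ) (hY : 1 ≤ Y) :
    |∑ k ∈ Ioc 0 ⌊Y⌋₊, (if k.Coprime δ then (μ k : ℝ) / k * Real.log (Y / k) else 0)| ≤ 6 * (δ / δ.totient) := by
  set N := ⌊Y⌋₊ with hN
  set γ := Real.eulerMascheroniConstant with hγ
  have hγ1 : γ < 2 / 3 := Real.eulerMascheroniConstant_lt_two_thirds
  have hγ0 : 1 / 2 < γ := Real.one_half_lt_eulerMascheroniConstant
  have hφ : (0:ℝ) < δ.totient := by exact_mod_cast Nat.totient_pos.2 hδ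
  have h1 : ∑ n ∈ Ioc 0 N, gg δ n / n =
      ∑ k ∈ Ioc 0 N, (if k.Coprime δ then (μ k : ℝ) / k * ∑ j ∈ Ioc 0 (N / k), (1:ℝ) / j else 0) := by
    have := hyper (fun k j => if k.Coprime δ then (μ k : ℝ) / k * (1 / j) else 0) N
    rw [show (∑ k ∈ Ioc 0 N, (if k.Coprime δ then (μ k : ℝ) / k * ∑ j ∈ Ioc 0 (N / k), (1:ℝ) / j else 0)) =
      ∑ k ∈ Ioc 0 N, ∑ j ∈ Ioc 0 (N / k), if k.Coprime δ then (μ k : ℝ) / k * (1 / j) else 0 from ?_, ← this]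
    · refine sum_congr rfl fun n hn => ?_
      have hn := (mem_Ioc.1 hn).1
      rw [gg, sum_div]
      refine sum_congr rfl fun k hk => ?_
      have hk := (Nat.mem_divisors.1 hk).1
      have hk0 := Nat.pos_of_dvd_of_pos hk hn
      split_ifs
      · rw [Nat.cast_div hk (by positivity)]
        have : (k:ℝ) ≠ 0 := by positivity
        field_simp
      · simp
    · refine sum_congr rfl fun k _ => ?_
      split_ifs
      · rw [mul_sum]
      · simp
  have h2 : |∑ n ∈ Ioc 0 N, gg δ n / n| ≤ δ / δ.totient := by
    rw [abs_of_nonneg]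
    · exact sum_gg_div δ hδ N
    · exact sum_nonneg fun n hn => div_nonneg (gg_nonneg δ n (mem_Ioc.1 hn).1) (by positivity)
  have h3 := sum_mu_div δ N
  set H := ∑ k ∈ Ioc 0 N, (if k.Coprime δ then (μ k : ℝ) / k * Real.log (Y / k) else 0) with hH
  set S := ∑ k ∈ Ioc 0 N, (if k.Coprime δ then (μ k : ℝ) / k else 0) with hS
  have h4 : |∑ n ∈ Ioc 0 N, gg δ n / n - H - γ * S| ≤ 2 := by
    rw [h1, hH, hS, mul_sum, ← sum_sub_distrib, ← sum_sub_distrib]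
    refine (abs_sum_le_sum_abs _ _).trans ?_
    calc _ ≤ ∑ n ∈ Ioc 0 N, (2 / Y : ℝ) := by
          refine sum_le_sum fun k hk => ?_
          have hk1 := (mem_Ioc.1 hk).1
          have hk2 := (mem_Ioc.1 hk).2
          have hk0 : (0:ℝ) < k := by exact_mod_cast hk1
          have hmu : |(μ k : ℝ)| ≤ 1 := by exact_mod_cast ArithmeticFunction.abs_moebius_le_one (n := k)
          have hkY : (k:ℝ) ≤ Y := (Nat.le_floor_iff (by linarith)).1 hk2
          split_ifs
          · have hv := harm_log (Y / k) (by rw [le_div_iff₀ hk0]; linarith)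
            rw [Nat.floor_div_natCast] at hv
            have e : (μ k : ℝ) / k * ∑ j ∈ Ioc 0 (N / k), (1:ℝ) / j - (μ k : ℝ) / k * Real.log (Y / k) - γ * ((μ k : ℝ) / k)
              = (μ k : ℝ) / k * (∑ j ∈ Ioc 0 (N / k), (1:ℝ) / j - Real.log (Y / k) - γ) := by ring
            rw [e, abs_mul, abs_div, abs_of_pos hk0]
            calc |(μ k : ℝ)| / k * _ ≤ 1 / k * (2 / (Y / k)) := by gcongr
              _ = 2 / Y := by field_simp
          · simp; positivity
      _ = N * (2 / Y) := by simp
      _ ≤ 2 := by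
        have : (N:ℝ) ≤ Y := Nat.floor_le (by linarith)
        rw [mul_div_assoc', div_le_iff₀ (by linarith)]; linarith
  have h5 : (1:ℝ) ≤ δ / δ.totient := by
    rw [le_div_iff₀ hφ, one_mul]; exact_mod_cast Nat.totient_le δ
  rw [abs_le] at *
  constructor <;> nlinarith

end LT

namespace LT
open Finset
open scoped ArithmeticFunction.Moebius

lemma totient_sq (e : ℕ) : 0 < e → e ≤ e.totient ^ 2 * (if 2 ∣ e then 2 else 1) := by
  induction e using Nat.recOnPosPrimePosCoprime with
  | prime_pow p n hp hn =>
    intro _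
    obtain ⟨m, rfl⟩ : ∃ m, n = m + 1 := ⟨n - 1, by omega⟩
    rw [Nat.totient_prime_pow_succ hp]
    rcases hp.eq_two_or_odd' with rfl | h
    · rw [if_pos (dvd_pow_self 2 (by omega))]
      have := Nat.one_le_two_pow (n := m)
      simp only [pow_succ]
      nlinarith
    · rw [if_neg (by
        intro h2
        have := Nat.Prime.dvd_of_dvd_pow Nat.prime_two h2
        exact (Nat.not_even_iff_odd.2 h) (even_iff_two_dvd.2 this))]
      obtain ⟨q, rfl⟩ : ∃ q, p = q + 3 := ⟨p - 3, by
        have := hp.two_le; rcases h with ⟨t, rfl⟩; omega⟩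
      have h1 : 1 ≤ (q+3)^m := Nat.one_le_pow _ _ (by omega)
      simp only [show q + 3 - 1 = q + 2 from rfl, pow_succ (q+3) m]
      generalize (q+3)^m = A at *
      have : q + 3 ≤ (q+2)^2 := by nlinarith
      calc A * (q + 3) ≤ A * (q+2)^2 := Nat.mul_le_mul_left _ this
        _ ≤ A * (A * (q+2)^2) := Nat.mul_le_mul_left _ (by nlinarith [sq_nonneg (q+2)])
        _ = _ := by ring
  | zero => intro h; omega
  | one => simp
  | coprime a b ha hb hab iha ihb =>
    intro _
    have h1 := iha (by omega)
    have h2 := ihb (by omega)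
    rw [Nat.totient_mul hab]
    have h3 : (if 2 ∣ a then 2 else 1) * (if 2 ∣ b then 2 else 1) ≤ (if 2 ∣ a * b then 2 else 1) := by
      by_cases h2a : 2 ∣ a
      · have : ¬ 2 ∣ b := fun h => Nat.not_coprime_of_dvd_of_dvd (by norm_num) h2a h hab
        simp [h2a, this, h2a.mul_right b]
      · by_cases h2b : 2 ∣ b
        · simp [h2a, h2b, h2b.mul_left a]
        · have : ¬ 2 ∣ a * b := by rw [Nat.prime_two.dvd_mul]; tauto
          simp [h2a, h2b, this]
    calc a * b ≤ (a.totient ^ 2 * (if 2 ∣ a then 2 else 1)) * (b.totient ^ 2 * (if 2 ∣ b then 2 else 1)) :=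
          Nat.mul_le_mul h1 h2
      _ = (a.totient * b.totient) ^ 2 * ((if 2 ∣ a then 2 else 1) * (if 2 ∣ b then 2 else 1)) := by ring
      _ ≤ _ := Nat.mul_le_mul_left _ h3

lemma inv_totient_le (e : ℕ) (he : 0 < e) : 1 / ((e:ℝ) * e.totient) ≤ 2 * (1 / (e:ℝ) ^ (3/2:ℝ)) := by
  have h := totient_sq e he
  have h' : (e:ℝ) ≤ e.totient ^ 2 * 2 := by
    have : e ≤ e.totient ^ 2 * 2 := h.trans (Nat.mul_le_mul_left _ (by split_ifs <;> norm_num))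
    exact_mod_cast this
  have he' : (0:ℝ) < e := by exact_mod_cast he
  have hφ : (0:ℝ) < e.totient := by exact_mod_cast Nat.totient_pos.2 he
  have h1 : (e:ℝ) ^ (3/2:ℝ) = e * Real.sqrt e := by
    rw [show (3/2:ℝ) = 1 + 1/2 by norm_num, Real.rpow_add he', Real.rpow_one, Real.sqrt_eq_rpow]
  have h2 : Real.sqrt e ≤ 2 * e.totient := by
    rw [Real.sqrt_le_left (by positivity)]
    nlinarith
  have hs : 0 < Real.sqrt e := Real.sqrt_pos.2 he'
  rw [h1, mul_one_div, div_le_div_iff₀ (by positivity) (by positivity)]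
  nlinarith

lemma ratio_le_sum (δ : ℕ) (hδ : 0 < δ) : (δ:ℝ) / δ.totient ≤ ∑ e ∈ δ.divisors, 1 / (e.totient : ℝ) := by
  have hφ : (0:ℝ) < δ.totient := by exact_mod_cast Nat.totient_pos.2 hδ
  have h : (δ:ℝ) = ∑ e ∈ δ.divisors, ((δ / e).totient : ℝ) := by
    rw [Nat.sum_div_divisors δ (fun e => (e.totient : ℝ))]
    exact_mod_cast (Nat.sum_totient δ).symm
  rw [div_le_iff₀ hφ, h, sum_mul]
  refine sum_le_sum fun e he => ?_
  have he := (Nat.mem_divisors.1 he).1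
  have he0 := Nat.pos_of_dvd_of_pos he hδ
  have hφe : (0:ℝ) < e.totient := by exact_mod_cast Nat.totient_pos.2 he0
  rw [one_div, ← div_eq_inv_mul, le_div_iff₀ hφe]
  have := Nat.totient_super_multiplicative (δ / e) e
  rw [Nat.div_mul_cancel he] at this
  exact_mod_cast this

lemma sum_inv_le (N : ℕ) (z : ℝ) (hz : 1 ≤ z) (hN : (N:ℝ) ≤ z) : ∑ j ∈ Ioc 0 N, (1:ℝ) / j ≤ 1 + Real.log z := by
  have e : ∑ j ∈ Ioc 0 N, (1:ℝ) / j = ((harmonic N : ℚ) : ℝ) := by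
    rw [harmonic_eq_sum_Icc]
    push_cast
    refine sum_congr (by ext; simp; omega) fun j _ => by rw [one_div]
  rw [e]
  refine (harmonic_le_one_add_log N).trans ?_
  rcases Nat.eq_zero_or_pos N with rfl | h
  · simpa using Real.log_nonneg hz
  · have : (0:ℝ) < N := by exact_mod_cast h
    gcongr

lemma sum_inv_totient : ∃ C : ℝ, 0 < C ∧ ∀ z : ℕ, 2 ≤ z → ∑ δ ∈ Ioc 0 z, 1 / (δ.totient : ℝ) ≤ C * Real.log z := by
  have hs : Summable (fun n : ℕ => 1 / (n:ℝ) ^ (3/2:ℝ)) := Real.summable_one_div_nat_rpow.2 (by norm_num)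
  set C0 := ∑' n : ℕ, 1 / (n:ℝ) ^ (3/2:ℝ)
  have hC0 : 0 ≤ C0 := tsum_nonneg fun n => by positivity
  refine ⟨6 * C0 + 1, by positivity, fun z hz => ?_⟩
  have hz' : (2:ℝ) ≤ z := by exact_mod_cast hz
  have hlog : 1 / 2 ≤ Real.log z := by
    have := Real.log_le_log (by norm_num) hz'
    linarith [Real.log_two_gt_d9]
  have h1 : ∑ δ ∈ Ioc 0 z, 1 / (δ.totient : ℝ) ≤ ∑ δ ∈ Ioc 0 z, ∑ e ∈ δ.divisors, 1 / ((e:ℝ) * e.totient) * (1 / ((δ / e : ℕ):ℝ)) := by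
    refine sum_le_sum fun δ hδ => ?_
    have hδ := (mem_Ioc.1 hδ).1
    have h0 : (0:ℝ) < δ := by exact_mod_cast hδ
    have := ratio_le_sum δ hδ
    calc 1 / (δ.totient : ℝ) = (δ:ℝ) / δ.totient * (1 / δ) := by field_simp
      _ ≤ (∑ e ∈ δ.divisors, 1 / (e.totient : ℝ)) * (1 / δ) := by gcongr
      _ = _ := by
        rw [sum_mul]
        refine sum_congr rfl fun e he => ?_
        have he := (Nat.mem_divisors.1 he).1
        have he0 := Nat.pos_of_dvd_of_pos he hδ
        have he' : (e:ℝ) ≠ 0 := by positivity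
        rw [Nat.cast_div he he']
        field_simp
  refine h1.trans ?_
  rw [hyper (fun e j => 1 / ((e:ℝ) * e.totient) * (1 / (j:ℝ)))]
  calc _ ≤ ∑ e ∈ Ioc 0 z, 2 * (1 / (e:ℝ) ^ (3/2:ℝ)) * (1 + Real.log z) := by
        refine sum_le_sum fun e he => ?_
        rw [← mul_sum]
        have he0 := (mem_Ioc.1 he).1
        have := inv_totient_le e he0
        have h3 : ∑ j ∈ Ioc 0 (z / e), (1:ℝ) / j ≤ 1 + Real.log z :=
          sum_inv_le (z/e) z (by linarith) (by exact_mod_cast Nat.div_le_self z e)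
        gcongr
    _ = 2 * (1 + Real.log z) * ∑ e ∈ Ioc 0 z, (1 / (e:ℝ) ^ (3/2:ℝ)) := by rw [mul_sum]; exact sum_congr rfl fun _ _ => by ring
    _ ≤ 2 * (1 + Real.log z) * C0 := by
        gcongr
        exact hs.sum_le_tsum _ (fun n _ => by positivity)
    _ ≤ _ := by nlinarith

noncomputable def LL (z d : ℕ) : ℝ := if d ≤ z then Real.log ((z:ℝ) / d) else 0

noncomputable def bet (z n : ℕ) : ℝ := ∑ d ∈ n.divisors, (μ d : ℝ) * LL z d

lemma abs_mu (k : ℕ) : |(μ k : ℝ)| ≤ 1 := by exact_mod_cast ArithmeticFunction.abs_moebius_le_one (n := k)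

lemma LL_nonneg (z d : ℕ) : 0 ≤ LL z d := by
  unfold LL
  split_ifs with h
  · rcases Nat.eq_zero_or_pos d with rfl | hd
    · simp
    · apply Real.log_nonneg
      rw [one_le_div (by exact_mod_cast hd)]
      exact_mod_cast h
  · exact le_rfl

lemma LL_le (z d : ℕ) (hd : 0 < d) : LL z d ≤ Real.log z := by
  unfold LL
  split_ifs with h
  · have hz : (0:ℝ) < z := by exact_mod_cast (by omega : 0 < z)
    have hd' : (1:ℝ) ≤ d := by exact_mod_cast hd
    apply Real.log_le_log (by positivity)
    exact div_le_self hz.le hd'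
  · exact Real.log_natCast_nonneg z

lemma bet_eq (z n : ℕ) (hn : 0 < n) :
    bet z n = ∑ d ∈ Ioc 0 z, if d ∣ n then (μ d : ℝ) * LL z d else 0 := by
  rw [bet, ← sum_filter]
  symm
  apply sum_subset_zero_on_sdiff
  · intro d hd
    simp only [mem_filter, mem_Ioc, Nat.mem_divisors] at *
    exact ⟨hd.2, hn.ne'⟩
  · intro d hd
    simp only [mem_sdiff, mem_filter, mem_Ioc, Nat.mem_divisors, not_and] at hd
    have hd0 := Nat.pos_of_dvd_of_pos hd.1.1 hn
    have : ¬ d ≤ z := fun h => hd.2 ⟨hd0, h⟩ hd.1.1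
    simp [LL, this]
  · intros; rfl

lemma T_bound (z δ : ℕ) (hδ : 0 < δ) (hδz : δ ≤ z) :
    |∑ d ∈ Ioc 0 z, if δ ∣ d then (μ d : ℝ) * LL z d / d else 0| ≤ 6 / δ.totient := by
  have hφ : (0:ℝ) < δ.totient := by exact_mod_cast Nat.totient_pos.2 hδ
  have hδ' : (0:ℝ) < δ := by exact_mod_cast hδ
  have e : ∑ d ∈ Ioc 0 z, (if δ ∣ d then (μ d : ℝ) * LL z d / d else 0) =
      (μ δ : ℝ) / δ * ∑ k ∈ Ioc 0 (z / δ), (if k.Coprime δ then (μ k : ℝ) / k * Real.log ((z:ℝ) / δ / k) else 0) := by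
    rw [← sum_filter, mul_sum]
    symm
    refine sum_bij' (fun k _ => δ * k) (fun d _ => d / δ) ?_ ?_ ?_ ?_ ?_
    · intro k hk
      simp only [mem_filter, mem_Ioc] at *
      refine ⟨⟨Nat.mul_pos hδ hk.1, ?_⟩, Dvd.intro _ rfl⟩
      have := (Nat.le_div_iff_mul_le hδ).1 hk.2
      linarith [mul_comm k δ]
    · intro d hd
      simp only [mem_filter, mem_Ioc] at *
      exact ⟨Nat.div_pos (Nat.le_of_dvd hd.1.1 hd.2) hδ, Nat.div_le_div_right hd.1.2⟩
    · intro k hk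
      exact Nat.mul_div_cancel_left _ hδ
    · intro d hd
      simp only [mem_filter] at hd
      exact Nat.mul_div_cancel' hd.2
    · intro k hk
      simp only [mem_Ioc] at hk
      have hk0 : (0:ℝ) < k := by exact_mod_cast hk.1
      have hle : δ * k ≤ z := by
        have := (Nat.le_div_iff_mul_le hδ).1 hk.2
        linarith [mul_comm k δ]
      rw [LL, if_pos hle]
      split_ifs with hc
      · rw [ArithmeticFunction.isMultiplicative_moebius.map_mul_of_coprime hc.symm]
        push_cast
        rw [div_div]
        field_simp
      · have : μ (δ * k) = 0 := by
          rw [ArithmeticFunction.moebius_eq_zero_of_not_squarefree]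
          intro hsq
          exact hc (Nat.coprime_of_squarefree_mul hsq).symm
        simp [this]
  rw [e, abs_mul, abs_div, abs_of_pos hδ']
  have hH := H_bound δ hδ ((z:ℝ) / δ) (by rw [one_le_div hδ']; exact_mod_cast hδz)
  rw [Nat.floor_div_natCast, Nat.floor_natCast] at hH
  calc _ ≤ 1 / (δ:ℝ) * (6 * (δ / δ.totient)) := by
        gcongr
        exact abs_mu δ
    _ = _ := by field_simp

theorem second_moment : ∃ C : ℝ, 0 < C ∧ ∀ z : ℕ, 2 ≤ z → ∀ N : ℕ,
    ∑ n ∈ Ioc 0 N, bet z n ^ 2 ≤ C * N * Real.log z + (z * Real.log z) ^ 2 := by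
  obtain ⟨C, hC, hsum⟩ := sum_inv_totient
  refine ⟨36 * C, by positivity, fun z hz N => ?_⟩
  set c : ℕ → ℝ := fun d => (μ d : ℝ) * LL z d with hc
  have hcb : ∀ d ∈ Ioc 0 z, |c d| ≤ Real.log z := by
    intro d hd
    rw [hc, abs_mul, abs_of_nonneg (LL_nonneg z d)]
    have h1 := LL_le z d (mem_Ioc.1 hd).1
    have h2 := LL_nonneg z d
    have h3 := abs_mu d
    nlinarith [abs_nonneg (μ d : ℝ)]
  have e1 : ∑ n ∈ Ioc 0 N, bet z n ^ 2 = ∑ d ∈ Ioc 0 z, ∑ e ∈ Ioc 0 z, c d * c e * ((N / Nat.lcm d e : ℕ) : ℝ) := by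
    have : ∀ n ∈ Ioc 0 N, bet z n ^ 2 = ∑ d ∈ Ioc 0 z, ∑ e ∈ Ioc 0 z, if Nat.lcm d e ∣ n then c d * c e else 0 := by
      intro n hn
      rw [bet_eq z n (mem_Ioc.1 hn).1, sq, sum_mul_sum]
      refine sum_congr rfl fun d _ => sum_congr rfl fun e _ => ?_
      by_cases h1 : d ∣ n <;> by_cases h2 : e ∣ n <;> simp [Nat.lcm_dvd_iff, h1, h2, hc]
    rw [sum_congr rfl this, sum_comm]
    refine sum_congr rfl fun d _ => ?_
    rw [sum_comm]
    refine sum_congr rfl fun e _ => ?_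
    rw [← sum_filter, sum_const, Nat.Ioc_filter_dvd_card_eq_div, nsmul_eq_mul, mul_comm]
  have e2 : ∑ d ∈ Ioc 0 z, ∑ e ∈ Ioc 0 z, c d * c e * ((1:ℝ) / Nat.lcm d e) =
      ∑ δ ∈ Ioc 0 z, (δ.totient : ℝ) * (∑ d ∈ Ioc 0 z, if δ ∣ d then c d / d else 0) ^ 2 := by
    have h0 : ∀ d ∈ Ioc 0 z, ∀ e ∈ Ioc 0 z, c d * c e * ((1:ℝ) / Nat.lcm d e) =
        ∑ δ ∈ Ioc 0 z, (δ.totient : ℝ) * ((if δ ∣ d then c d / d else 0) * (if δ ∣ e then c e / e else 0)) := by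
      intro d hd e he
      simp only [mem_Ioc] at hd he
      have hd0 : (0:ℝ) < d := by exact_mod_cast hd.1
      have he0 : (0:ℝ) < e := by exact_mod_cast he.1
      have hg : (Nat.gcd d e : ℝ) = ∑ δ ∈ Ioc 0 z, if δ ∣ d ∧ δ ∣ e then (δ.totient : ℝ) else 0 := by
        have hg0 : 0 < Nat.gcd d e := Nat.gcd_pos_of_pos_left _ hd.1
        have h1 : (Nat.gcd d e : ℝ) = ∑ δ ∈ (Nat.gcd d e).divisors, (δ.totient : ℝ) := by
          exact_mod_cast (Nat.sum_totient (Nat.gcd d e)).symm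
        rw [h1, ← sum_filter]
        refine sum_congr ?_ fun _ _ => rfl
        ext δ
        simp only [Nat.mem_divisors, mem_filter, mem_Ioc, Nat.dvd_gcd_iff]
        constructor
        · rintro ⟨h, _⟩
          exact ⟨⟨Nat.pos_of_dvd_of_pos h.1 hd.1, (Nat.le_of_dvd hd.1 h.1).trans hd.2⟩, h⟩
        · rintro ⟨_, h⟩
          exact ⟨h, hg0.ne'⟩
      have hl : (1:ℝ) / Nat.lcm d e = Nat.gcd d e / (d * e) := by
        have hl0 : (Nat.lcm d e : ℝ) ≠ 0 := by
          exact_mod_cast (Nat.lcm_pos hd.1 he.1).ne'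
        rw [div_eq_div_iff hl0 (by positivity)]
        rw [one_mul]
        exact_mod_cast (Nat.gcd_mul_lcm d e).symm
      rw [hl, hg, sum_div, mul_sum]
      refine sum_congr rfl fun δ _ => ?_
      by_cases h1 : δ ∣ d <;> by_cases h2 : δ ∣ e <;> simp [h1, h2]
      field_simp
    rw [sum_congr rfl fun d hd => sum_congr rfl fun e he => h0 d hd e he]
    rw [sum_congr rfl fun d _ => sum_comm, sum_comm]
    refine sum_congr rfl fun δ _ => ?_
    rw [sq, sum_mul_sum, mul_sum]
    refine sum_congr rfl fun d _ => ?_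
    rw [mul_sum]
  have h3 : ∑ d ∈ Ioc 0 z, ∑ e ∈ Ioc 0 z, c d * c e * ((1:ℝ) / Nat.lcm d e) ≤ 36 * C * Real.log z := by
    rw [e2]
    calc _ ≤ ∑ δ ∈ Ioc 0 z, 36 * (1 / (δ.totient : ℝ)) := by
          refine sum_le_sum fun δ hδ => ?_
          simp only [mem_Ioc] at hδ
          have hφ : (0:ℝ) < δ.totient := by exact_mod_cast Nat.totient_pos.2 hδ.1
          have := T_bound z δ hδ.1 hδ.2
          have h4 : (∑ d ∈ Ioc 0 z, if δ ∣ d then c d / d else 0) ^ 2 ≤ (6 / (δ.totient : ℝ)) ^ 2 := by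
            rw [sq_le_sq, abs_of_pos (show 0 < 6 / (δ.totient : ℝ) by positivity)]
            exact this
          calc _ ≤ (δ.totient : ℝ) * (6 / (δ.totient : ℝ)) ^ 2 := by gcongr
            _ = _ := by field_simp; norm_num
      _ = 36 * ∑ δ ∈ Ioc 0 z, 1 / (δ.totient : ℝ) := by rw [mul_sum]
      _ ≤ 36 * (C * Real.log z) := by gcongr; exact hsum z hz
      _ = _ := by ring
  have h5 : ∑ d ∈ Ioc 0 z, ∑ e ∈ Ioc 0 z, c d * c e * ((N / Nat.lcm d e : ℕ) : ℝ) ≤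
      N * (∑ d ∈ Ioc 0 z, ∑ e ∈ Ioc 0 z, c d * c e * ((1:ℝ) / Nat.lcm d e)) + (∑ d ∈ Ioc 0 z, |c d|) * (∑ d ∈ Ioc 0 z, |c d|) := by
    rw [sum_mul_sum, mul_sum, ← sum_add_distrib]
    refine sum_le_sum fun d hd => ?_
    rw [mul_sum, ← sum_add_distrib]
    refine sum_le_sum fun e he => ?_
    simp only [mem_Ioc] at hd he
    have hl0 : 0 < Nat.lcm d e := Nat.lcm_pos hd.1 he.1
    have a1 : ((N / Nat.lcm d e : ℕ) : ℝ) ≤ (N:ℝ) / Nat.lcm d e := Nat.cast_div_le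
    have a2 : (N:ℝ) / Nat.lcm d e < ((N / Nat.lcm d e : ℕ) : ℝ) + 1 := by
      rw [div_lt_iff₀ (by exact_mod_cast hl0)]
      have := Nat.lt_div_mul_add hl0 (a := N)
      have h6 : N < (N / Nat.lcm d e + 1) * Nat.lcm d e := by linarith [add_mul (N/Nat.lcm d e) 1 (Nat.lcm d e)]
      exact_mod_cast h6
    have a3 : c d * c e * (((N / Nat.lcm d e : ℕ) : ℝ) - (N:ℝ) / Nat.lcm d e) ≤ |c d| * |c e| := by
      rw [← abs_mul]
      refine (le_abs_self _).trans ?_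
      rw [abs_mul (c d * c e)]
      have : |((N / Nat.lcm d e : ℕ) : ℝ) - (N:ℝ) / Nat.lcm d e| ≤ 1 := by
        rw [abs_le]; constructor <;> linarith
      nlinarith [abs_nonneg (c d * c e)]
    have a4 : (N:ℝ) * (c d * c e * (1 / Nat.lcm d e)) = c d * c e * ((N:ℝ) / Nat.lcm d e) := by ring
    rw [a4]
    linarith
  have h6 : ∑ d ∈ Ioc 0 z, |c d| ≤ z * Real.log z := by
    calc _ ≤ ∑ d ∈ Ioc 0 z, Real.log z := sum_le_sum hcb
      _ = _ := by simp
  have h7 : 0 ≤ ∑ d ∈ Ioc 0 z, |c d| := sum_nonneg fun _ _ => abs_nonneg _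
  rw [e1]
  refine h5.trans ?_
  have h8 := mul_le_mul_of_nonneg_left h3 (Nat.cast_nonneg N : (0:ℝ) ≤ N)
  nlinarith [mul_le_mul h6 h6 h7 (h7.trans h6)]

end LT

namespace LT
open Finset
open scoped ArithmeticFunction.Moebius

lemma theta_lower : ∃ Y0 : ℝ, 1 ≤ Y0 ∧ ∀ Y : ℝ, Y0 ≤ Y → Y / 2 ≤ Chebyshev.theta Y := by
  have h := isLittleO_log_rpow_atTop (show (0:ℝ) < 1/2 by norm_num)
  have h2 := h.bound (show (0:ℝ) < 0.01 by norm_num)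
  obtain ⟨Y1, hY1⟩ := Filter.eventually_atTop.1 h2
  refine ⟨max Y1 100, le_trans (by norm_num) (le_max_right _ _), fun Y hY => ?_⟩
  have hY100 : 100 ≤ Y := (le_max_right _ _).trans hY
  have h3 := hY1 Y ((le_max_left _ _).trans hY)
  rw [Real.norm_of_nonneg (Real.log_nonneg (by linarith)), Real.norm_of_nonneg (by positivity), ← Real.sqrt_eq_rpow] at h3
  have h4 := Chebyshev.theta_ge' (x := Y) (by linarith)
  have hs : Real.sqrt Y * Real.sqrt Y = Y := Real.mul_self_sqrt (by linarith)
  have hs1 : 10 ≤ Real.sqrt Y := Real.le_sqrt_of_sq_le (by linarith)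
  have h5 : Real.log (Y + 2) ≤ 2 * Real.log Y := by
    rw [← Real.log_rpow (by linarith)]
    apply Real.log_le_log (by linarith)
    norm_cast; nlinarith
  have := Real.log_two_gt_d9
  nlinarith [mul_le_mul_of_nonneg_left h3 (show 0 ≤ Real.sqrt Y by positivity)]

noncomputable def lam (M d : ℕ) : ℝ := (μ d : ℝ) * ((LL (M ^ 35) d - LL (M ^ 30) d) / (5 * Real.log M))

noncomputable def bb (M k : ℕ) : ℝ := ∑ d ∈ k.divisors, lam M d

lemma bb_eq (M k : ℕ) : bb M k = (bet (M ^ 35) k - bet (M ^ 30) k) / (5 * Real.log M) := by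
  rw [bb, bet, bet, ← sum_sub_distrib, sum_div]
  exact sum_congr rfl fun d _ => by rw [lam]; ring

lemma logM_pos {M : ℕ} (hM : 2 ≤ M) : 0 < Real.log M := Real.log_pos (by exact_mod_cast hM)

lemma LLdiff {M : ℕ} (hM : 2 ≤ M) (d : ℕ) (hd : 0 < d) :
    0 ≤ LL (M ^ 35) d - LL (M ^ 30) d ∧ LL (M ^ 35) d - LL (M ^ 30) d ≤ 5 * Real.log M := by
  have hl := logM_pos hM
  have hM0 : (0:ℝ) < M := by positivity
  have hd0 : (0:ℝ) < d := by exact_mod_cast hd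
  have hpow : M ^ 30 ≤ M ^ 35 := Nat.pow_le_pow_right (by omega) (by norm_num)
  by_cases h1 : d ≤ M ^ 30
  · rw [LL, LL, if_pos h1, if_pos (h1.trans hpow)]
    push_cast
    rw [Real.log_div (by positivity) (by positivity), Real.log_div (by positivity) (by positivity), Real.log_pow, Real.log_pow]
    push_cast
    constructor <;> linarith
  · have e : LL (M ^ 30) d = 0 := by rw [LL, if_neg h1]
    rw [e, sub_zero]
    refine ⟨LL_nonneg _ _, ?_⟩
    by_cases h2 : d ≤ M ^ 35
    · rw [LL, if_pos h2]
      have : Real.log ((M:ℝ) ^ 30) ≤ Real.log d := by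
        apply Real.log_le_log (by positivity)
        exact_mod_cast (by omega : M ^ 30 ≤ d)
      push_cast
      rw [Real.log_div (by positivity) (by positivity), Real.log_pow]
      rw [Real.log_pow] at this
      push_cast at *
      linarith
    · rw [LL, if_neg h2]; positivity

lemma abs_lam {M : ℕ} (hM : 2 ≤ M) (d : ℕ) (hd : 0 < d) : |lam M d| ≤ 1 := by
  have hl := logM_pos hM
  obtain ⟨h1, h2⟩ := LLdiff hM d hd
  rw [lam, abs_mul]
  have h3 : |(LL (M ^ 35) d - LL (M ^ 30) d) / (5 * Real.log M)| ≤ 1 := by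
    rw [abs_of_nonneg (by positivity), div_le_one (by positivity)]; exact h2
  have := abs_mu d
  calc _ ≤ (1:ℝ) * 1 := by gcongr
    _ = 1 := by norm_num

lemma lam_zero {M : ℕ} (hM : 2 ≤ M) (d : ℕ) (hd : M ^ 35 < d) : lam M d = 0 := by
  have hpow : M ^ 30 ≤ M ^ 35 := Nat.pow_le_pow_right (by omega) (by norm_num)
  rw [lam, LL, LL, if_neg (by omega), if_neg (by omega)]
  simp

lemma lam_small {M : ℕ} (hM : 2 ≤ M) (d : ℕ) (hd : 0 < d) (hd2 : d ≤ M ^ 30) : lam M d = μ d := by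
  have hl := logM_pos hM
  have hM0 : (0:ℝ) < M := by positivity
  have hd0 : (0:ℝ) < d := by exact_mod_cast hd
  have hpow : M ^ 30 ≤ M ^ 35 := Nat.pow_le_pow_right (by omega) (by norm_num)
  rw [lam, LL, LL, if_pos (hd2.trans hpow), if_pos hd2]
  push_cast
  rw [Real.log_div (by positivity) (by positivity), Real.log_div (by positivity) (by positivity), Real.log_pow, Real.log_pow]
  push_cast
  rw [show (35 * Real.log M - Real.log d - (30 * Real.log M - Real.log d)) / (5 * Real.log M) = 1 by field_simp; ring, mul_one]

lemma bb_small {M : ℕ} (hM : 2 ≤ M) (k : ℕ) (hk : 0 < k) (hk2 : k ≤ M ^ 30) : bb M k = if k = 1 then 1 else 0 := by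
  rw [bb, ← sum_moebius]
  refine sum_congr rfl fun d hd => ?_
  have hd := (Nat.mem_divisors.1 hd).1
  exact lam_small hM d (Nat.pos_of_dvd_of_pos hd hk) ((Nat.le_of_dvd hk hd).trans hk2)

lemma bb_sq : ∃ C : ℝ, 0 < C ∧ ∀ M : ℕ, 2 ≤ M → ∀ N : ℕ,
    ∑ n ∈ Ioc 0 N, bb M n ^ 2 ≤ C * (N / Real.log M + (M:ℝ) ^ 70) := by
  obtain ⟨C, hC, h⟩ := second_moment
  refine ⟨6 * C + 200, by positivity, fun M hM N => ?_⟩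
  have hl := logM_pos hM
  have hM0 : (1:ℝ) ≤ M := by exact_mod_cast (by omega : 1 ≤ M)
  have h1 := h (M ^ 35) (hM.trans (Nat.le_self_pow (by norm_num) M)) N
  have h2 := h (M ^ 30) (hM.trans (Nat.le_self_pow (by norm_num) M)) N
  push_cast at h1 h2
  rw [Real.log_pow] at h1 h2
  push_cast at h1 h2
  set l := Real.log M
  have h3 : ∑ n ∈ Ioc 0 N, bb M n ^ 2 ≤ 2 / (25 * l ^ 2) * (∑ n ∈ Ioc 0 N, bet (M ^ 35) n ^ 2 + ∑ n ∈ Ioc 0 N, bet (M ^ 30) n ^ 2) := by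
    rw [← sum_add_distrib, mul_sum]
    refine sum_le_sum fun n _ => ?_
    rw [bb_eq, div_pow, mul_pow, div_mul_eq_mul_div, show (5:ℝ)^2 = 25 by norm_num]
    gcongr
    nlinarith [sq_nonneg (bet (M ^ 35) n + bet (M ^ 30) n)]
  refine h3.trans ?_
  have h4 : ((M:ℝ) ^ 30) ^ 2 ≤ (M:ℝ) ^ 70 := by rw [← pow_mul]; exact pow_le_pow_right₀ hM0 (by norm_num)
  have h5 : ((M:ℝ) ^ 35) ^ 2 = (M:ℝ) ^ 70 := by rw [← pow_mul]
  calc _ ≤ 2 / (25 * l ^ 2) * ((C * N * (35 * l) + (M ^ 35 * (35 * l)) ^ 2) + (C * N * (30 * l) + (M ^ 30 * (30 * l)) ^ 2)) := by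
        gcongr
    _ = 26/5 * C * (N / l) + 98 * ((M:ℝ) ^ 35) ^ 2 + 72 * ((M:ℝ) ^ 30) ^ 2 := by field_simp; ring
    _ ≤ _ := by
      rw [h5]
      have : 0 ≤ (N:ℝ) / l := by positivity
      have h6 : (0:ℝ) ≤ (M:ℝ)^70 := by positivity
      nlinarith [mul_nonneg hC.le this, mul_nonneg hC.le h6]

lemma bb_mul_prime (M k l : ℕ) (hM : 2 ≤ M) (hk : 0 < k) (hl : l.Prime) (hlV : M ^ 35 < l) :
    bb M (k * l) = bb M k := by
  rw [bb, bb]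
  symm
  apply sum_subset_zero_on_sdiff
  · exact Nat.divisors_subset_of_dvd (mul_pos hk hl.pos).ne' (Dvd.intro _ rfl)
  · intro d hd
    simp only [mem_sdiff, Nat.mem_divisors, not_and, not_not] at hd
    apply lam_zero hM
    by_contra hle
    have hdl : d.Coprime l := by
      rw [Nat.coprime_comm, hl.coprime_iff_not_dvd]
      intro h
      have h0 := Nat.pos_of_dvd_of_pos hd.1.1 (mul_pos hk hl.pos)
      have := Nat.le_of_dvd h0 h
      omega
    have := hd.2 (hdl.dvd_of_dvd_mul_right hd.1.1)
    omega
  · intros; rfl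

lemma theta_count (s : ℕ) (T : ℕ) (hsT : s ≤ T) (L : ℝ) (hL : ∀ l ∈ (Ioc s T).filter Nat.Prime, Real.log l ≤ L) :
    Chebyshev.theta T - Chebyshev.theta s ≤ ((Ioc s T).filter Nat.Prime).card * L := by
  have : Chebyshev.theta T - Chebyshev.theta s = ∑ l ∈ (Ioc s T).filter Nat.Prime, Real.log l := by
    rw [Chebyshev.theta, Chebyshev.theta, Nat.floor_natCast, Nat.floor_natCast, sub_eq_iff_eq_add]
    rw [← sum_union]
    · congr 1
      rw [← filter_union, union_comm, Ioc_union_Ioc_eq_Ioc (Nat.zero_le _) hsT]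
    · apply disjoint_filter_filter
      rw [disjoint_left]
      intro a ha hb
      simp only [mem_Ioc] at *
      omega
  rw [this, ← nsmul_eq_mul]
  exact sum_le_card_nsmul _ _ _ hL

theorem bb_sq_div : ∃ C : ℝ, 0 < C ∧ ∃ M0 : ℕ, ∀ M : ℕ, M0 ≤ M →
    ∑ k ∈ Ioc 0 (M ^ 100), bb M k ^ 2 / k ≤ C := by
  obtain ⟨C, hC, hsq⟩ := bb_sq
  obtain ⟨Y0, hY0, hθ⟩ := theta_lower
  refine ⟨4800 * C, by positivity, max 10 ⌈Y0⌉₊, fun M hM => ?_⟩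
  have hM10 : 10 ≤ M := (le_max_left _ _).trans hM
  have hMY : Y0 ≤ M := (Nat.le_ceil _).trans (by exact_mod_cast (le_max_right _ _).trans hM)
  have hM2 : 2 ≤ M := by omega
  have hl := logM_pos hM2
  have hM1 : (10:ℝ) ≤ M := by exact_mod_cast hM10
  set x := M ^ 100 with hx
  have hxM : (M:ℝ) ≤ x := by exact_mod_cast Nat.le_self_pow (by norm_num) M
  have hx0 : (0:ℝ) < x := by linarith
  have hx10 : (10:ℝ) ≤ x := by linarith
  -- counting
  have hcount : ∀ k ∈ Ioc 0 x, (x:ℝ) ^ 3 / (1800 * k * Real.log M) ≤ ((Ioc x (x ^ 3 / k)).filter Nat.Prime).card := by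
    intro k hk
    simp only [mem_Ioc] at hk
    have hk0 : (0:ℝ) < k := by exact_mod_cast hk.1
    have hkx : (k:ℝ) ≤ x := by exact_mod_cast hk.2
    have hT : x ^ 2 ≤ x ^ 3 / k := by
      rw [Nat.le_div_iff_mul_le hk.1, pow_succ x 2]
      exact Nat.mul_le_mul_left _ hk.2
    have hT' : (x:ℝ) ^ 2 ≤ ((x ^ 3 / k : ℕ) : ℝ) := by exact_mod_cast hT
    have hxT : x ≤ x ^ 3 / k := le_trans (Nat.le_self_pow (by norm_num) x) hT
    have h1 := theta_count x (x ^ 3 / k) hxT (300 * Real.log M) (by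
      intro l hl
      simp only [mem_filter, mem_Ioc] at hl
      have h2 : l ≤ M ^ 300 := by
        refine hl.1.2.trans ((Nat.div_le_self _ _).trans ?_)
        rw [hx, ← pow_mul]
      have h3 : Real.log l ≤ Real.log ((M:ℝ) ^ 300) := by
        apply Real.log_le_log (by exact_mod_cast hl.2.pos)
        exact_mod_cast h2
      rw [Real.log_pow] at h3
      exact_mod_cast h3)
    have h2 := hθ ((x ^ 3 / k : ℕ) : ℝ) (by nlinarith)
    have h3 := Chebyshev.theta_le_log4_mul_x (x := (x:ℝ)) hx0.le
    have h4 : Real.log 4 ≤ 1.4 := by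
      rw [show (4:ℝ) = 2 ^ 2 by norm_num, Real.log_pow]
      have := Real.log_two_lt_d9
      push_cast; linarith
    have h5 : (x:ℝ)^3 / k ≤ ((x ^ 3 / k : ℕ) : ℝ) + 1 := by
      have : (x:ℝ)^3 / k < ((x ^ 3 / k : ℕ) : ℝ) + 1 := by
        rw [div_lt_iff₀ hk0]
        have := Nat.lt_div_mul_add hk.1 (a := x ^ 3)
        have h6 : x^3 < (x^3 / k + 1) * k := by linarith [add_mul (x^3/k) 1 k]
        exact_mod_cast h6
      exact this.le
    set A := ((x ^ 3 / k : ℕ) : ℝ)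
    have h6 : (x:ℝ)^3 / k ≤ 6 * (A / 2 - 1.4 * x) := by nlinarith
    have h7 : (x:ℝ)^3 / k ≤ 6 * (((Ioc x (x ^ 3 / k)).filter Nat.Prime).card * (300 * Real.log M)) := by nlinarith
    rw [div_le_iff₀ (by positivity)]
    rw [div_le_iff₀ hk0] at h7
    nlinarith
  have hVx : M ^ 35 ≤ x := Nat.pow_le_pow_right (by omega) (by norm_num)
  have h1 : ∑ k ∈ Ioc 0 x, ∑ l ∈ (Ioc x (x ^ 3 / k)).filter Nat.Prime, bb M (k * l) ^ 2 ≤ ∑ n ∈ Ioc 0 (x ^ 3), bb M n ^ 2 := by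
    rw [sum_sigma']
    have hinj : Set.InjOn (fun p : (_ : ℕ) × ℕ => p.1 * p.2) ((Ioc 0 x).sigma (fun k => (Ioc x (x ^ 3 / k)).filter Nat.Prime) : Finset _) := by
      rintro ⟨k, l⟩ h ⟨k', l'⟩ h' he
      simp only [coe_sigma, Set.mem_sigma_iff, mem_coe, mem_filter, mem_Ioc] at h h' he
      have hll : l = l' := by
        have : l ∣ k' * l' := he ▸ Dvd.intro_left _ rfl
        rcases (Nat.Prime.dvd_mul h.2.2).1 this with h1 | h1
        · have := Nat.le_of_dvd h'.1.1 h1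
          omega
        · exact (Nat.prime_dvd_prime_iff_eq h.2.2 h'.2.2).1 h1
      subst hll
      have : k = k' := Nat.eq_of_mul_eq_mul_right h.2.2.pos he
      subst this
      rfl
    rw [← sum_image (f := fun n => bb M n ^ 2) (g := fun p : (_ : ℕ) × ℕ => p.1 * p.2) hinj]
    apply sum_le_sum_of_subset_of_nonneg
    · intro n hn
      simp only [mem_image, mem_sigma, mem_filter, mem_Ioc] at hn ⊢
      obtain ⟨⟨k, l⟩, ⟨⟨hk1, hk2⟩, ⟨hl1, hl2⟩, hl3⟩, rfl⟩ := hn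
      refine ⟨mul_pos hk1 hl3.pos, ?_⟩
      have := (Nat.le_div_iff_mul_le hk1).1 hl2
      linarith [mul_comm k l]
    · intros; positivity
  have h2 : (x:ℝ) ^ 3 / (1800 * Real.log M) * ∑ k ∈ Ioc 0 x, bb M k ^ 2 / k ≤
      ∑ k ∈ Ioc 0 x, ∑ l ∈ (Ioc x (x ^ 3 / k)).filter Nat.Prime, bb M (k * l) ^ 2 := by
    rw [mul_sum]
    refine sum_le_sum fun k hk => ?_
    have hk0 : (0:ℝ) < k := by exact_mod_cast (mem_Ioc.1 hk).1
    rw [sum_congr rfl (g := fun _ => bb M k ^ 2) (fun l hl => by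
      simp only [mem_filter, mem_Ioc] at hl
      rw [bb_mul_prime M k l hM2 (mem_Ioc.1 hk).1 hl.2 (by omega)])]
    rw [sum_const, nsmul_eq_mul]
    have := hcount k hk
    calc _ = (x:ℝ) ^ 3 / (1800 * k * Real.log M) * bb M k ^ 2 := by field_simp
      _ ≤ _ := by gcongr
  have h3 := (h2.trans h1).trans (hsq M hM2 (x ^ 3))
  push_cast at h3
  have h4 : (M:ℝ) ^ 70 ≤ (x:ℝ) ^ 3 / Real.log M := by
    rw [le_div_iff₀ hl]
    have : Real.log M ≤ M := (Real.log_le_sub_one_of_pos (by linarith)).trans (by linarith)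
    calc (M:ℝ) ^ 70 * Real.log M ≤ (M:ℝ) ^ 70 * M := by gcongr
      _ = (M:ℝ) ^ 71 := by ring
      _ ≤ (M:ℝ) ^ 300 := pow_le_pow_right₀ (by linarith) (by norm_num)
      _ = (x:ℝ) ^ 3 := by rw [hx]; push_cast; ring
  have h5 : (x:ℝ) ^ 3 / (1800 * Real.log M) * ∑ k ∈ Ioc 0 x, bb M k ^ 2 / k ≤ (x:ℝ) ^ 3 / (1800 * Real.log M) * (3600 * C) := by
    calc _ ≤ C * ((x:ℝ) ^ 3 / Real.log M + (M:ℝ) ^ 70) := h3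
      _ ≤ C * ((x:ℝ) ^ 3 / Real.log M + (x:ℝ) ^ 3 / Real.log M) := by gcongr
      _ = _ := by field_simp; ring
  have := le_of_mul_le_mul_left h5 (by positivity)
  linarith

end LT

namespace LT
open Finset
open scoped ArithmeticFunction.Moebius ArithmeticFunction.vonMangoldt

lemma disc_interval (a b h : ℕ) (hh : 0 < h) :
    Disc (Ico a b) (fun n => if h ∣ n then (1:ℝ) else 0) 2 := by
  set f : ℕ → ℝ := fun n => if a ≤ n ∧ n < b then 1 else 0 with hf
  have h1 := disc_dvd f b (by intro n hn; simp [hf]; omega) h hh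
  have h2 : ∑ n ∈ range b, |f (n + 1) - f n| ≤ 2 := by
    calc _ ≤ ∑ n ∈ range b, ((if n = a - 1 then (1:ℝ) else 0) + (if n = b - 1 then 1 else 0)) := by
          refine sum_le_sum fun n hn => ?_
          have := mem_range.1 hn
          simp only [hf]
          split_ifs <;> first | omega | norm_num
      _ ≤ 1 + 1 := by
          rw [sum_add_distrib, sum_ite_eq', sum_ite_eq']
          split_ifs <;> norm_num
      _ = 2 := by norm_num
  intro q hq x y hx hy
  have h3 := (h1 q hq x y hx hy).trans h2
  have e : ∀ c : ℕ, ∑ n ∈ Ico a b, (if n % q = c % q then (if h ∣ n then (1:ℝ) else 0) else 0) =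
      ∑ n ∈ range b, (if n % q = c % q then (if h ∣ n then f n else 0) else 0) := by
    intro c
    apply sum_subset_zero_on_sdiff
    · intro n hn; simp only [mem_Ico, mem_range] at *; omega
    · intro n hn
      simp only [mem_sdiff, mem_Ico, mem_range] at hn
      have : f n = 0 := by simp only [hf]; rw [if_neg hn.2]
      simp [this]
    · intro n hn
      have : f n = 1 := by simp only [hf]; rw [if_pos (mem_Ico.1 hn)]
      rw [this]
  rw [e, e]
  exact h3

lemma Disc.congr {s : Finset ℕ} {f g : ℕ → ℝ} {K : ℝ} (h : Disc s f K) (hfg : ∀ n ∈ s, f n = g n) : Disc s g K := by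
  intro q hq a b ha hb
  have := h q hq a b ha hb
  have e : ∀ c, ∑ n ∈ s, (if n % q = c % q then f n else 0) = ∑ n ∈ s, (if n % q = c % q then g n else 0) :=
    fun c => sum_congr rfl fun n hn => by rw [hfg n hn]
  rw [e, e] at this
  exact this

/-- pairwise coprime family -/
structure Fam (M : ℕ) (G : Finset ℕ) : Prop where
  two_le : ∀ D ∈ G, 2 ≤ D
  le : ∀ D ∈ G, D ≤ M ^ 12
  cop : ∀ D ∈ G, ∀ D' ∈ G, D ≠ D' → D.Coprime D'
  card : G.card ≤ M

lemma Fam.sieve {M : ℕ} {G : Finset ℕ} (hG : Fam M G) (s : Finset ℕ) (W f : ℕ → ℝ) (hW : ∀ n ∈ s, 0 < W n) (K : ℝ) (hK0 : 0 ≤ K) (hK : Disc s W K) :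
    ∑ D ∈ G, (D.totient : ℝ) * VarD D s f ≤
      (4 * ∑ n ∈ s, W n + 2 * K * (M:ℝ) ^ 25) * ∑ n ∈ s, f n ^ 2 / W n := by
  refine (large_sieve s W f hW K hK0 hK G ((M:ℝ)^12) (fun D hD => ⟨by have := hG.two_le D hD; omega, by exact_mod_cast hG.le D hD⟩) hG.cop).trans ?_
  have h1 : 0 ≤ ∑ n ∈ s, f n ^ 2 / W n := sum_nonneg fun n hn => div_nonneg (sq_nonneg _) (hW n hn).le
  apply mul_le_mul_of_nonneg_right _ h1
  have : (G.card : ℝ) ≤ M := by exact_mod_cast hG.card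
  have h2 : 2 * K * ((M:ℝ)^12)^2 * G.card ≤ 2 * K * ((M:ℝ)^12)^2 * M := by gcongr
  have h3 : 2 * K * ((M:ℝ)^12)^2 * M = 2 * K * (M:ℝ)^25 := by ring
  linarith

lemma varB (M : ℕ) (hM : 16 ≤ M) (G : Finset ℕ) (hG : Fam M G) (N' : ℝ) (hN' : (M:ℝ) ^ 30 / 16 ≤ N') (f : ℕ → ℝ) :
    ∑ D ∈ G, (D.totient : ℝ) * VarD D (Ico ⌈N'⌉₊ ⌈16 * N'⌉₊) f ≤ 200 * N' * ∑ n ∈ Ico ⌈N'⌉₊ ⌈16 * N'⌉₊, f n ^ 2 := by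
  have hM' : (16:ℝ) ≤ M := by exact_mod_cast hM
  have h1 := hG.sieve (Ico ⌈N'⌉₊ ⌈16 * N'⌉₊) (fun _ => 1) f (fun _ _ => one_pos) 2 (by norm_num)
    ((disc_interval ⌈N'⌉₊ ⌈16 * N'⌉₊ 1 one_pos).congr (by intro n _; simp))
  simp only [div_one] at h1
  refine h1.trans ?_
  have h2 : 0 ≤ ∑ n ∈ Ico ⌈N'⌉₊ ⌈16 * N'⌉₊, f n ^ 2 := sum_nonneg fun n hn => sq_nonneg _
  apply mul_le_mul_of_nonneg_right _ h2
  have hN1 : (M:ℝ)^25 ≤ N' := by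
    refine le_trans ?_ hN'
    rw [le_div_iff₀ (by norm_num)]
    calc (M:ℝ)^25 * 16 ≤ (M:ℝ)^25 * M^5 := by
          gcongr
          exact hM'.trans (le_self_pow₀ (by linarith) (by norm_num))
      _ = _ := by ring
  have hN0 : 1 ≤ N' := le_trans (one_le_pow₀ (by linarith)) hN1
  have h3 : ∑ n ∈ Ico ⌈N'⌉₊ ⌈16 * N'⌉₊, (1:ℝ) ≤ 17 * N' := by
    simp only [sum_const, Nat.card_Ico, nsmul_eq_mul, mul_one]
    have : ((⌈16 * N'⌉₊ - ⌈N'⌉₊ : ℕ) : ℝ) ≤ ⌈16 * N'⌉₊ := by exact_mod_cast Nat.sub_le _ _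
    have := Nat.ceil_lt_add_one (show 0 ≤ 16 * N' by linarith)
    linarith
  linarith

noncomputable def WW (M n : ℕ) : ℝ := (bet M n / Real.log M) ^ 2 + 1 / (M:ℝ) ^ 5

lemma WW_pos (M n : ℕ) (hM : 2 ≤ M) : 0 < WW M n := by
  have : (0:ℝ) < M := by positivity
  unfold WW; positivity

lemma WW_prime (M p : ℕ) (hM : 2 ≤ M) (hp : p.Prime) (hpM : M < p) : 1 ≤ WW M p := by
  have hl := logM_pos hM
  have : bet M p = Real.log M := by
    rw [bet, Nat.Prime.sum_divisors hp]
    have e1 : LL M p = 0 := by rw [LL, if_neg (by omega)]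
    have e2 : LL M 1 = Real.log M := by rw [LL, if_pos (by omega)]; simp
    rw [e1, e2]; simp
  rw [WW, this, div_self hl.ne']
  have : (0:ℝ) ≤ 1 / (M:ℝ)^5 := by positivity
  linarith

lemma WW_disc (M a b : ℕ) (hM : 2 ≤ M) (ha : 0 < a) : Disc (Ico a b) (WW M) (4 * (M:ℝ) ^ 2) := by
  have hl := logM_pos hM
  have hM1 : (1:ℝ) ≤ M := by exact_mod_cast (by omega : 1 ≤ M)
  set c : ℕ → ℝ := fun d => (μ d : ℝ) * LL M d with hc
  have hcb : ∀ d ∈ Ioc 0 M, |c d| ≤ Real.log M := by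
    intro d hd
    rw [hc, abs_mul, abs_of_nonneg (LL_nonneg M d)]
    have h1 := LL_le M d (mem_Ioc.1 hd).1
    have h2 := LL_nonneg M d
    have h3 := abs_mu d
    nlinarith [abs_nonneg (μ d : ℝ)]
  have h1 := Disc.sum (s := Ico a b) (Ioc 0 M ×ˢ Ioc 0 M) (fun p n => if Nat.lcm p.1 p.2 ∣ n then (1:ℝ) else 0) (fun _ => 2)
    (fun p => c p.1 * c p.2 / Real.log M ^ 2) (fun p hp => by
      rw [mem_product, mem_Ioc, mem_Ioc] at hp
      exact disc_interval a b _ (Nat.lcm_pos hp.1.1 hp.2.1))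
  have h2 := disc_interval a b 1 one_pos
  have h3 := Disc.sum (s := Ico a b) (univ : Finset Bool)
    (fun i => if i then (fun n => ∑ i ∈ Ioc 0 M ×ˢ Ioc 0 M, c i.1 * c i.2 / Real.log M ^ 2 * if Nat.lcm i.1 i.2 ∣ n then (1:ℝ) else 0) else
      (fun n => if 1 ∣ n then (1:ℝ) else 0))
    (fun i => if i then ∑ i ∈ Ioc 0 M ×ˢ Ioc 0 M, |c i.1 * c i.2 / Real.log M ^ 2| * 2 else 2)
    (fun i => if i then 1 else 1 / (M:ℝ)^5) (by
      intro i _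
      cases i
      · simpa using h2
      · simpa using h1)
  refine (h3.congr ?_).mono ?_
  · intro n hn
    have hn0 : 0 < n := by have := mem_Ico.1 hn; omega
    simp only [Fintype.sum_bool, if_true, one_mul, Bool.false_eq_true, if_false, one_dvd, mul_one]
    rw [WW, bet_eq M n hn0, div_pow, sq (∑ d ∈ _, _), sum_mul_sum, sum_product, sum_div]
    congr 1
    refine sum_congr rfl fun d _ => ?_
    rw [sum_div]
    refine sum_congr rfl fun e _ => ?_
    by_cases h1 : d ∣ n <;> by_cases h2 : e ∣ n <;> simp [Nat.lcm_dvd_iff, h1, h2, hc]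
  · simp only [Fintype.sum_bool, if_true, one_mul, Bool.false_eq_true, if_false, abs_one]
    have e1 : ∑ i ∈ Ioc 0 M ×ˢ Ioc 0 M, |c i.1 * c i.2 / Real.log M ^ 2| * 2 ≤ 2 * (M:ℝ)^2 := by
      calc _ ≤ ∑ i ∈ Ioc 0 M ×ˢ Ioc 0 M, (2:ℝ) := by
            refine sum_le_sum fun p hp => ?_
            rw [mem_product] at hp
            have h1 := hcb p.1 hp.1
            have h2 := hcb p.2 hp.2
            rw [abs_div, abs_mul, abs_of_pos (show 0 < Real.log M ^ 2 by positivity)]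
            have : |c p.1| * |c p.2| / Real.log M ^ 2 ≤ 1 := by
              rw [div_le_one (by positivity), sq]
              gcongr
            linarith
        _ = _ := by simp; ring
    have e2 : |1 / (M:ℝ)^5| * 2 ≤ 2 := by
      rw [abs_of_pos (by positivity)]
      have : 1 / (M:ℝ)^5 ≤ 1 := by
        rw [div_le_one (by positivity)]; exact one_le_pow₀ hM1
      linarith
    have : 1 ≤ (M:ℝ)^2 := one_le_pow₀ hM1
    linarith

lemma log_le_self' (M : ℕ) (hM : 1 ≤ M) : Real.log M ≤ M := by
  have : (0:ℝ) < M := by exact_mod_cast hM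
  linarith [Real.log_le_sub_one_of_pos this]

theorem varA : ∃ C : ℝ, 0 < C ∧ ∀ M : ℕ, 16 ≤ M → ∀ G : Finset ℕ, Fam M G → ∀ y : ℝ, (M:ℝ) ^ 35 / 16 ≤ y →
    y ≤ (M:ℝ) ^ 100 →
    ∑ D ∈ G, (D.totient : ℝ) * VarD D (Ico (⌊y⌋₊ + 1) (⌊16 * y⌋₊ + 1)) (fun m => if M ^ 35 < m then Λ m else 0) ≤ C * y ^ 2 := by
  obtain ⟨C, hC, hsm⟩ := second_moment
  refine ⟨(64 * C + 1088) * 18000, by positivity, fun M hM G hG y hy1 hy2 => ?_⟩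
  have hM2 : 2 ≤ M := by omega
  have hl := logM_pos hM2
  have hlM := log_le_self' M (by omega)
  have hM16 : (16:ℝ) ≤ M := by exact_mod_cast hM
  have hM0 : (0:ℝ) < M := by linarith
  set l := Real.log M with hldef
  set s := Ico (⌊y⌋₊ + 1) (⌊16 * y⌋₊ + 1) with hs
  set f : ℕ → ℝ := fun m => if M ^ 35 < m then Λ m else 0 with hf
  have hy34 : (M:ℝ)^34 ≤ y := by
    refine le_trans ?_ hy1
    rw [le_div_iff₀ (by norm_num)]
    calc (M:ℝ)^34 * 16 ≤ (M:ℝ)^34 * M := by gcongr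
      _ = _ := by ring
  have hy0 : 0 < y := lt_of_lt_of_le (by positivity) hy34
  have hy1' : 1 ≤ y := le_trans (one_le_pow₀ (by linarith)) hy34
  have hsub : s ⊆ Ioc 0 ⌊16 * y⌋₊ := by
    intro n hn; simp only [hs, mem_Ico, mem_Ioc] at *; omega
  have hfl : (⌊16 * y⌋₊ : ℝ) ≤ 16 * y := Nat.floor_le (by positivity)
  have h1 := hG.sieve s (WW M) f (fun n _ => WW_pos M n hM2) (4 * (M:ℝ)^2) (by positivity) (WW_disc M _ _ hM2 (by omega))
  -- N_W
  have h2 : ∑ n ∈ s, WW M n ≤ (16 * C + 17) * (y / l) := by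
    calc _ ≤ ∑ n ∈ Ioc 0 ⌊16 * y⌋₊, WW M n := sum_le_sum_of_subset_of_nonneg hsub (fun n _ _ => (WW_pos M n hM2).le)
      _ = (∑ n ∈ Ioc 0 ⌊16 * y⌋₊, bet M n ^ 2) / l ^ 2 + ⌊16 * y⌋₊ * (1 / (M:ℝ)^5) := by
          simp only [WW, sum_add_distrib, div_pow, ← sum_div]
          rw [← hldef, sum_const, Nat.card_Ioc, nsmul_eq_mul, Nat.sub_zero]; ring
      _ ≤ (C * (16 * y) * l + (M * l) ^ 2) / l ^ 2 + 16 * y * (1 / (M:ℝ)^5) := by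
          gcongr
          refine (hsm M hM2 ⌊16 * y⌋₊).trans ?_
          gcongr
      _ = 16 * C * (y / l) + (M:ℝ)^2 + 16 * y * (1 / (M:ℝ)^5) := by field_simp
      _ ≤ 16 * C * (y / l) + y / l + 16 * (y / l) := by
          have q1 : (M:ℝ)^2 ≤ y / l := by
            rw [le_div_iff₀ hl]
            calc (M:ℝ)^2 * l ≤ (M:ℝ)^2 * M := by gcongr
              _ = (M:ℝ)^3 := by ring
              _ ≤ (M:ℝ)^34 := pow_le_pow_right₀ (by linarith) (by norm_num)
              _ ≤ y := hy34
          have q2 : y * (1 / (M:ℝ)^5) ≤ y / l := by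
            rw [mul_one_div]
            exact div_le_div_of_nonneg_left hy0.le hl (hlM.trans (le_self_pow₀ (by linarith) (by norm_num)))
          linarith
      _ = _ := by ring
  have h3 : 2 * (4 * (M:ℝ)^2) * (M:ℝ)^25 ≤ 8 * (y / l) := by
    have : (M:ℝ)^27 ≤ y / l := by
      rw [le_div_iff₀ hl]
      calc (M:ℝ)^27 * l ≤ (M:ℝ)^27 * M := by gcongr
        _ = (M:ℝ)^28 := by ring
        _ ≤ (M:ℝ)^34 := pow_le_pow_right₀ (by linarith) (by norm_num)
        _ ≤ y := hy34
    nlinarith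
  -- energy
  have hlog : Real.log (16 * y) ≤ 101 * l := by
    have : 16 * y ≤ (M:ℝ)^101 := by
      calc 16 * y ≤ M * (M:ℝ)^100 := by gcongr
        _ = _ := by ring
    have := Real.log_le_log (by positivity) this
    rw [Real.log_pow] at this
    exact_mod_cast this
  have hΛ : ∀ n ∈ s, Λ n ≤ 101 * l := by
    intro n hn
    have hn := hsub hn
    rw [mem_Ioc] at hn
    refine ArithmeticFunction.vonMangoldt_le_log.trans ?_
    refine le_trans (Real.log_le_log (by exact_mod_cast hn.1) ?_) hlog
    exact le_trans (by exact_mod_cast hn.2) hfl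
  have hpt : ∀ n ∈ s, f n ^ 2 / WW M n ≤ 101 * l * Λ n + (M:ℝ)^5 * (101 * l) * (if n.Prime then 0 else Λ n) := by
    intro n hn
    have hL0 := ArithmeticFunction.vonMangoldt_nonneg (n := n)
    have hL1 := hΛ n hn
    have hnn : 0 ≤ 101 * l * Λ n := by positivity
    have hif : 0 ≤ (if n.Prime then 0 else Λ n) := by split_ifs <;> [exact le_rfl; exact hL0]
    by_cases hU : M ^ 35 < n
    · simp only [hf, if_pos hU]
      by_cases hp : n.Prime
      · have hw : 1 ≤ WW M n := WW_prime M n hM2 hp (lt_of_le_of_lt (Nat.le_self_pow (by norm_num) M) hU)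
        have : Λ n ^ 2 / WW M n ≤ Λ n ^ 2 := div_le_self (sq_nonneg _) hw
        rw [if_pos hp]
        nlinarith
      · rw [if_neg hp]
        have hw : 1 / (M:ℝ)^5 ≤ WW M n := by rw [WW]; nlinarith [sq_nonneg (bet M n / Real.log M)]
        have : Λ n ^ 2 / WW M n ≤ Λ n ^ 2 / (1 / (M:ℝ)^5) := by gcongr
        have e : Λ n ^ 2 / (1 / (M:ℝ)^5) = (M:ℝ)^5 * Λ n ^ 2 := by field_simp
        have : (M:ℝ)^5 * Λ n ^ 2 ≤ (M:ℝ)^5 * ((101 * l) * Λ n) := by gcongr; nlinarith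
        linarith
    · simp only [hf, if_neg hU]
      have : 0 ≤ (M:ℝ)^5 * (101 * l) * (if n.Prime then 0 else Λ n) := by positivity
      rw [show (0:ℝ) ^ 2 / WW M n = 0 by simp]; linarith
  have hlog4 : Real.log 4 ≤ 1.4 := by
    rw [show (4:ℝ) = 2 ^ 2 by norm_num, Real.log_pow]
    have := Real.log_two_lt_d9
    push_cast; linarith
  have h4 : ∑ n ∈ s, f n ^ 2 / WW M n ≤ 18000 * (y * l) := by
    have a1 : ∑ n ∈ s, Λ n ≤ 90 * y := by
      calc _ ≤ Chebyshev.psi (16 * y) :=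
            sum_le_sum_of_subset_of_nonneg hsub (fun n _ _ => ArithmeticFunction.vonMangoldt_nonneg)
        _ ≤ (Real.log 4 + 4) * (16 * y) := Chebyshev.psi_le_const_mul_self (by positivity)
        _ ≤ _ := by nlinarith
    have a2 : ∑ n ∈ s, (if n.Prime then 0 else Λ n) ≤ 8 * Real.sqrt y * (101 * l) := by
      calc _ ≤ ∑ n ∈ Ioc 0 ⌊16 * y⌋₊, (if n.Prime then 0 else Λ n) :=
            sum_le_sum_of_subset_of_nonneg hsub (fun n _ _ => by
              split_ifs <;> [exact le_rfl; exact ArithmeticFunction.vonMangoldt_nonneg])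
        _ = Chebyshev.psi (16 * y) - Chebyshev.theta (16 * y) := by
            rw [Chebyshev.psi_sub_theta_eq_sum_not_prime, sum_filter]
            exact sum_congr rfl fun n _ => by split_ifs <;> rfl
        _ ≤ 2 * Real.sqrt (16 * y) * Real.log (16 * y) := Chebyshev.psi_sub_theta_le (by linarith)
        _ ≤ 2 * Real.sqrt (16 * y) * (101 * l) := by gcongr
        _ = _ := by
            rw [Real.sqrt_mul (by norm_num), show Real.sqrt 16 = 4 by
              rw [show (16:ℝ) = 4 ^ 2 by norm_num]; exact Real.sqrt_sq (by norm_num)]; ring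
    have a3 : (M:ℝ)^17 ≤ Real.sqrt y := Real.le_sqrt_of_sq_le (by rw [← pow_mul]; exact hy34)
    have a4 : (M:ℝ)^5 * (101 * l) * (8 * Real.sqrt y * (101 * l)) ≤ 6 * (y * l) := by
      have hss : Real.sqrt y * Real.sqrt y = y := Real.mul_self_sqrt hy0.le
      have b1 : (M:ℝ)^5 * (101 * (8 * 101 * l)) ≤ 6 * Real.sqrt y := by
        have : (101 * (8 * 101):ℝ) ≤ (M:ℝ)^6 := by
          calc _ ≤ (16:ℝ)^6 := by norm_num
            _ ≤ _ := by gcongr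
        calc (M:ℝ)^5 * (101 * (8 * 101 * l)) = (M:ℝ)^5 * (101 * (8 * 101)) * l := by ring
          _ ≤ (M:ℝ)^5 * (M:ℝ)^6 * M := by gcongr
          _ = (M:ℝ)^12 := by ring
          _ ≤ (M:ℝ)^17 := pow_le_pow_right₀ (by linarith) (by norm_num)
          _ ≤ Real.sqrt y := a3
          _ ≤ _ := by nlinarith [Real.sqrt_nonneg y]
      calc _ = ((M:ℝ)^5 * (101 * (8 * 101 * l))) * (l * Real.sqrt y) := by ring
        _ ≤ 6 * Real.sqrt y * (l * Real.sqrt y) := by gcongr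
        _ = 6 * ((Real.sqrt y * Real.sqrt y) * l) := by ring
        _ = _ := by rw [hss]
    calc _ ≤ ∑ n ∈ s, (101 * l * Λ n + (M:ℝ)^5 * (101 * l) * (if n.Prime then 0 else Λ n)) := sum_le_sum hpt
      _ = 101 * l * ∑ n ∈ s, Λ n + (M:ℝ)^5 * (101 * l) * ∑ n ∈ s, (if n.Prime then 0 else Λ n) := by
          rw [sum_add_distrib, mul_sum, mul_sum]
      _ ≤ 101 * l * (90 * y) + (M:ℝ)^5 * (101 * l) * (8 * Real.sqrt y * (101 * l)) := by gcongr
      _ ≤ _ := by nlinarith [mul_pos hy0 hl]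
  refine h1.trans ?_
  have h6 : 0 ≤ ∑ n ∈ s, f n ^ 2 / WW M n := sum_nonneg fun n _ => div_nonneg (sq_nonneg _) (WW_pos M n hM2).le
  calc _ ≤ ((64 * C + 1088) * (y / l)) * (18000 * (y * l)) := by
        gcongr
        have : 0 < y / l := by positivity
        nlinarith
    _ = _ := by field_simp

end LT

namespace LT
open Finset
open scoped ArithmeticFunction.Moebius ArithmeticFunction.vonMangoldt

/-- inverse modulo `D` -/
noncomputable def sg (D x : ℕ) : ℕ := ((x : ZMod D)⁻¹).val

lemma sg_key (D : ℕ) (hD : 0 < D) (j k : ℕ) (hj : j.Coprime D) : k % D = sg D j ↔ (k * j) % D = 1 % D := by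
  have : NeZero D := ⟨hD.ne'⟩
  have h1 := ZMod.coe_mul_inv_eq_one j hj
  have e : k % D = sg D j ↔ (k : ZMod D) = (j : ZMod D)⁻¹ := by
    rw [sg, ← ZMod.val_natCast]
    exact (ZMod.val_injective D).eq_iff
  have e2 : (k * j) % D = 1 % D ↔ (k : ZMod D) * j = 1 := by
    have := ZMod.natCast_eq_natCast_iff (k * j) 1 D
    push_cast at this
    rw [this]; rfl
  rw [e, e2]
  constructor
  · intro h; rw [h, mul_comm]; exact h1
  · intro h
    calc (k : ZMod D) = k * (j * (j : ZMod D)⁻¹) := by rw [h1, mul_one]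
      _ = _ := by rw [← mul_assoc, h, one_mul]

lemma sg_lt (D : ℕ) (hD : 0 < D) (x : ℕ) : sg D x < D := by
  have : NeZero D := ⟨hD.ne'⟩
  exact ZMod.val_lt _

lemma sg_mem (D : ℕ) (hD : 0 < D) (x : ℕ) (hx : x ∈ UU D) : sg D x ∈ UU D := by
  simp only [UU, mem_filter, mem_range] at *
  refine ⟨sg_lt D hD x, ?_⟩
  have := (sg_key D hD x (sg D x) hx.2).1 (Nat.mod_eq_of_lt (sg_lt D hD x))
  exact Nat.coprime_of_mul_modEq_one x this

lemma sg_sg (D : ℕ) (hD : 0 < D) (x : ℕ) (hx : x ∈ UU D) : sg D (sg D x) = x := by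
  have h2 := sg_mem D hD x hx
  simp only [UU, mem_filter, mem_range] at hx h2
  have h1 := (sg_key D hD x (sg D x) hx.2).1 (Nat.mod_eq_of_lt (sg_lt D hD x))
  rw [mul_comm] at h1
  have h3 := (sg_key D hD (sg D x) x h2.2).2 h1
  rw [Nat.mod_eq_of_lt hx.1] at h3
  exact h3.symm

lemma cc_zero (D x j : ℕ) (hx : x ∈ UU D) (hj : ¬ j.Coprime D) : cc D x j = 0 := by
  simp only [UU, mem_filter, mem_range] at hx
  have : j % D ≠ x := by
    intro h; apply hj; rw [← coprime_mod, h]; exact hx.2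
  simp [cc, this, hj]

lemma kernel (D : ℕ) (hD : 2 ≤ D) (j k : ℕ) :
    ∑ x ∈ UU D, cc D x j * cc D (sg D x) k = cc D 1 (k * j) := by
  have hD0 : 0 < D := by omega
  have h1D : 1 % D = 1 := Nat.mod_eq_of_lt (by omega)
  have h1U : 1 ∈ UU D := by simp [UU]; omega
  by_cases hj : j.Coprime D
  swap
  · rw [sum_eq_zero, cc_zero D 1 _ h1U]
    · rw [Nat.coprime_mul_iff_left]; tauto
    · intro x hx; rw [cc_zero D x j hx hj, zero_mul]
  by_cases hk : k.Coprime D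
  swap
  · rw [sum_eq_zero, cc_zero D 1 _ h1U]
    · rw [Nat.coprime_mul_iff_left]; tauto
    · intro x hx; rw [cc_zero D _ k (sg_mem D hD0 x hx) hk, mul_zero]
  have hkj : (k * j).Coprime D := Nat.Coprime.mul_left hk hj
  have hφ : (D.totient : ℝ) ≠ 0 := by
    have := Nat.totient_pos.2 hD0; positivity
  simp only [cc, if_pos hj, if_pos hk, if_pos hkj]
  set c : ℝ := 1 / D.totient with hc
  have e : ∀ x ∈ UU D, ((if j % D = x then (1:ℝ) else 0) - c) * ((if k % D = sg D x then 1 else 0) - c) =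
      (if j % D = x then (if k % D = sg D (j % D) then (1:ℝ) else 0) else 0) - c * (if j % D = x then 1 else 0)
        - c * (if k % D = sg D x then 1 else 0) + c * c := by
    intro x hx
    by_cases h : j % D = x
    · subst h; simp only [if_true]; ring
    · simp only [if_neg h]; ring
  rw [sum_congr rfl e]
  rw [sum_add_distrib, sum_sub_distrib, sum_sub_distrib, ← mul_sum, ← mul_sum, sum_UU D hD0 j, sum_UU D hD0 j, if_pos hj, if_pos hj]
  have e2 : ∑ x ∈ UU D, (if k % D = sg D x then (1:ℝ) else 0) = 1 := by
    have := sum_UU D hD0 k (1:ℝ)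
    rw [if_pos hk] at this
    refine Eq.trans ?_ this
    refine sum_nbij' (sg D) (sg D) (fun x hx => sg_mem D hD0 x hx) (fun x hx => sg_mem D hD0 x hx)
      (fun x hx => sg_sg D hD0 x hx) (fun x hx => sg_sg D hD0 x hx) (fun x hx => rfl)
  have hjm : (j % D).Coprime D := coprime_mod.2 hj
  have e3 : (k % D = sg D (j % D)) ↔ (k * j) % D = 1 := by
    rw [sg_key D hD0 _ _ hjm, Nat.mul_mod_mod, h1D]
  rw [e2, sum_const, card_UU, nsmul_eq_mul]
  simp only [e3]
  have : (D.totient : ℝ) * (c * c) = c := by rw [hc]; field_simp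
  rw [this]; ring

lemma pairing (D : ℕ) (hD : 2 ≤ D) (s t : Finset ℕ) (a b : ℕ → ℝ) :
    (∑ k ∈ t, ∑ j ∈ s, b k * a j * cc D 1 (k * j)) ^ 2 ≤ VarD D s a * VarD D t b := by
  have hD0 : 0 < D := by omega
  have e : ∑ k ∈ t, ∑ j ∈ s, b k * a j * cc D 1 (k * j) =
      ∑ x ∈ UU D, (∑ j ∈ s, a j * cc D x j) * (∑ k ∈ t, b k * cc D (sg D x) k) := by
    simp_rw [← kernel D hD, sum_mul_sum, mul_sum]
    calc _ = ∑ k ∈ t, ∑ x ∈ UU D, ∑ j ∈ s, b k * a j * (cc D x j * cc D (sg D x) k) := sum_congr rfl fun k _ => sum_comm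
      _ = ∑ x ∈ UU D, ∑ k ∈ t, ∑ j ∈ s, b k * a j * (cc D x j * cc D (sg D x) k) := sum_comm
      _ = ∑ x ∈ UU D, ∑ j ∈ s, ∑ k ∈ t, b k * a j * (cc D x j * cc D (sg D x) k) := sum_congr rfl fun x _ => sum_comm
      _ = _ := by
        refine sum_congr rfl fun x _ => sum_congr rfl fun j _ => sum_congr rfl fun k _ => by ring
  rw [e]
  refine (sum_mul_sq_le_sq_mul_sq _ _ _).trans ?_
  have e2 : ∑ x ∈ UU D, (∑ k ∈ t, b k * cc D (sg D x) k) ^ 2 = VarD D t b := by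
    rw [VarD]
    exact sum_nbij' (sg D) (sg D) (fun x hx => sg_mem D hD0 x hx) (fun x hx => sg_mem D hD0 x hx)
      (fun x hx => sg_sg D hD0 x hx) (fun x hx => sg_sg D hD0 x hx) (fun x hx => rfl)
  rw [e2]; rfl

lemma VarD_nonneg (D : ℕ) (s : Finset ℕ) (f : ℕ → ℝ) : 0 ≤ VarD D s f := sum_nonneg fun _ _ => sq_nonneg _

lemma pairing_abs (D : ℕ) (hD : 2 ≤ D) (s t : Finset ℕ) (a b : ℕ → ℝ) (ε : ℝ) (hε : 0 < ε) :
    |∑ k ∈ t, ∑ j ∈ s, b k * a j * cc D 1 (k * j)| ≤ (ε * VarD D s a + ε⁻¹ * VarD D t b) / 2 := by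
  have h := pairing D hD s t a b
  have h1 := VarD_nonneg D s a
  have h2 := VarD_nonneg D t b
  apply abs_le_of_sq_le_sq
  · refine h.trans ?_
    have : ε * VarD D s a * (ε⁻¹ * VarD D t b) = VarD D s a * VarD D t b := by field_simp
    nlinarith [sq_nonneg (ε * VarD D s a - ε⁻¹ * VarD D t b)]
  · positivity

end LT

namespace LT
open Finset
open scoped ArithmeticFunction.Moebius ArithmeticFunction.vonMangoldt

/-- logarithmic tent function supported on `(X, 256 X)` -/
noncomputable def tent (X : ℝ) (n : ℕ) : ℝ :=
  max 0 (min (Real.log (n / X)) (2 * Real.log 16 - Real.log (n / X)))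

noncomputable def XX (M : ℕ) : ℝ := (M:ℝ) ^ 100 / 256

noncomputable def IA (m : ℕ) : ℝ → ℝ := (Set.Ico (Real.log m - Real.log 16) (Real.log m)).indicator 1
noncomputable def IB (X : ℝ) (k : ℕ) : ℝ → ℝ :=
  (Set.Ico (Real.log X - Real.log k) (Real.log X + Real.log 16 - Real.log k)).indicator 1

noncomputable def bII (M k : ℕ) : ℝ := if k ≤ 1 then 0 else bb M k
noncomputable def aL (M m : ℕ) : ℝ := if M ^ 35 < m then Λ m else 0

lemma IA_IB (X : ℝ) (m k : ℕ) : (fun v => IA m v * IB X k v) =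
    (Set.Ico (max (Real.log m - Real.log 16) (Real.log X - Real.log k))
      (min (Real.log m) (Real.log X + Real.log 16 - Real.log k))).indicator 1 := by
  rw [← Set.Ico_inter_Ico, Set.inter_indicator_one]
  rfl

lemma integrable_ico (a b : ℝ) : MeasureTheory.Integrable ((Set.Ico a b).indicator (1 : ℝ → ℝ)) := by
  rw [MeasureTheory.integrable_indicator_iff measurableSet_Ico]
  exact MeasureTheory.integrableOn_const (by simp)

lemma integral_ico (a b : ℝ) : ∫ v, (Set.Ico a b).indicator (1 : ℝ → ℝ) v = max (b - a) 0 := by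
  rw [MeasureTheory.integral_indicator_one measurableSet_Ico, MeasureTheory.measureReal_def, Real.volume_Ico,
    ENNReal.toReal_ofReal']

lemma IA_IB_int (X : ℝ) (m k : ℕ) : MeasureTheory.Integrable (fun v => IA m v * IB X k v) := by
  rw [IA_IB]; exact integrable_ico _ _

lemma tent_integral (X : ℝ) (hX : 0 < X) (m k : ℕ) (hm : 0 < m) (hk : 0 < k) :
    ∫ v, IA m v * IB X k v = tent X (k * m) := by
  rw [IA_IB, integral_ico, tent]
  have e : Real.log (((k * m : ℕ) : ℝ) / X) = Real.log k + Real.log m - Real.log X := by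
    rw [Real.log_div (by positivity) hX.ne']
    push_cast
    rw [Real.log_mul (by positivity) (by positivity)]
  rw [e, max_comm]
  have : 0 < Real.log 16 := Real.log_pos (by norm_num)
  congr 1
  rcases le_total (Real.log m) (Real.log X + Real.log 16 - Real.log k) with h | h
  · rw [min_eq_left h, max_eq_right (by linarith), min_eq_left (by linarith)]; ring
  · rw [min_eq_right h, max_eq_left (by linarith), min_eq_right (by linarith)]; ring

lemma IA_exp (v : ℝ) (m : ℕ) (hm : 0 < m) :
    IA m v = if m ∈ Ico (⌊Real.exp v⌋₊ + 1) (⌊16 * Real.exp v⌋₊ + 1) then 1 else 0 := by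
  have hm' : (0:ℝ) < m := by exact_mod_cast hm
  have h1 : v < Real.log m ↔ ⌊Real.exp v⌋₊ + 1 ≤ m := by
    rw [Real.lt_log_iff_exp_lt hm', Nat.add_one_le_iff, Nat.floor_lt (Real.exp_pos v).le]
  have h2 : Real.log m - Real.log 16 ≤ v ↔ m < ⌊16 * Real.exp v⌋₊ + 1 := by
    rw [Nat.lt_add_one_iff, Nat.le_floor_iff (by positivity), ← Real.log_div hm'.ne' (by norm_num),
      Real.log_le_iff_le_exp (by positivity), div_le_iff₀ (by norm_num), mul_comm]
  rw [IA, Set.indicator_apply]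
  simp only [mem_Ico, ← h1, ← h2, Set.mem_Ico, Pi.one_apply, and_comm]

lemma IB_exp (X : ℝ) (hX : 0 < X) (v : ℝ) (k : ℕ) (hk : 0 < k) :
    IB X k v = if k ∈ Ico ⌈X / Real.exp v⌉₊ ⌈16 * (X / Real.exp v)⌉₊ then 1 else 0 := by
  have hk' : (0:ℝ) < k := by exact_mod_cast hk
  have he := Real.exp_pos v
  have h1 : Real.log X - Real.log k ≤ v ↔ ⌈X / Real.exp v⌉₊ ≤ k := by
    rw [Nat.ceil_le, ← Real.log_div hX.ne' hk'.ne', Real.log_le_iff_le_exp (by positivity), div_le_iff₀ hk', div_le_iff₀ he, mul_comm]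
  have h2 : v < Real.log X + Real.log 16 - Real.log k ↔ k < ⌈16 * (X / Real.exp v)⌉₊ := by
    rw [Nat.lt_ceil, ← Real.log_mul hX.ne' (by norm_num), ← Real.log_div (by positivity) hk'.ne',
      Real.lt_log_iff_exp_lt (by positivity), lt_div_iff₀ hk', ← mul_div_assoc, lt_div_iff₀ he, mul_comm, mul_comm X]
  rw [IB, Set.indicator_apply]
  simp only [mem_Ico, ← h1, ← h2, Set.mem_Ico, Pi.one_apply]

/-- the slice -/
noncomputable def EE (M D : ℕ) (v : ℝ) : ℝ :=
  ∑ k ∈ Ioc 0 (M ^ 100), ∑ j ∈ Ioc 0 (M ^ 100), bII M k * aL M j * cc D 1 (k * j) * (IA j v * IB (XX M) k v)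

lemma XX_pos (M : ℕ) (hM : 2 ≤ M) : 0 < XX M := by
  have : (0:ℝ) < M := by positivity
  unfold XX; positivity

lemma EE_eq (M D : ℕ) (hM : 2 ≤ M) (v : ℝ) :
    EE M D v = ∑ k ∈ Ico ⌈XX M / Real.exp v⌉₊ ⌈16 * (XX M / Real.exp v)⌉₊,
      ∑ j ∈ Ico (⌊Real.exp v⌋₊ + 1) (⌊16 * Real.exp v⌋₊ + 1), bII M k * aL M j * cc D 1 (k * j) := by
  have hX := XX_pos M hM
  have he := Real.exp_pos v
  set S := Ico ⌈XX M / Real.exp v⌉₊ ⌈16 * (XX M / Real.exp v)⌉₊ with hS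
  set T := Ico (⌊Real.exp v⌋₊ + 1) (⌊16 * Real.exp v⌋₊ + 1) with hT
  have hSp : ∀ k ∈ S, 0 < k := by
    intro k hk
    have := (mem_Ico.1 hk).1
    have h2 : 0 < ⌈XX M / Real.exp v⌉₊ := Nat.ceil_pos.2 (by positivity)
    omega
  have hTp : ∀ k ∈ T, 0 < k := by
    intro k hk
    have := (mem_Ico.1 hk).1
    omega
  have hle : ∀ k ∈ S, ∀ j ∈ T, k * j ≤ M ^ 100 := by
    intro k hk j hj
    have h1 : (k:ℝ) < 16 * (XX M / Real.exp v) := Nat.lt_ceil.1 (mem_Ico.1 hk).2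
    have h2 : (j:ℝ) ≤ 16 * Real.exp v := (Nat.le_floor_iff (by positivity)).1 (Nat.lt_add_one_iff.1 (mem_Ico.1 hj).2)
    have : (k:ℝ) * j ≤ (M:ℝ)^100 := by
      calc (k:ℝ) * j ≤ 16 * (XX M / Real.exp v) * (16 * Real.exp v) := by gcongr
        _ = 256 * XX M := by field_simp; norm_num
        _ = _ := by unfold XX; ring
    exact_mod_cast this
  rw [EE, ← sum_product', ← sum_product']
  symm
  apply sum_subset_zero_on_sdiff
  · rintro ⟨k, j⟩ hkj
    simp only [mem_product] at hkj
    obtain ⟨h1, h2⟩ := hkj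
    have := hle k h1 j h2
    have a1 := hSp k h1
    have a2 := hTp j h2
    simp only [mem_product, mem_Ioc]
    refine ⟨⟨a1, ?_⟩, a2, ?_⟩
    · exact le_trans (Nat.le_mul_of_pos_right k a2) this
    · exact le_trans (Nat.le_mul_of_pos_left j a1) this
  · rintro ⟨k, j⟩ hkj
    simp only [mem_sdiff, mem_product, mem_Ioc] at hkj
    simp only
    rw [IA_exp v j hkj.1.2.1, IB_exp _ hX v k hkj.1.1.1, ← hS, ← hT]
    by_cases h : j ∈ T
    · rw [if_neg (fun h' => hkj.2 ⟨h', h⟩)]; ring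
    · rw [if_neg h]; ring
  · rintro ⟨k, j⟩ hkj
    simp only [mem_product] at hkj
    simp only
    rw [IA_exp v j (hTp j hkj.2), IB_exp _ hX v k (hSp k hkj.1), ← hS, ← hT, if_pos hkj.1, if_pos hkj.2]; ring

lemma bII_zero (M : ℕ) (hM : 2 ≤ M) (k : ℕ) (hk : k ≤ M ^ 30) : bII M k = 0 := by
  unfold bII
  split_ifs with h
  · rfl
  · rw [bb_small hM k (by omega) hk, if_neg (by omega)]

lemma bII_sq (M k : ℕ) : bII M k ^ 2 ≤ bb M k ^ 2 := by
  unfold bII; split_ifs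
  · simp [sq_nonneg]
  · exact le_rfl

lemma EE_zero (M D : ℕ) (hM : 2 ≤ M) (v : ℝ)
    (hv : Real.exp v < (M:ℝ) ^ 35 / 16 ∨ XX M / Real.exp v < (M:ℝ) ^ 30 / 16) : EE M D v = 0 := by
  rw [EE_eq M D hM]
  refine sum_eq_zero fun k hk => sum_eq_zero fun j hj => ?_
  rcases hv with h | h
  · have h2 : (j:ℝ) ≤ 16 * Real.exp v := (Nat.le_floor_iff (by positivity)).1 (Nat.lt_add_one_iff.1 (mem_Ico.1 hj).2)
    have : j ≤ M ^ 35 := by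
      have : (j:ℝ) ≤ (M:ℝ)^35 := by linarith
      exact_mod_cast this
    rw [aL, if_neg (by omega)]; ring
  · have h1 : (k:ℝ) < 16 * (XX M / Real.exp v) := Nat.lt_ceil.1 (mem_Ico.1 hk).2
    have : k ≤ M ^ 30 := by
      have : (k:ℝ) ≤ (M:ℝ)^30 := by linarith
      exact_mod_cast this
    rw [bII_zero M hM k this]; ring

theorem EE_bound : ∃ C : ℝ, 0 < C ∧ ∀ M : ℕ, 16 ≤ M → ∀ G : Finset ℕ, Fam M G → ∀ v : ℝ,
    ∑ D ∈ G, (D.totient : ℝ) * |EE M D v| ≤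
      C * XX M / Real.sqrt (Real.log M) * (Set.Ico (0:ℝ) (100 * Real.log M)).indicator 1 v +
      1600 * XX M * Real.sqrt (Real.log M) * ∑ k ∈ Ioc 0 (M ^ 100), bb M k ^ 2 / k * IB (XX M) k v := by
  obtain ⟨C, hC, hA⟩ := varA
  refine ⟨C, hC, fun M hM G hG v => ?_⟩
  have hM2 : 2 ≤ M := by omega
  have hX := XX_pos M hM2
  have hl := logM_pos hM2
  have he := Real.exp_pos v
  have hM16 : (16:ℝ) ≤ M := by exact_mod_cast hM
  have hM0 : (0:ℝ) < M := by linarith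
  set θ := Real.sqrt (Real.log M) with hθ
  have hθ0 : 0 < θ := Real.sqrt_pos.2 hl
  have hIB : ∀ k, 0 ≤ IB (XX M) k v := fun k => Set.indicator_nonneg (fun _ _ => zero_le_one) v
  have hR2 : 0 ≤ 1600 * XX M * θ * ∑ k ∈ Ioc 0 (M ^ 100), bb M k ^ 2 / k * IB (XX M) k v := by
    apply mul_nonneg (by positivity)
    exact sum_nonneg fun k _ => mul_nonneg (by positivity) (hIB k)
  have hR1 : 0 ≤ (Set.Ico (0:ℝ) (100 * Real.log M)).indicator (1 : ℝ → ℝ) v :=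
    Set.indicator_nonneg (fun _ _ => zero_le_one) v
  by_cases hv : Real.exp v < (M:ℝ) ^ 35 / 16 ∨ XX M / Real.exp v < (M:ℝ) ^ 30 / 16
  · rw [sum_eq_zero (fun D _ => by rw [EE_zero M D hM2 v hv]; simp)]
    positivity
  simp only [not_or, not_lt] at hv
  obtain ⟨hv1, hv2⟩ := hv
  set y := Real.exp v with hy
  have hy1 : 1 ≤ y := by
    refine le_trans ?_ hv1
    rw [le_div_iff₀ (by norm_num), one_mul]
    exact hM16.trans (le_self_pow₀ (by linarith) (by norm_num))
  have hyX : y ≤ XX M := by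
    have h3 : 1 ≤ (M:ℝ) ^ 30 / 16 := by
      rw [le_div_iff₀ (by norm_num), one_mul]
      exact hM16.trans (le_self_pow₀ (by linarith) (by norm_num))
    have h4 := h3.trans hv2
    rwa [le_div_iff₀ he, one_mul] at h4
  have hXM : XX M < (M:ℝ)^100 := by
    unfold XX
    have : (0:ℝ) < (M:ℝ)^100 := by positivity
    linarith
  have hind : (Set.Ico (0:ℝ) (100 * Real.log M)).indicator (1 : ℝ → ℝ) v = 1 := by
    rw [Set.indicator_of_mem]; · rfl
    constructor
    · rw [← Real.log_exp v, ← hy]; exact Real.log_nonneg hy1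
    · rw [← Real.log_exp v, ← hy, show (100:ℝ) = ((100:ℕ):ℝ) by norm_num, ← Real.log_pow]
      exact Real.log_lt_log he (lt_of_le_of_lt hyX hXM)
  rw [hind, mul_one]
  set N' := XX M / y with hN'
  have hN0 : 0 < N' := by positivity
  have hyN : y * N' = XX M := by rw [hN']; field_simp
  set s := Ico (⌊y⌋₊ + 1) (⌊16 * y⌋₊ + 1) with hs
  set t := Ico ⌈N'⌉₊ ⌈16 * N'⌉₊ with ht
  have hvA := hA M hM G hG y hv1 (hyX.trans hXM.le)
  have hvB := varB M hM G hG N' hv2 (bII M)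
  set ε := N' / (y * θ) with hε
  have hε0 : 0 < ε := by positivity
  have key : ∀ D ∈ G, (D.totient : ℝ) * |EE M D v| ≤
      ε / 2 * (D.totient * VarD D s (aL M)) + ε⁻¹ / 2 * (D.totient * VarD D t (bII M)) := by
    intro D hD
    rw [EE_eq M D hM2 v]
    have := pairing_abs D (hG.two_le D hD) s t (aL M) (bII M) ε hε0
    calc _ ≤ (D.totient : ℝ) * ((ε * VarD D s (aL M) + ε⁻¹ * VarD D t (bII M)) / 2) := by gcongr
      _ = _ := by ring
  have hsumB : y * ∑ k ∈ t, bII M k ^ 2 ≤ 16 * XX M * ∑ k ∈ Ioc 0 (M ^ 100), bb M k ^ 2 / k * IB (XX M) k v := by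
    have htp : ∀ k ∈ t, 0 < k := by
      intro k hk
      have := (mem_Ico.1 hk).1
      have h2 : 0 < ⌈N'⌉₊ := Nat.ceil_pos.2 hN0
      omega
    have htsub : t ⊆ Ioc 0 (M ^ 100) := by
      intro k hk
      rw [mem_Ioc]
      refine ⟨htp k hk, ?_⟩
      have h1 : (k:ℝ) < 16 * N' := Nat.lt_ceil.1 (mem_Ico.1 hk).2
      have h2 : N' ≤ XX M := by rw [hN']; exact div_le_self hX.le hy1
      have : (k:ℝ) ≤ (M:ℝ)^100 := by
        have e : XX M * 256 = (M:ℝ)^100 := by unfold XX; ring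
        linarith
      exact_mod_cast this
    rw [mul_sum, mul_sum]
    calc _ ≤ ∑ k ∈ t, 16 * XX M * (bb M k ^ 2 / k * IB (XX M) k v) := by
          refine sum_le_sum fun k hk => ?_
          have hkp := htp k hk
          have hk0 : (0:ℝ) < k := by exact_mod_cast hkp
          rw [IB_exp _ hX v k hkp, if_pos hk, mul_one]
          have h1 : (k:ℝ) < 16 * N' := Nat.lt_ceil.1 (mem_Ico.1 hk).2
          have h2 : y ≤ 16 * XX M / k := by
            rw [le_div_iff₀ hk0, ← hyN]; nlinarith
          calc y * bII M k ^ 2 ≤ 16 * XX M / k * bb M k ^ 2 := by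
                exact mul_le_mul h2 (bII_sq M k) (sq_nonneg _) (by positivity)
            _ = _ := by ring
      _ ≤ _ := sum_le_sum_of_subset_of_nonneg htsub (fun k _ _ => mul_nonneg (by positivity) (mul_nonneg (by positivity) (hIB k)))
  calc _ ≤ ∑ D ∈ G, (ε / 2 * (D.totient * VarD D s (aL M)) + ε⁻¹ / 2 * (D.totient * VarD D t (bII M))) := sum_le_sum key
    _ = ε / 2 * ∑ D ∈ G, (D.totient * VarD D s (aL M)) + ε⁻¹ / 2 * ∑ D ∈ G, (D.totient * VarD D t (bII M)) := by
        rw [sum_add_distrib, mul_sum, mul_sum]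
    _ ≤ ε / 2 * (C * y ^ 2) + ε⁻¹ / 2 * (200 * N' * ∑ k ∈ t, bII M k ^ 2) := by
        gcongr
        exact hvA
    _ = C / 2 * (y * N') / θ + 100 * θ * (y * ∑ k ∈ t, bII M k ^ 2) := by
        rw [hε]; field_simp; ring
    _ ≤ C / 2 * (y * N') / θ + 100 * θ * (16 * XX M * ∑ k ∈ Ioc 0 (M ^ 100), bb M k ^ 2 / k * IB (XX M) k v) := by gcongr
    _ ≤ _ := by
        rw [hyN]
        have : C / 2 * XX M / θ ≤ C * XX M / θ := by gcongr; linarith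
        linarith

/-- type II sum -/
noncomputable def TII (M D : ℕ) : ℝ :=
  ∑ k ∈ Ioc 0 (M ^ 100), ∑ j ∈ Ioc 0 (M ^ 100), bII M k * aL M j * cc D 1 (k * j) * tent (XX M) (k * j)

lemma EE_int (M D : ℕ) : MeasureTheory.Integrable (EE M D) := by
  unfold EE
  exact MeasureTheory.integrable_finsetSum _ fun k _ => MeasureTheory.integrable_finsetSum _ fun j _ =>
    (IA_IB_int _ _ _).const_mul _

lemma TII_eq (M D : ℕ) (hM : 2 ≤ M) : TII M D = ∫ v, EE M D v := by
  unfold EE TII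
  rw [MeasureTheory.integral_finsetSum]
  swap
  · exact fun k _ => MeasureTheory.integrable_finsetSum _ fun j _ => (IA_IB_int _ _ _).const_mul _
  refine sum_congr rfl fun k hk => ?_
  rw [MeasureTheory.integral_finsetSum]
  swap
  · exact fun j _ => (IA_IB_int _ _ _).const_mul _
  refine sum_congr rfl fun j hj => ?_
  rw [MeasureTheory.integral_const_mul, tent_integral _ (XX_pos M hM) _ _ (mem_Ioc.1 hj).1 (mem_Ioc.1 hk).1]

theorem typeII : ∃ C : ℝ, 0 < C ∧ ∃ M0 : ℕ, ∀ M : ℕ, M0 ≤ M → ∀ G : Finset ℕ, Fam M G →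
    ∑ D ∈ G, (D.totient : ℝ) * |TII M D| ≤ C * XX M * Real.sqrt (Real.log M) := by
  obtain ⟨C, hC, hE⟩ := EE_bound
  obtain ⟨C2, hC2, M0, hb⟩ := bb_sq_div
  refine ⟨100 * C + 1600 * (C2 * Real.log 16), by have : 0 < Real.log 16 := Real.log_pos (by norm_num)
                                                  positivity, max M0 16, fun M hM G hG => ?_⟩
  have hM16 : 16 ≤ M := le_trans (le_max_right _ _) hM
  have hM2 : 2 ≤ M := by omega
  have hX := XX_pos M hM2
  have hl := logM_pos hM2
  have hb := hb M (le_trans (le_max_left _ _) hM)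
  have hE := hE M hM16 G hG
  set θ := Real.sqrt (Real.log M) with hθ
  have hθ0 : 0 < θ := Real.sqrt_pos.2 hl
  have hθ2 : θ * θ = Real.log M := Real.mul_self_sqrt hl.le
  have hβ : 0 < Real.log 16 := Real.log_pos (by norm_num)
  have hIBint : ∀ k, MeasureTheory.Integrable (IB (XX M) k) := fun k => integrable_ico _ _
  have hIBi : ∀ k, ∫ v, IB (XX M) k v = Real.log 16 := by
    intro k
    unfold IB
    rw [integral_ico, max_eq_left] <;> linarith
  have hi1 : MeasureTheory.Integrable (fun v => C * XX M / θ * (Set.Ico (0:ℝ) (100 * Real.log M)).indicator 1 v) :=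
    (integrable_ico _ _).const_mul _
  have hi2' : ∀ k ∈ Ioc 0 (M ^ 100), MeasureTheory.Integrable (fun v => bb M k ^ 2 / k * IB (XX M) k v) :=
    fun k _ => (hIBint k).const_mul _
  have hi2 : MeasureTheory.Integrable (fun v => 1600 * XX M * θ * ∑ k ∈ Ioc 0 (M ^ 100), bb M k ^ 2 / k * IB (XX M) k v) :=
    (MeasureTheory.integrable_finsetSum _ hi2').const_mul _
  have hiL : ∀ D ∈ G, MeasureTheory.Integrable (fun v => (D.totient : ℝ) * |EE M D v|) :=
    fun D _ => (EE_int M D).abs.const_mul _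
  calc _ ≤ ∑ D ∈ G, ∫ v, (D.totient : ℝ) * |EE M D v| := by
        refine sum_le_sum fun D _ => ?_
        rw [MeasureTheory.integral_const_mul, TII_eq M D hM2]
        gcongr
        exact MeasureTheory.abs_integral_le_integral_abs
    _ = ∫ v, ∑ D ∈ G, (D.totient : ℝ) * |EE M D v| := (MeasureTheory.integral_finsetSum _ hiL).symm
    _ ≤ ∫ v, (C * XX M / θ * (Set.Ico (0:ℝ) (100 * Real.log M)).indicator 1 v +
      1600 * XX M * θ * ∑ k ∈ Ioc 0 (M ^ 100), bb M k ^ 2 / k * IB (XX M) k v) :=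
        MeasureTheory.integral_mono (MeasureTheory.integrable_finsetSum _ hiL) (hi1.add hi2) hE
    _ = C * XX M / θ * (100 * Real.log M) + 1600 * XX M * θ * ∑ k ∈ Ioc 0 (M ^ 100), bb M k ^ 2 / k * Real.log 16 := by
        rw [MeasureTheory.integral_add hi1 hi2, MeasureTheory.integral_const_mul, MeasureTheory.integral_const_mul,
          MeasureTheory.integral_finsetSum _ hi2', integral_ico, max_eq_left (by linarith), sub_zero]
        congr 2
        refine sum_congr rfl fun k _ => ?_
        rw [MeasureTheory.integral_const_mul, hIBi]
    _ ≤ C * XX M / θ * (100 * (θ * θ)) + 1600 * XX M * θ * (C2 * Real.log 16) := by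
        rw [hθ2, ← sum_mul]; gcongr
    _ = _ := by field_simp

end LT

namespace LT
open Finset
open scoped ArithmeticFunction.Moebius ArithmeticFunction.vonMangoldt

lemma tent_nonneg (X : ℝ) (n : ℕ) : 0 ≤ tent X n := le_max_left _ _

lemma tent_le (X : ℝ) (n : ℕ) : tent X n ≤ Real.log 16 := by
  have : 0 < Real.log 16 := Real.log_pos (by norm_num)
  rw [tent]
  refine max_le this.le ?_
  rcases le_total (Real.log (n / X)) (Real.log 16) with h | h
  · exact (min_le_left _ _).trans h
  · exact (min_le_right _ _).trans (by linarith)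

lemma log256 : Real.log 256 = 2 * Real.log 16 := by
  rw [show (256:ℝ) = 16 ^ 2 by norm_num, Real.log_pow]; push_cast; ring

lemma tent_large (X : ℝ) (hX : 0 < X) (n : ℕ) (hn : 256 * X ≤ n) : tent X n = 0 := by
  rw [tent, max_eq_left]
  refine (min_le_right _ _).trans ?_
  have : Real.log 256 ≤ Real.log (n / X) := Real.log_le_log (by norm_num) (by rw [le_div_iff₀ hX]; exact hn)
  rw [log256] at this
  linarith

lemma tent_small (X : ℝ) (hX : 0 < X) (n : ℕ) (hn : n ≤ X) : tent X n = 0 := by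
  rw [tent, max_eq_left]
  refine (min_le_left _ _).trans ?_
  apply Real.log_nonpos (by positivity)
  rw [div_le_one hX]; exact hn

lemma tent_diff (X : ℝ) (hX : 1 ≤ X) (n : ℕ) : |tent X (n + 1) - tent X n| ≤ 1 / n := by
  have hX0 : 0 < X := by linarith
  rcases Nat.eq_zero_or_pos n with h | h
  · subst h
    rw [tent_small X hX0 (0 + 1) (by simpa using hX), tent_small X hX0 0 (by simpa using hX0.le)]
    simp
  · have hn : (0:ℝ) < n := by exact_mod_cast h
    have e : Real.log (((n + 1 : ℕ) : ℝ) / X) - Real.log (n / X) = Real.log (1 + 1 / n) := by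
      rw [← Real.log_div (by positivity) (by positivity)]
      congr 1; push_cast; field_simp
    have h1 : Real.log (1 + 1 / (n:ℝ)) ≤ 1 / n := by
      have := Real.log_le_sub_one_of_pos (show 0 < 1 + 1 / (n:ℝ) by positivity)
      linarith
    have h2 : 0 ≤ Real.log (1 + 1 / (n:ℝ)) := Real.log_nonneg (by
      have : 0 ≤ 1 / (n:ℝ) := by positivity
      linarith)
    rw [tent, tent]
    set s := Real.log (((n + 1 : ℕ) : ℝ) / X)
    set t := Real.log ((n : ℝ) / X)
    rw [abs_le]
    constructor <;>
    · simp only [max_def, min_def]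
      split_ifs <;> linarith

lemma Disc.add {s : Finset ℕ} {f g : ℕ → ℝ} {K L : ℝ} (h : Disc s f K) (h2 : Disc s g L) :
    Disc s (fun n => f n + g n) (K + L) := by
  intro q hq a b ha hb
  have e : ∀ c, ∑ n ∈ s, (if n % q = c % q then f n + g n else 0) =
      ∑ n ∈ s, (if n % q = c % q then f n else 0) + ∑ n ∈ s, (if n % q = c % q then g n else 0) := by
    intro c
    rw [← sum_add_distrib]
    exact sum_congr rfl fun n _ => by split_ifs <;> simp
  rw [e, e]
  have h1 := h q hq a b ha hb
  have h3 := h2 q hq a b ha hb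
  rw [abs_le] at *
  constructor <;> linarith

lemma conv_id (M n : ℕ) (hM : 2 ≤ M) (hn : 0 < n) :
    ∑ k ∈ n.divisors, bb M k * aL M (n / k) =
      ∑ d ∈ n.divisors, lam M d * ∑ m ∈ (n / d).divisors, aL M m := by
  let lA : ArithmeticFunction ℝ := ⟨fun d => if d = 0 then 0 else lam M d, by simp⟩
  let aA : ArithmeticFunction ℝ := ⟨aL M, by simp [aL]⟩
  have hl : ∀ d, 0 < d → lA d = lam M d := fun d hd => by
    change (if d = 0 then 0 else lam M d) = _
    rw [if_neg hd.ne']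
  have ha : ∀ d, aA d = aL M d := fun d => rfl
  have h1 := congrArg (fun f : ArithmeticFunction ℝ => f n) (mul_assoc lA (ArithmeticFunction.zeta : ArithmeticFunction ℝ) aA)
  simp only [ArithmeticFunction.mul_apply (f := lA * _), ArithmeticFunction.mul_apply (f := lA) (g := _ * aA)] at h1
  rw [Nat.sum_divisorsAntidiagonal (fun a b => (lA * (ArithmeticFunction.zeta : ArithmeticFunction ℝ)) a * aA b),
    Nat.sum_divisorsAntidiagonal (fun a b => lA a * ((ArithmeticFunction.zeta : ArithmeticFunction ℝ) * aA) b)] at h1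
  refine Eq.trans ?_ (h1.trans ?_)
  · refine sum_congr rfl fun k hk => ?_
    rw [ArithmeticFunction.coe_mul_zeta_apply, ha, bb]
    congr 1
    exact sum_congr rfl fun d hd => (hl d (Nat.pos_of_mem_divisors hd)).symm
  · refine sum_congr rfl fun d hd => ?_
    rw [ArithmeticFunction.coe_zeta_mul_apply, hl d (Nat.pos_of_mem_divisors hd)]
    rfl

lemma aL_sum (M e : ℕ) (he : 0 < e) :
    ∑ m ∈ e.divisors, aL M m = Real.log e - ∑ m ∈ Ioc 0 (M ^ 35), (if m ∣ e then Λ m else 0) := by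
  rw [← ArithmeticFunction.vonMangoldt_sum, ← sum_filter]
  have : (Ioc 0 (M ^ 35)).filter (· ∣ e) = e.divisors.filter (· ≤ M ^ 35) := by
    ext m
    simp only [mem_filter, mem_Ioc, Nat.mem_divisors]
    constructor
    · rintro ⟨⟨h1, h2⟩, h3⟩; exact ⟨⟨h3, he.ne'⟩, h2⟩
    · rintro ⟨⟨h3, _⟩, h2⟩; exact ⟨⟨Nat.pos_of_dvd_of_pos h3 he, h2⟩, h3⟩
  rw [this, sum_filter, ← sum_sub_distrib]
  refine sum_congr rfl fun m _ => ?_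
  rw [aL]
  by_cases h : m ≤ M ^ 35
  · rw [if_neg (by omega), if_pos h]; ring
  · rw [if_pos (by omega), if_neg h]; ring

lemma conv_expand (M n : ℕ) (hM : 2 ≤ M) (hn : 0 < n) (t : ℝ) :
    t * ∑ k ∈ n.divisors, bb M k * aL M (n / k) =
      (∑ d ∈ Ioc 0 (M ^ 35), lam M d * (if d ∣ n then t * Real.log n else 0) +
      ∑ d ∈ Ioc 0 (M ^ 35), (-(lam M d * Real.log d)) * (if d ∣ n then t else 0)) +
      ∑ p ∈ Ioc 0 (M ^ 35) ×ˢ Ioc 0 (M ^ 35), (-(lam M p.1 * Λ p.2)) * (if p.1 * p.2 ∣ n then t else 0) := by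
  rw [conv_id M n hM hn, sum_product, ← sum_add_distrib, ← sum_add_distrib]
  have e1 : ∑ d ∈ n.divisors, lam M d * ∑ m ∈ (n / d).divisors, aL M m =
      ∑ d ∈ Ioc 0 (M ^ 35), if d ∣ n then lam M d * ∑ m ∈ (n / d).divisors, aL M m else 0 := by
    rw [← sum_filter]
    symm
    apply sum_subset_zero_on_sdiff
    · intro d hd
      simp only [mem_filter, mem_Ioc, Nat.mem_divisors] at *
      exact ⟨hd.2, hn.ne'⟩
    · intro d hd
      simp only [mem_sdiff, mem_filter, mem_Ioc, Nat.mem_divisors] at hd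
      have h1 := Nat.pos_of_dvd_of_pos hd.1.1 hn
      have h2 : M ^ 35 < d := by
        by_contra h
        exact hd.2 ⟨⟨h1, by omega⟩, hd.1.1⟩
      rw [lam_zero hM d h2, zero_mul]
    · intros; rfl
  rw [e1, mul_sum]
  refine sum_congr rfl fun d hd => ?_
  have hd0 := (mem_Ioc.1 hd).1
  by_cases hdn : d ∣ n
  · simp only [if_pos hdn]
    obtain ⟨e, rfl⟩ := hdn
    have he : 0 < e := Nat.pos_of_mul_pos_left hn
    rw [Nat.mul_div_cancel_left e hd0, aL_sum M e he]
    have h3 : ∀ m, (d * m ∣ d * e) ↔ m ∣ e := fun m => Nat.mul_dvd_mul_iff_left hd0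
    simp only [h3]
    have h4 : Real.log ((d * e : ℕ) : ℝ) = Real.log d + Real.log e := by
      push_cast; rw [Real.log_mul (by positivity) (by positivity)]
    rw [h4]
    have h5 : ∑ x ∈ Ioc 0 (M ^ 35), -(lam M d * Λ x) * (if x ∣ e then t else 0) =
        - (t * lam M d) * ∑ m ∈ Ioc 0 (M ^ 35), (if m ∣ e then Λ m else 0) := by
      rw [mul_sum]
      refine sum_congr rfl fun m _ => by split_ifs <;> ring
    rw [h5]; ring
  · simp only [if_neg hdn, mul_zero]
    rw [sum_eq_zero]; · simp
    intro m _
    rw [if_neg (fun h => hdn (dvd_trans (dvd_mul_right d m) h)), mul_zero]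

/-- type I function -/
noncomputable def FI (M n : ℕ) : ℝ := tent (XX M) n * ∑ k ∈ n.divisors, bb M k * aL M (n / k)

lemma XX_ge (M : ℕ) (hM : 16 ≤ M) : (M:ℝ) ^ 98 ≤ XX M := by
  have hM' : (16:ℝ) ≤ M := by exact_mod_cast hM
  unfold XX
  rw [le_div_iff₀ (by norm_num)]
  calc (M:ℝ)^98 * 256 ≤ (M:ℝ)^98 * (M:ℝ)^2 := by
        gcongr
        nlinarith
    _ = _ := by ring

lemma typeI (M : ℕ) (hM : 16 ≤ M) : Disc (range (M ^ 100)) (FI M) ((M:ℝ) ^ 77) := by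
  have hM2 : 2 ≤ M := by omega
  have hX := XX_pos M hM2
  have hl := logM_pos hM2
  have hlM := log_le_self' M (by omega)
  have hM16 : (16:ℝ) ≤ M := by exact_mod_cast hM
  have hM1 : (1:ℝ) ≤ M := by linarith
  have hM0 : (0:ℝ) < M := by linarith
  have hX1 : 1 ≤ XX M := le_trans (one_le_pow₀ hM1) (XX_ge M hM)
  have hlarge : ∀ n : ℕ, M ^ 100 ≤ n → tent (XX M) n = 0 := by
    intro n hn
    apply tent_large _ hX
    have : (M:ℝ)^100 ≤ n := by exact_mod_cast hn
    unfold XX; linarith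
  have hsum : ∑ n ∈ range (M ^ 100), (1:ℝ) / n ≤ 101 * M := by
    calc _ ≤ ∑ n ∈ insert 0 (Ioc 0 (M ^ 100)), (1:ℝ) / n := by
          apply sum_le_sum_of_subset_of_nonneg
          · intro n hn; simp only [mem_range, mem_insert, mem_Ioc] at *; omega
          · intros; positivity
      _ = ∑ n ∈ Ioc 0 (M ^ 100), (1:ℝ) / n := by rw [sum_insert (by simp)]; simp
      _ ≤ 1 + Real.log ((M:ℝ)^100) := sum_inv_le _ _ (one_le_pow₀ hM1) (by push_cast; exact le_rfl)
      _ ≤ _ := by rw [Real.log_pow]; push_cast; linarith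
  have hK0 : ∑ n ∈ range (M ^ 100), |tent (XX M) (n + 1) - tent (XX M) n| ≤ (M:ℝ)^3 := by
    calc _ ≤ ∑ n ∈ range (M ^ 100), (1:ℝ) / n := sum_le_sum fun n _ => tent_diff _ hX1 n
      _ ≤ 101 * M := hsum
      _ ≤ _ := by nlinarith [mul_le_mul hM16 hM16 (by norm_num) hM0.le]
  have hlogn : ∀ n : ℕ, n ≤ M ^ 100 → Real.log n ≤ 100 * Real.log M := by
    intro n hn
    rcases Nat.eq_zero_or_pos n with h | h
    · subst h; simp; positivity
    · have : Real.log n ≤ Real.log ((M:ℝ)^100) := Real.log_le_log (by exact_mod_cast h) (by exact_mod_cast hn)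
      rwa [Real.log_pow] at this
  have h16 : Real.log 16 ≤ Real.log M := Real.log_le_log (by norm_num) hM16
  have hK1 : ∑ n ∈ range (M ^ 100), |tent (XX M) (n + 1) * Real.log ((n + 1 : ℕ) : ℝ) - tent (XX M) n * Real.log n| ≤ (M:ℝ)^6 := by
    calc _ ≤ ∑ n ∈ range (M ^ 100), (1:ℝ) / n * (101 * M) := by
          refine sum_le_sum fun n hn => ?_
          rcases Nat.eq_zero_or_pos n with h | h
          · subst h; simp
          have hn0 : (0:ℝ) < n := by exact_mod_cast h
          have hd := tent_diff (XX M) hX1 n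
          have hL := hlogn (n + 1) (by have := mem_range.1 hn; omega)
          have hL0 : 0 ≤ Real.log ((n + 1 : ℕ) : ℝ) := Real.log_natCast_nonneg _
          have h1 : |Real.log ((n + 1 : ℕ) : ℝ) - Real.log n| ≤ 1 / n := by
            rw [← Real.log_div (by positivity) (by positivity), show ((n + 1 : ℕ) : ℝ) / n = 1 + 1 / n by push_cast; field_simp]
            have h2 : 0 ≤ Real.log (1 + 1 / (n:ℝ)) := Real.log_nonneg (by
              have : 0 ≤ 1 / (n:ℝ) := by positivity
              linarith)
            rw [abs_of_nonneg h2]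
            have := Real.log_le_sub_one_of_pos (show 0 < 1 + 1 / (n:ℝ) by positivity)
            linarith
          have e : tent (XX M) (n + 1) * Real.log ((n + 1 : ℕ) : ℝ) - tent (XX M) n * Real.log n =
            (tent (XX M) (n + 1) - tent (XX M) n) * Real.log ((n + 1 : ℕ) : ℝ) +
              tent (XX M) n * (Real.log ((n + 1 : ℕ) : ℝ) - Real.log n) := by ring
          rw [e]
          refine (abs_add_le _ _).trans ?_
          rw [abs_mul, abs_mul, abs_of_nonneg hL0, abs_of_nonneg (tent_nonneg _ _)]
          calc _ ≤ 1 / (n:ℝ) * (100 * Real.log M) + Real.log 16 * (1 / n) := by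
                gcongr
                exact tent_le _ _
            _ = 1 / (n:ℝ) * (100 * Real.log M + Real.log 16) := by ring
            _ ≤ _ := by gcongr; linarith
      _ = (∑ n ∈ range (M ^ 100), (1:ℝ) / n) * (101 * M) := by rw [sum_mul]
      _ ≤ (101 * M) * (101 * M) := by gcongr
      _ = (101 * 101) * (M:ℝ)^2 := by ring
      _ ≤ (M:ℝ)^4 * (M:ℝ)^2 := by
          gcongr
          calc (101 * 101 : ℝ) ≤ 16 ^ 4 := by norm_num
            _ ≤ _ := by gcongr
      _ = _ := by ring
  have hcard : ((Ioc 0 (M ^ 35)).card : ℝ) = (M:ℝ)^35 := by simp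
  have hlogd : ∀ d ∈ Ioc 0 (M ^ 35), |Real.log (d:ℝ)| ≤ 35 * M := by
    intro d hd
    rw [abs_of_nonneg (Real.log_natCast_nonneg _)]
    have : Real.log d ≤ Real.log ((M:ℝ)^35) := Real.log_le_log (by exact_mod_cast (mem_Ioc.1 hd).1) (by exact_mod_cast (mem_Ioc.1 hd).2)
    rw [Real.log_pow] at this
    push_cast at this; linarith
  have d1 := Disc.sum (s := range (M ^ 100)) (Ioc 0 (M ^ 35)) (fun d n => if d ∣ n then tent (XX M) n * Real.log n else 0)
    (fun _ => (M:ℝ)^6) (lam M) (fun d hd => (disc_dvd (fun n => tent (XX M) n * Real.log n) (M ^ 100)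
      (fun n hn => by rw [hlarge n hn, zero_mul]) d (mem_Ioc.1 hd).1).mono hK1)
  have d2 := Disc.sum (s := range (M ^ 100)) (Ioc 0 (M ^ 35)) (fun d n => if d ∣ n then tent (XX M) n else 0)
    (fun _ => (M:ℝ)^3) (fun d => -(lam M d * Real.log d)) (fun d hd => (disc_dvd (fun n => tent (XX M) n) (M ^ 100)
      (fun n hn => hlarge n hn) d (mem_Ioc.1 hd).1).mono hK0)
  have d3 := Disc.sum (s := range (M ^ 100)) (Ioc 0 (M ^ 35) ×ˢ Ioc 0 (M ^ 35)) (fun p n => if p.1 * p.2 ∣ n then tent (XX M) n else 0)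
    (fun _ => (M:ℝ)^3) (fun p => -(lam M p.1 * Λ p.2)) (fun p hp => (disc_dvd (fun n => tent (XX M) n) (M ^ 100)
      (fun n hn => hlarge n hn) (p.1 * p.2) (Nat.mul_pos (mem_Ioc.1 (mem_product.1 hp).1).1 (mem_Ioc.1 (mem_product.1 hp).2).1)).mono hK0)
  refine (((d1.add d2).add d3).congr ?_).mono ?_
  · intro n _
    rcases Nat.eq_zero_or_pos n with h | h
    · subst h
      have : tent (XX M) 0 = 0 := tent_small _ hX 0 (by simpa using hX.le)
      simp [FI, this]
    · rw [FI, conv_expand M n hM2 h]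
  · have b1 : ∑ d ∈ Ioc 0 (M ^ 35), |lam M d| * (M:ℝ)^6 ≤ (M:ℝ)^35 * (M:ℝ)^6 := by
      rw [← sum_mul]
      gcongr
      calc _ ≤ ∑ d ∈ Ioc 0 (M ^ 35), (1:ℝ) := sum_le_sum fun d hd => abs_lam hM2 d (mem_Ioc.1 hd).1
        _ = _ := by simp
    have b2 : ∑ d ∈ Ioc 0 (M ^ 35), |-(lam M d * Real.log d)| * (M:ℝ)^3 ≤ (M:ℝ)^35 * (35 * M) * (M:ℝ)^3 := by
      rw [← sum_mul]
      gcongr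
      calc _ ≤ ∑ d ∈ Ioc 0 (M ^ 35), (35 * M : ℝ) := sum_le_sum fun d hd => by
            rw [abs_neg, abs_mul]
            have := abs_lam hM2 d (mem_Ioc.1 hd).1
            calc |lam M d| * |Real.log (d:ℝ)| ≤ 1 * (35 * M) := by gcongr; exact hlogd d hd
              _ = _ := one_mul _
        _ = _ := by rw [sum_const, nsmul_eq_mul, hcard]
    have b3 : ∑ p ∈ Ioc 0 (M ^ 35) ×ˢ Ioc 0 (M ^ 35), |-(lam M p.1 * Λ p.2)| * (M:ℝ)^3 ≤ ((M:ℝ)^35 * (M:ℝ)^35) * (35 * M) * (M:ℝ)^3 := by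
      rw [← sum_mul]
      gcongr
      calc _ ≤ ∑ p ∈ Ioc 0 (M ^ 35) ×ˢ Ioc 0 (M ^ 35), (35 * M : ℝ) := sum_le_sum fun p hp => by
            rw [mem_product] at hp
            rw [abs_neg, abs_mul]
            have h1 := abs_lam hM2 p.1 (mem_Ioc.1 hp.1).1
            have h2 := hlogd p.2 hp.2
            have h3 : |Λ p.2| ≤ 35 * M := by
              rw [abs_of_nonneg ArithmeticFunction.vonMangoldt_nonneg]
              exact ArithmeticFunction.vonMangoldt_le_log.trans ((le_abs_self _).trans h2)
            calc |lam M p.1| * |Λ p.2| ≤ 1 * (35 * M) := by gcongr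
              _ = _ := one_mul _
        _ = _ := by rw [sum_const, nsmul_eq_mul, card_product]; push_cast; rw [hcard]
    have c1 : (M:ℝ)^35 * (M:ℝ)^6 ≤ (M:ℝ)^74 := by
      rw [← pow_add]; exact pow_le_pow_right₀ hM1 (by norm_num)
    have c2 : (M:ℝ)^35 * (35 * M) * (M:ℝ)^3 ≤ 35 * (M:ℝ)^74 := by
      calc _ = 35 * (M:ℝ)^39 := by ring
        _ ≤ _ := by gcongr <;> norm_num
    have c3 : ((M:ℝ)^35 * (M:ℝ)^35) * (35 * M) * (M:ℝ)^3 = 35 * (M:ℝ)^74 := by ring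
    have c4 : 71 * (M:ℝ)^74 ≤ (M:ℝ)^77 := by
      calc 71 * (M:ℝ)^74 ≤ (M:ℝ)^3 * (M:ℝ)^74 := by
            gcongr
            calc (71:ℝ) ≤ 16 ^ 3 := by norm_num
              _ ≤ _ := by gcongr
        _ = _ := by ring
    linarith

end LT

namespace LT
open Finset
open scoped ArithmeticFunction.Moebius ArithmeticFunction.vonMangoldt

lemma aL_decomp (M n : ℕ) (hM : 2 ≤ M) (hn : 0 < n) :
    aL M n = ∑ k ∈ n.divisors, bb M k * aL M (n / k) - ∑ k ∈ n.divisors, bII M k * aL M (n / k) := by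
  rw [← sum_sub_distrib]
  rw [sum_eq_single 1]
  · have : bb M 1 = 1 := by
      rw [bb_small hM 1 one_pos (Nat.one_le_pow _ _ (by omega))]; simp
    rw [this, bII, if_pos le_rfl]; simp
  · intro k hk hk1
    have := Nat.pos_of_mem_divisors hk
    rw [bII, if_neg (by omega)]; ring
  · intro h; exact absurd (Nat.one_mem_divisors.2 hn.ne') h

lemma tent_large' (M : ℕ) (hM : 2 ≤ M) (n : ℕ) (hn : M ^ 100 ≤ n) : tent (XX M) n = 0 := by
  apply tent_large _ (XX_pos M hM)
  have : (M:ℝ)^100 ≤ n := by exact_mod_cast hn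
  unfold XX; linarith

lemma TII_alt (M D : ℕ) (hM : 2 ≤ M) :
    TII M D = ∑ n ∈ Ioc 0 (M ^ 100), tent (XX M) n * (∑ k ∈ n.divisors, bII M k * aL M (n / k)) * cc D 1 n := by
  have h := hyper (fun k j => bII M k * aL M j * cc D 1 (k * j) * tent (XX M) (k * j)) (M ^ 100)
  rw [TII]
  refine Eq.trans (Eq.trans ?_ h.symm) ?_
  · refine sum_congr rfl fun k hk => ?_
    have hk0 := (mem_Ioc.1 hk).1
    symm
    apply sum_subset_zero_on_sdiff
    · intro j hj
      simp only [mem_Ioc] at *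
      exact ⟨hj.1, hj.2.trans (Nat.div_le_self _ _)⟩
    · intro j hj
      simp only [mem_sdiff, mem_Ioc] at hj
      have h1 : M ^ 100 / k < j := by
        by_contra h1
        exact hj.2 ⟨hj.1.1, by omega⟩
      rw [Nat.div_lt_iff_lt_mul hk0] at h1
      rw [tent_large' M hM (k * j) (by rw [mul_comm]; exact h1.le), mul_zero]
    · intros; rfl
  · refine sum_congr rfl fun n hn => ?_
    rw [mul_sum, sum_mul]
    refine sum_congr rfl fun k hk => ?_
    rw [Nat.mul_div_cancel' (Nat.dvd_of_mem_divisors hk)]; ring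

lemma sum_cc (D : ℕ) (s : Finset ℕ) (f : ℕ → ℝ) :
    ∑ n ∈ s, f n * cc D 1 n = ∑ n ∈ s, (if n % D = 1 then f n else 0) -
      (1 / (D.totient : ℝ)) * ∑ n ∈ s, (if n.Coprime D then f n else 0) := by
  rw [mul_sum, ← sum_sub_distrib]
  refine sum_congr rfl fun n _ => ?_
  rw [cc]
  split_ifs <;> ring

lemma main_id (M D : ℕ) (hM : 2 ≤ M) :
    ∑ n ∈ Ioc 0 (M ^ 100), (tent (XX M) n * aL M n) * cc D 1 n =
      ∑ n ∈ Ioc 0 (M ^ 100), FI M n * cc D 1 n - TII M D := by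
  rw [TII_alt M D hM, ← sum_sub_distrib]
  refine sum_congr rfl fun n hn => ?_
  rw [aL_decomp M n hM (mem_Ioc.1 hn).1, FI]; ring

lemma FI_small (M D : ℕ) (hM : 16 ≤ M) (hD : 2 ≤ D) : |∑ n ∈ Ioc 0 (M ^ 100), FI M n * cc D 1 n| ≤ (M:ℝ) ^ 77 := by
  have hM2 : 2 ≤ M := by omega
  have h := (typeI M hM).avg D (by omega) 1 (Nat.coprime_one_left D)
  rw [Nat.mod_eq_of_lt (show 1 < D by omega), ← sum_cc] at h
  have e : ∑ n ∈ Ioc 0 (M ^ 100), FI M n * cc D 1 n = ∑ n ∈ range (M ^ 100), FI M n * cc D 1 n := by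
    have e1 : ∑ n ∈ range (M ^ 100 + 1), FI M n * cc D 1 n = ∑ n ∈ range (M ^ 100), FI M n * cc D 1 n := by
      rw [sum_range_succ, FI, tent_large' M hM2 _ le_rfl]; ring
    rw [← e1]
    apply sum_subset_zero_on_sdiff
    · intro n hn; simp only [mem_Ioc, mem_range] at *; omega
    · intro n hn
      simp only [mem_sdiff, mem_Ioc, mem_range] at hn
      have : n = 0 := by omega
      subst this
      simp [FI]
    · intros; rfl
  rw [e]; exact h

lemma main_lower : ∃ M0 : ℕ, ∀ M : ℕ, M0 ≤ M → ∀ D : ℕ, 2 ≤ D → D ≤ M ^ 12 →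
    26 * XX M ≤ ∑ n ∈ Ioc 0 (M ^ 100), (if n.Coprime D then tent (XX M) n * aL M n else 0) := by
  obtain ⟨Y0, hY0, hθ⟩ := theta_lower
  refine ⟨max 16 ⌈Y0⌉₊, fun M hM D hD hDM => ?_⟩
  have hM16 : 16 ≤ M := le_trans (le_max_left _ _) hM
  have hM2 : 2 ≤ M := by omega
  have hX := XX_pos M hM2
  have hM' : (16:ℝ) ≤ M := by exact_mod_cast hM16
  have hM1 : (1:ℝ) ≤ M := by linarith
  have hX98 := XX_ge M hM16
  have hMY : Y0 ≤ M := (Nat.le_ceil _).trans (by exact_mod_cast (le_max_right _ _).trans hM)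
  have hMX : (M:ℝ) ≤ XX M := (le_self_pow₀ hM1 (by norm_num)).trans hX98
  have h1 := hθ (64 * XX M) (by linarith)
  have h2 := Chebyshev.theta_le_log4_mul_x (show 0 ≤ 4 * XX M by positivity)
  have hlog4 : Real.log 4 ≤ 1.4 := by
    rw [show (4:ℝ) = 2 ^ 2 by norm_num, Real.log_pow]
    have := Real.log_two_lt_d9
    push_cast; linarith
  have hlog4' : 1 ≤ Real.log 4 := by
    rw [show (4:ℝ) = 2 ^ 2 by norm_num, Real.log_pow]
    have := Real.log_two_gt_d9
    push_cast; linarith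
  have hlog16 : Real.log 16 = 2 * Real.log 4 := by
    rw [show (16:ℝ) = 4 ^ 2 by norm_num, Real.log_pow]; push_cast; ring
  have hlog64 : Real.log 64 = 3 * Real.log 4 := by
    rw [show (64:ℝ) = 4 ^ 3 by norm_num, Real.log_pow]; push_cast; ring
  have e3 : Chebyshev.theta (64 * XX M) - Chebyshev.theta (4 * XX M) =
      ∑ p ∈ (Ioc ⌊4 * XX M⌋₊ ⌊64 * XX M⌋₊).filter Nat.Prime, Real.log p := by
    rw [Chebyshev.theta, Chebyshev.theta, sub_eq_iff_eq_add, sum_filter, sum_filter, sum_filter, add_comm]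
    exact (sum_Ioc_consecutive _ (Nat.zero_le _) (Nat.floor_mono (by linarith))).symm
  calc 26 * XX M ≤ Chebyshev.theta (64 * XX M) - Chebyshev.theta (4 * XX M) := by nlinarith
    _ = _ := e3
    _ ≤ ∑ p ∈ (Ioc ⌊4 * XX M⌋₊ ⌊64 * XX M⌋₊).filter Nat.Prime, (if p.Coprime D then tent (XX M) p * aL M p else 0) := by
        refine sum_le_sum fun p hp => ?_
        simp only [mem_filter, mem_Ioc] at hp
        obtain ⟨⟨hp1, hp2⟩, hp⟩ := hp
        have hp1 : 4 * XX M < p := (Nat.floor_lt (by positivity)).1 hp1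
        have hp2 : (p:ℝ) ≤ 64 * XX M := (Nat.le_floor_iff (by positivity)).1 hp2
        have hp0 : (0:ℝ) < p := by exact_mod_cast hp.pos
        have h98 : M ^ 98 < p := by
          have : (M:ℝ)^98 < p := by linarith
          exact_mod_cast this
        have hcop : p.Coprime D := by
          rw [Nat.Prime.coprime_iff_not_dvd hp]
          intro h
          have := Nat.le_of_dvd (by omega) h
          have : M ^ 12 ≤ M ^ 98 := Nat.pow_le_pow_right (by omega) (by norm_num)
          omega
        have hM35 : M ^ 35 < p := lt_of_le_of_lt (Nat.pow_le_pow_right (by omega) (by norm_num)) h98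
        rw [if_pos hcop, aL, if_pos hM35, ArithmeticFunction.vonMangoldt_apply_prime hp]
        have ht : 1 ≤ tent (XX M) p := by
          rw [tent]
          refine le_trans ?_ (le_max_right _ _)
          have q1 : Real.log 4 ≤ Real.log (p / XX M) := Real.log_le_log (by norm_num) (by
            rw [le_div_iff₀ hX]; exact hp1.le)
          have q2 : Real.log (p / XX M) ≤ Real.log 64 := Real.log_le_log (by positivity) (by
            rw [div_le_iff₀ hX]; exact hp2)
          apply le_min <;> linarith
        have : 0 ≤ Real.log (p:ℝ) := Real.log_natCast_nonneg p
        nlinarith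
    _ ≤ _ := by
        apply sum_le_sum_of_subset_of_nonneg
        · intro p hp
          simp only [mem_filter, mem_Ioc] at *
          refine ⟨hp.2.pos, ?_⟩
          have hp2 : (p:ℝ) ≤ 64 * XX M := (Nat.le_floor_iff (by positivity)).1 hp.1.2
          have : (p:ℝ) ≤ (M:ℝ)^100 := by
            have : XX M * 256 = (M:ℝ)^100 := by unfold XX; ring
            linarith
          exact_mod_cast this
        · intro n _ _
          split_ifs
          · apply mul_nonneg (tent_nonneg _ _)
            rw [aL]; split_ifs <;> [exact ArithmeticFunction.vonMangoldt_nonneg; exact le_rfl]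
          · exact le_rfl

lemma class_upper (M D : ℕ) (hM : 16 ≤ M) (hno : ∀ q : ℕ, q.Prime → q ≤ M ^ 100 → ¬ q % D = 1) :
    ∑ n ∈ Ioc 0 (M ^ 100), (if n % D = 1 then tent (XX M) n * aL M n else 0) ≤ (M:ℝ) ^ 54 := by
  have hM2 : 2 ≤ M := by omega
  have hl := logM_pos hM2
  have hlM := log_le_self' M (by omega)
  have hM' : (16:ℝ) ≤ M := by exact_mod_cast hM
  have hM1 : (1:ℝ) ≤ M := by linarith
  have hβ : 0 < Real.log 16 := Real.log_pos (by norm_num)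
  have hβ2 : Real.log 16 ≤ M := (Real.log_le_log (by norm_num) hM').trans hlM
  calc _ ≤ ∑ n ∈ Ioc 0 (M ^ 100), Real.log 16 * (if n.Prime then 0 else Λ n) := by
        refine sum_le_sum fun n hn => ?_
        have hΛ := ArithmeticFunction.vonMangoldt_nonneg (n := n)
        by_cases hp : n.Prime
        · rw [if_neg (hno n hp (mem_Ioc.1 hn).2), if_pos hp, mul_zero]
        · rw [if_neg hp]
          have ht := tent_nonneg (XX M) n
          have ht2 := tent_le (XX M) n
          rw [aL]
          split_ifs
          · gcongr
          · rw [mul_zero]; positivity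
          · positivity
    _ = Real.log 16 * (Chebyshev.psi ((M:ℝ)^100) - Chebyshev.theta ((M:ℝ)^100)) := by
        rw [← mul_sum, Chebyshev.psi_sub_theta_eq_sum_not_prime, sum_filter,
          show ⌊(M:ℝ)^100⌋₊ = M ^ 100 by exact_mod_cast Nat.floor_natCast (M ^ 100)]
        congr 1
        exact sum_congr rfl fun n _ => by split_ifs <;> rfl
    _ ≤ Real.log 16 * (2 * Real.sqrt ((M:ℝ)^100) * Real.log ((M:ℝ)^100)) := by
        gcongr
        exact Chebyshev.psi_sub_theta_le (one_le_pow₀ hM1)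
    _ = Real.log 16 * (2 * (M:ℝ)^50 * (100 * Real.log M)) := by
        rw [Real.log_pow, show (M:ℝ)^100 = ((M:ℝ)^50)^2 by ring, Real.sqrt_sq (by positivity)]; push_cast; ring
    _ ≤ M * (2 * (M:ℝ)^50 * (100 * M)) := by gcongr
    _ = 200 * (M:ℝ)^52 := by ring
    _ ≤ (M:ℝ)^2 * (M:ℝ)^52 := by
        gcongr
        nlinarith
    _ = _ := by ring

theorem core : ∃ M0 : ℕ, ∀ M : ℕ, M0 ≤ M → ∀ G : Finset ℕ, Fam M G → (Real.log M) ^ (3/4 : ℝ) ≤ G.card →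
    ∃ D ∈ G, ∃ q : ℕ, q.Prime ∧ q ≤ M ^ 100 ∧ q % D = 1 := by
  obtain ⟨C, hC, M1, h2⟩ := typeII
  obtain ⟨M2, hml⟩ := main_lower
  have hlim : Filter.Tendsto (fun M : ℕ => (Real.log M) ^ (1/4 : ℝ)) Filter.atTop Filter.atTop :=
    (tendsto_rpow_atTop (by norm_num)).comp (Real.tendsto_log_atTop.comp tendsto_natCast_atTop_atTop)
  obtain ⟨M3, hM3⟩ := Filter.eventually_atTop.1 (hlim.eventually_gt_atTop C)
  refine ⟨max (max M1 M2) (max M3 16), fun M hM G hG hcard => ?_⟩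
  have hM1 : M1 ≤ M := ((le_max_left _ _).trans (le_max_left _ _)).trans hM
  have hM2' : M2 ≤ M := ((le_max_right _ _).trans (le_max_left _ _)).trans hM
  have hM3' : M3 ≤ M := ((le_max_left _ _).trans (le_max_right _ _)).trans hM
  have hM16 : 16 ≤ M := ((le_max_right _ _).trans (le_max_right _ _)).trans hM
  have h3 := hM3 M hM3'
  have hM2 : 2 ≤ M := by omega
  have hX := XX_pos M hM2
  have hl := logM_pos hM2
  have hM' : (16:ℝ) ≤ M := by exact_mod_cast hM16
  have hMr1 : (1:ℝ) ≤ M := by linarith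
  have hX98 := XX_ge M hM16
  by_contra hno
  have key : ∀ D ∈ G, XX M ≤ (D.totient : ℝ) * |TII M D| := by
    intro D hD
    have hD2 := hG.two_le D hD
    have hDM := hG.le D hD
    have hφ : (0:ℝ) < D.totient := by exact_mod_cast Nat.totient_pos.2 (by omega : 0 < D)
    have hφM : (D.totient : ℝ) ≤ (M:ℝ)^12 := by exact_mod_cast (Nat.totient_le D).trans hDM
    have a1 := hml M hM2' D hD2 hDM
    have a2 := class_upper M D hM16 (fun q hq hqM h => hno ⟨D, hD, q, hq, hqM, h⟩)
    have a3 := FI_small M D hM16 hD2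
    have a4 := main_id M D hM2
    rw [sum_cc] at a4
    set S1 := ∑ n ∈ Ioc 0 (M ^ 100), (if n % D = 1 then tent (XX M) n * aL M n else 0)
    set S2 := ∑ n ∈ Ioc 0 (M ^ 100), (if n.Coprime D then tent (XX M) n * aL M n else 0)
    set F := ∑ n ∈ Ioc 0 (M ^ 100), FI M n * cc D 1 n
    have a5 : S2 = D.totient * (S1 - F + TII M D) := by
      have : 1 / (D.totient:ℝ) * S2 = S1 - F + TII M D := by linarith
      rw [← this]; field_simp
    have a6 : S1 - F + TII M D ≤ (M:ℝ)^54 + (M:ℝ)^77 + |TII M D| := by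
      have := neg_abs_le F
      have := le_abs_self (TII M D)
      linarith
    have a7 : (M:ℝ)^54 + (M:ℝ)^77 ≤ 2 * (M:ℝ)^77 := by
      have : (M:ℝ)^54 ≤ (M:ℝ)^77 := pow_le_pow_right₀ hMr1 (by norm_num)
      linarith
    have a8 : (D.totient:ℝ) * (2 * (M:ℝ)^77) ≤ 2 * XX M := by
      calc (D.totient:ℝ) * (2 * (M:ℝ)^77) ≤ (M:ℝ)^12 * (2 * (M:ℝ)^77) := by gcongr
        _ = 2 * (M:ℝ)^89 := by ring
        _ ≤ 2 * (M:ℝ)^98 := by gcongr <;> norm_num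
        _ ≤ _ := by linarith
    have a9 : S2 ≤ D.totient * (2 * (M:ℝ)^77 + |TII M D|) := by
      rw [a5]; exact mul_le_mul_of_nonneg_left (by linarith) hφ.le
    rw [mul_add] at a9
    linarith
  have hsum := h2 M hM1 G hG
  have hsum2 : (G.card : ℝ) * XX M ≤ C * XX M * Real.sqrt (Real.log M) := by
    refine le_trans ?_ hsum
    calc (G.card : ℝ) * XX M = ∑ D ∈ G, XX M := by simp
      _ ≤ _ := sum_le_sum key
  have h5 : (G.card : ℝ) ≤ C * Real.sqrt (Real.log M) := by
    have : (G.card : ℝ) * XX M ≤ (C * Real.sqrt (Real.log M)) * XX M := by linarith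
    exact le_of_mul_le_mul_right this hX
  have h6 : (Real.log M) ^ (3/4 : ℝ) = (Real.log M) ^ (1/4 : ℝ) * Real.sqrt (Real.log M) := by
    rw [Real.sqrt_eq_rpow, ← Real.rpow_add hl]; norm_num
  rw [h6] at hcard
  have h7 : 0 < Real.sqrt (Real.log M) := Real.sqrt_pos.2 hl
  have := le_of_mul_le_mul_right (hcard.trans h5) h7
  linarith

end LT

namespace LT
open Finset

/-- Lucas sequence data used in the proof -/
structure Luc (a₁ a₂ : ℤ) (u : ℕ → ℤ) : Prop where
  cop : IsCoprime a₁ a₂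
  ne : a₂ ≠ 0
  disc : a₁ ^ 2 + 4 * a₂ ≠ 0
  u0 : u 0 = 0
  u1 : u 1 = 1
  recur : ∀ n : ℕ, u (n + 2) = a₁ * u (n + 1) + a₂ * u n
  nz : ∀ n : ℕ, 0 < n → u n ≠ 0

lemma luc_nz (a₁ a₂ : ℤ) (ha₂ : a₂ ≠ 0) (hΔ : a₁ ^ 2 + 4 * a₂ ≠ 0)
    (u : ℕ → ℤ) (hu0 : u 0 = 0) (hu1 : u 1 = 1)
    (hrec : ∀ n : ℕ, u (n + 2) = a₁ * u (n + 1) + a₂ * u n)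
    (hnd : ∀ α β : ℂ, α ^ 2 = (a₁ : ℂ) * α + (a₂ : ℂ) →
      β ^ 2 = (a₁ : ℂ) * β + (a₂ : ℂ) → α ≠ β → ∀ k : ℕ, 0 < k → (α / β) ^ k ≠ 1) :
    ∀ n : ℕ, 0 < n → u n ≠ 0 := by
  intro n hn hun
  obtain ⟨δ, hδ⟩ := IsAlgClosed.exists_pow_nat_eq ((a₁ : ℂ) ^ 2 + 4 * a₂) (show 0 < 2 by norm_num)
  have hΔ' : ((a₁ : ℂ) ^ 2 + 4 * a₂) ≠ 0 := by exact_mod_cast hΔ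
  have hδ0 : δ ≠ 0 := by
    intro h; apply hΔ'; rw [← hδ, h]; ring
  set α : ℂ := (a₁ + δ) / 2 with hα
  set β : ℂ := (a₁ - δ) / 2 with hβ
  have h1 : α ^ 2 = (a₁ : ℂ) * α + a₂ := by rw [hα]; linear_combination hδ / 4
  have h2 : β ^ 2 = (a₁ : ℂ) * β + a₂ := by rw [hβ]; linear_combination hδ / 4
  have h3 : α - β = δ := by rw [hα, hβ]; ring
  have hne : α ≠ β := by
    intro h; apply hδ0; rw [← h3, h]; ring
  have hβ0 : β ≠ 0 := by
    intro h
    rw [h] at h2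
    have : (a₂ : ℂ) = 0 := by linear_combination -h2
    exact ha₂ (by exact_mod_cast this)
  have key : ∀ n : ℕ, (α - β) * (u n : ℂ) = α ^ n - β ^ n ∧ (α - β) * (u (n + 1) : ℂ) = α ^ (n + 1) - β ^ (n + 1) := by
    intro n
    induction n with
    | zero => simp [hu0, hu1]
    | succ n ih =>
      refine ⟨ih.2, ?_⟩
      have : (u (n + 1 + 1) : ℂ) = a₁ * u (n + 1) + a₂ * u n := by exact_mod_cast hrec n
      rw [this]
      linear_combination a₁ * ih.2 + a₂ * ih.1 - α ^ n * h1 + β ^ n * h2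
  have h4 := (key n).1
  rw [hun] at h4
  apply hnd α β h1 h2 hne n hn
  rw [div_pow, div_eq_one_iff_eq (pow_ne_zero n hβ0)]
  push_cast at h4
  linear_combination -h4

namespace Luc
variable {a₁ a₂ : ℤ} {u : ℕ → ℤ}

lemma add (h : Luc a₁ a₂ u) (m n : ℕ) : u (m + n + 1) = u (m + 1) * u (n + 1) + a₂ * u m * u n := by
  have : ∀ n, u (m + n + 1) = u (m + 1) * u (n + 1) + a₂ * u m * u n ∧
      u (m + (n + 1) + 1) = u (m + 1) * u (n + 1 + 1) + a₂ * u m * u (n + 1) := by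
    intro n
    induction n with
    | zero =>
      constructor
      · simp [h.u0, h.u1]
      · have e1 := h.recur m
        have e2 := h.recur 0
        simp only [zero_add] at e2 ⊢
        rw [show m + 1 + 1 = m + 2 by ring, e1, show (1 + 1 : ℕ) = 2 by rfl, e2, h.u0, h.u1]; ring
    | succ n ih =>
      refine ⟨ih.2, ?_⟩
      have e1 := h.recur (m + n + 1)
      have e2 := h.recur (n + 1)
      have e3 := h.recur n
      rw [show m + (n + 1 + 1) + 1 = m + n + 1 + 2 by ring, e1, show m + n + 1 + 1 = m + (n + 1) + 1 by ring, ih.2, ih.1,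
        show n + 1 + 1 + 1 = n + 1 + 2 by ring, e2, show n + 1 + 1 = n + 2 by ring, e3]
      ring
  exact (this n).1

lemma dvd_mul (h : Luc a₁ a₂ u) (t k : ℕ) : u t ∣ u (t * k) := by
  induction k with
  | zero => simp [h.u0]
  | succ k ih =>
    rcases t with _ | t
    · simp
    · rw [show (t + 1) * (k + 1) = (t + 1) * k + t + 1 by ring, h.add]
      exact _root_.dvd_add (Dvd.intro_left _ rfl) (Dvd.dvd.mul_right (Dvd.dvd.mul_left ih _) _)

lemma dvd_of_dvd (h : Luc a₁ a₂ u) {t n : ℕ} (ht : t ∣ n) : u t ∣ u n := by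
  obtain ⟨k, rfl⟩ := ht
  exact h.dvd_mul t k

lemma cop_a2 (h : Luc a₁ a₂ u) (n : ℕ) : IsCoprime (u (n + 1)) a₂ := by
  induction n with
  | zero => simp [h.u1, isCoprime_one_left]
  | succ n ih =>
    rw [show n + 1 + 1 = n + 2 by ring, h.recur n]
    exact IsCoprime.add_mul_left_left (h.cop.mul_left ih) (u n)

lemma cop_succ (h : Luc a₁ a₂ u) (n : ℕ) : IsCoprime (u n) (u (n + 1)) := by
  induction n with
  | zero => simp [h.u1, isCoprime_one_right]
  | succ n ih =>
    rw [show n + 1 + 1 = n + 2 by ring, h.recur n, add_comm (a₁ * _), mul_comm a₁]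
    exact IsCoprime.add_mul_left_right ((h.cop_a2 n).mul_right ih.symm) a₁

lemma dvd_gcd (h : Luc a₁ a₂ u) (d : ℤ) (m n : ℕ) : d ∣ u m → d ∣ u n → d ∣ u (Nat.gcd m n) := by
  induction m, n using Nat.gcd.induction with
  | H0 n => intro _ h2; simpa using h2
  | H1 m n hm ih =>
    intro h1 h2
    rw [Nat.gcd_rec]
    apply ih _ h1
    rcases hr : n % m with _ | r
    · simp [h.u0]
    have e : n = m * (n / m) + r + 1 := by
      have := Nat.div_add_mod n m
      omega
    rw [e, h.add] at h2
    have h3 : d ∣ u (m * (n / m)) := h1.trans (h.dvd_mul m _)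
    have h4 : d ∣ u (m * (n / m) + 1) * u (r + 1) := by
      have h5 : d ∣ a₂ * u (m * (n / m)) * u r := Dvd.dvd.mul_right (Dvd.dvd.mul_left h3 _) _
      exact (Int.dvd_add_left h5).1 h2
    have h6 : IsCoprime d (u (m * (n / m) + 1)) := (h.cop_succ _).of_isCoprime_of_dvd_left h3
    exact h6.dvd_of_dvd_mul_left h4

lemma coprime_of_coprime (h : Luc a₁ a₂ u) (s t : ℕ) (hst : s.Coprime t) : IsCoprime (u s) (u t) := by
  rw [Int.isCoprime_iff_gcd_eq_one]
  have h1 := h.dvd_gcd (Int.gcd (u s) (u t)) s t (Int.gcd_dvd_left _ _) (Int.gcd_dvd_right _ _)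
  rw [hst.gcd_eq_one, h.u1] at h1
  have := Int.natCast_dvd_natCast.1 (show ((Int.gcd (u s) (u t) : ℕ) : ℤ) ∣ ((1 : ℕ) : ℤ) by simpa using h1)
  exact Nat.dvd_one.1 this

lemma dvd_GL (h : Luc a₁ a₂ u) (t : ℕ) (ht : t.Prime) (hta : ¬ (t : ℤ) ∣ a₂) :
    (t : ℤ) ∣ u ((t ^ 2 - 1) * (t ^ 2 - t)) := by
  haveI : Fact t.Prime := ⟨ht⟩
  set A : Matrix (Fin 2) (Fin 2) (ZMod t) := !![(a₁ : ZMod t), a₂; 1, 0] with hA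
  have hdet : A.det ≠ 0 := by
    rw [hA, Matrix.det_fin_two_of]
    simp only [mul_zero, mul_one, zero_sub, ne_eq, neg_eq_zero]
    rwa [ZMod.intCast_zmod_eq_zero_iff_dvd] 
  have hpow : ∀ n, A ^ (n + 1) = !![(u (n + 2) : ZMod t), a₂ * u (n + 1); u (n + 1), a₂ * u n] := by
    intro n
    induction n with
    | zero =>
      have := h.recur 0
      rw [h.u0, zero_add, h.u1] at this
      rw [zero_add, pow_one, hA]
      simp [this, h.u1, h.u0]
    | succ n ih =>
      rw [pow_succ, ih, hA, Matrix.mul_fin_two]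
      have e1 := h.recur (n + 1)
      have e2 := h.recur n
      rw [show n + 1 + 2 = n + 3 by ring] at *
      rw [show n + 1 + 1 = n + 2 by ring] at *
      rw [e1]
      have e2' : (u (n + 2) : ZMod t) = a₁ * u (n + 1) + a₂ * u n := by rw [e2]; push_cast; rfl
      ext i j
      fin_cases i <;> fin_cases j <;> simp [e2'] <;> ring
  set N := (t ^ 2 - 1) * (t ^ 2 - t) with hN
  have hcard : Nat.card (Matrix.GeneralLinearGroup (Fin 2) (ZMod t)) = N := by
    rw [Matrix.card_GL_field, Fin.prod_univ_two]
    simp [ZMod.card, hN]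
  let g : Matrix.GeneralLinearGroup (Fin 2) (ZMod t) := Matrix.GeneralLinearGroup.mkOfDetNeZero A hdet
  have hg : g ^ N = 1 := by rw [← hcard]; exact pow_card_eq_one'
  have hAN : A ^ N = 1 := by
    have := congrArg (fun x : Matrix.GeneralLinearGroup (Fin 2) (ZMod t) => (x : Matrix (Fin 2) (Fin 2) (ZMod t))) hg
    simpa [g] using this
  have hNpos : 0 < N := by
    have := ht.two_le
    rw [hN]; apply Nat.mul_pos <;> apply Nat.sub_pos_of_lt <;> nlinarith
  obtain ⟨n, hn⟩ := Nat.exists_eq_add_of_lt hNpos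
  rw [zero_add] at hn
  rw [hn] at hAN ⊢
  rw [hpow n] at hAN
  have := congrFun (congrFun hAN 1) 0
  simp at this
  rwa [ZMod.intCast_zmod_eq_zero_iff_dvd] at this

lemma not_dvd (h : Luc a₁ a₂ u) (S s t : ℕ) (hS : 2 ≤ S) (hs : s.Prime) (ht : t.Prime) (hst : s ≠ t)
    (hs1 : S < s) (hs2 : s ≤ 2 * S) (ht1 : S < t) (ht2 : t ≤ 2 * S) : ¬ (t : ℤ) ∣ u s := by
  intro hd
  have hta : ¬ (t : ℤ) ∣ a₂ := by
    intro h2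
    obtain ⟨r, rfl⟩ : ∃ r, s = r + 1 := ⟨s - 1, by have := hs.pos; omega⟩
    have := (h.cop_a2 r).isUnit_of_dvd' hd h2
    rw [Int.isUnit_iff] at this
    have := ht.two_le
    omega
  have h1 := h.dvd_gcd t s _ hd (h.dvd_GL t ht hta)
  have hsN : s ∣ (t ^ 2 - 1) * (t ^ 2 - t) := by
    by_contra hn
    rw [(Nat.Prime.coprime_iff_not_dvd hs).2 hn, h.u1] at h1
    have := Int.le_of_dvd one_pos h1
    have := ht.two_le
    omega
  have e1 : t ^ 2 - 1 = (t + 1) * (t - 1) := by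
    have := Nat.sq_sub_sq t 1
    simpa using this
  have e2 : t ^ 2 - t = t * (t - 1) := by rw [Nat.mul_sub, mul_one, sq]
  rw [e1, e2] at hsN
  have ho1 := hs.eq_two_or_odd
  have ho2 := ht.eq_two_or_odd
  have hc : s ∣ t + 1 ∨ s ∣ t - 1 ∨ s ∣ t := by
    rcases (Nat.Prime.dvd_mul hs).1 hsN with h | h <;> rcases (Nat.Prime.dvd_mul hs).1 h with h | h <;> tauto
  rcases hc with hc | hc | hc
  · obtain ⟨k, hk⟩ := hc
    have : k < 2 := by
      by_contra hk2
      have : s * 2 ≤ s * k := Nat.mul_le_mul_left s (by omega)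
      omega
    interval_cases k <;> omega
  · obtain ⟨k, hk⟩ := hc
    have : k < 2 := by
      by_contra hk2
      have : s * 2 ≤ s * k := Nat.mul_le_mul_left s (by omega)
      omega
    interval_cases k <;> omega
  · rcases (Nat.dvd_prime ht).1 hc with h | h
    · have := hs.two_le; omega
    · exact hst h

lemma upper (h : Luc a₁ a₂ u) (n : ℕ) : |u n| ≤ (|a₁| + |a₂| + 1) ^ n := by
  have : ∀ n, |u n| ≤ (|a₁| + |a₂| + 1) ^ n ∧ |u (n + 1)| ≤ (|a₁| + |a₂| + 1) ^ (n + 1) := by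
    intro n
    have p1 := abs_nonneg a₁
    have p2 := abs_nonneg a₂
    induction n with
    | zero => simp [h.u0, h.u1]; omega
    | succ n ih =>
      refine ⟨ih.2, ?_⟩
      rw [show n + 1 + 1 = n + 2 by ring, h.recur]
      set C := |a₁| + |a₂| + 1 with hC
      have hC1 : 1 ≤ C := by omega
      have hCp : 0 ≤ C ^ n := by positivity
      calc |a₁ * u (n + 1) + a₂ * u n| ≤ |a₁| * |u (n + 1)| + |a₂| * |u n| := by
            rw [← abs_mul, ← abs_mul]; exact abs_add_le _ _
        _ ≤ |a₁| * C ^ (n + 1) + |a₂| * C ^ n := by gcongr; exact ih.2; exact ih.1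
        _ ≤ |a₁| * C ^ (n + 1) + |a₂| * C ^ (n + 1) := by gcongr 2; exact pow_le_pow_right₀ hC1 (by omega)
        _ ≤ C * C ^ (n + 1) := by
            rw [← add_mul]; gcongr; omega
        _ = _ := by ring
  exact (this n).1

lemma cross (h : Luc a₁ a₂ u) (t r : ℕ) : u (t + r) * u (t + 1) - u (t + r + 1) * u t = (-a₂) ^ t * u r := by
  induction t with
  | zero => simp [h.u0, h.u1]
  | succ t ih =>
    have e1 := h.recur t
    have e2 := h.recur (t + r)
    rw [show t + 1 + r = t + r + 1 by ring, show t + 1 + 1 = t + 2 by ring, show t + r + 1 + 1 = t + r + 2 by ring, e1, e2]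
    linear_combination (-a₂) * ih

end Luc
end LT

namespace LT
open Finset
namespace Luc
variable {a₁ a₂ : ℤ} {u : ℕ → ℤ}

lemma a1_ne (h : Luc a₁ a₂ u) : a₁ ≠ 0 := by
  have := h.nz 2 (by norm_num)
  have e := h.recur 0
  rw [h.u0] at e
  norm_num at e
  rw [h.u1] at e
  intro h0
  apply this
  rw [e, h0]; ring

/-- sequences with a positive-dominant recursion -/
lemma grow_aux (v : ℕ → ℤ) (a b : ℤ) (ha : 1 ≤ a) (hb : 1 ≤ b ∨ (b ≤ -1 ∧ -4 * b < a ^ 2))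
    (h0 : v 0 = 0) (h1 : v 1 = 1) (hr : ∀ n, v (n + 2) = a * v (n + 1) + b * v n) :
    ∀ n, (1 / 2 : ℝ) * (3 / 2) ^ n ≤ v (n + 1) := by
  rcases hb with hb | ⟨hb, hb2⟩
  · have key : ∀ n, (1 / 2 : ℝ) * (3 / 2) ^ n ≤ v (n + 1) ∧ (1 / 2 : ℝ) * (3 / 2) ^ (n + 1) ≤ v (n + 2) := by
      intro n
      induction n with
      | zero =>
        have e := hr 0
        rw [h0, zero_add, h1] at e
        norm_num [h1, e]
        have : (1 : ℝ) ≤ a := by exact_mod_cast ha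
        linarith
      | succ n ih =>
        refine ⟨ih.2, ?_⟩
        have e : (v (n + 1 + 2) : ℝ) = a * v (n + 2) + b * v (n + 1) := by exact_mod_cast hr (n + 1)
        have ha' : (1 : ℝ) ≤ a := by exact_mod_cast ha
        have hb' : (1 : ℝ) ≤ b := by exact_mod_cast hb
        rw [e]
        have p : (0 : ℝ) < (3 / 2) ^ n := by positivity
        obtain ⟨i1, i2⟩ := ih
        have q1 : (0 : ℝ) ≤ v (n + 1) := by linarith
        have q2 : (0 : ℝ) ≤ v (n + 2) := by
          refine le_trans ?_ i2; positivity
        have r1 : (v (n + 2) : ℝ) ≤ a * v (n + 2) := le_mul_of_one_le_left q2 ha'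
        have r2 : (v (n + 1) : ℝ) ≤ b * v (n + 1) := le_mul_of_one_le_left q1 hb'
        have s1 : ((3 : ℝ) / 2) ^ (n + 1) = 3 / 2 * (3 / 2) ^ n := by ring
        have s2 : ((3 : ℝ) / 2) ^ (n + 1 + 1) = 9 / 4 * (3 / 2) ^ n := by ring
        rw [s1] at i2
        rw [s2]
        linarith
    exact fun n => (key n).1
  · have ha3 : 3 ≤ a := by
      by_contra hc
      have : a ≤ 2 := by omega
      nlinarith
    have key : ∀ n, 0 ≤ v n ∧ 1 ≤ v (n + 1) ∧ a * v n ≤ 2 * v (n + 1) := by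
      intro n
      induction n with
      | zero => simp [h0, h1]
      | succ n ih =>
        obtain ⟨i0, i1, i2⟩ := ih
        have e := hr n
        have k : a * v (n + 1) ≤ 2 * v (n + 2) := by
          rw [e]
          have c1 : a * (a * v n) ≤ a * (2 * v (n + 1)) := mul_le_mul_of_nonneg_left i2 (by omega)
          have c2 : (-4 * b) * v n ≤ a ^ 2 * v n := mul_le_mul_of_nonneg_right hb2.le i0
          nlinarith
        refine ⟨by omega, ?_, k⟩
        have : 3 * 1 ≤ a * v (n + 1) := mul_le_mul ha3 i1 (by norm_num) (by omega)
        show 1 ≤ v (n + 2)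
        omega
    intro n
    induction n with
    | zero => norm_num [h1]
    | succ n ih =>
      have k := (key (n + 1)).2.2
      have i1 := (key n).2.1
      have : 3 * v (n + 1) ≤ 2 * v (n + 1 + 1) := le_trans (mul_le_mul_of_nonneg_right ha3 (by omega)) k
      have : (3 : ℝ) * v (n + 1) ≤ 2 * v (n + 1 + 1) := by exact_mod_cast this
      rw [pow_succ]
      linarith

lemma grow_pos (h : Luc a₁ a₂ u) (hΔ : 0 < a₁ ^ 2 + 4 * a₂) (n : ℕ) :
    (1 / 2 : ℝ) * (3 / 2) ^ n ≤ |(u (n + 1) : ℝ)| := by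
  have ha := h.a1_ne
  set σ : ℤ := a₁.sign with hσ
  have hσ2 : σ * σ = 1 := by
    rcases lt_or_gt_of_ne ha with hn | hp
    · rw [hσ, Int.sign_eq_neg_one_of_neg hn]; norm_num
    · rw [hσ, Int.sign_eq_one_of_pos hp]; norm_num
  have hσa : σ * a₁ = |a₁| := by rw [hσ, Int.sign_mul_self_eq_abs]
  have hb : 1 ≤ a₂ ∨ (a₂ ≤ -1 ∧ -4 * a₂ < |a₁| ^ 2) := by
    have := h.ne
    rcases lt_or_gt_of_ne this with h1 | h1
    · right; refine ⟨by omega, ?_⟩; rw [sq_abs]; linarith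
    · left; omega
  have := grow_aux (fun n => σ ^ (n + 1) * u n) |a₁| a₂ (Int.one_le_abs ha) hb (by simp [h.u0])
    (by simp [h.u1, pow_succ, hσ2]) (by
      intro n
      rw [h.recur n, ← hσa]
      have : σ ^ (n + 2 + 1) = σ ^ (n + 1) := by
        rw [show n + 2 + 1 = n + 1 + 2 by ring, pow_add, sq, hσ2, mul_one]
      rw [this]
      have e : σ ^ (n + 1 + 1) = σ ^ n := by rw [show n + 1 + 1 = n + 2 by ring, pow_add, sq, hσ2, mul_one]
      rw [e]
      ring) n
  refine this.trans ?_
  rw [← Int.cast_abs]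
  have : |σ ^ (n + 1 + 1) * u (n + 1)| = |u (n + 1)| := by
    rw [abs_mul, abs_pow]
    have : |σ| = 1 := by
      have := congrArg abs hσ2
      rw [abs_mul, abs_one] at this
      nlinarith [abs_nonneg σ]
    rw [this]; simp
  rw [← this]
  exact_mod_cast le_abs_self _

lemma b_ge (h : Luc a₁ a₂ u) (hΔ : a₁ ^ 2 + 4 * a₂ < 0) : 2 ≤ -a₂ := by
  by_contra hc
  have ha := h.a1_ne
  have h1 : a₂ = -1 := by nlinarith [sq_nonneg a₁]
  have h2 : a₁ ^ 2 < 4 := by linarith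
  have h3 : a₁ ^ 2 = 1 := by
    have : |a₁| < 2 := by
      apply abs_lt_of_sq_lt_sq _ (by norm_num)
      linarith
    have : 1 ≤ |a₁| := Int.one_le_abs ha
    rw [← sq_abs, show |a₁| = 1 by omega]; norm_num
  apply h.nz 3 (by norm_num)
  have e1 := h.recur 0
  have e2 := h.recur 1
  norm_num [h.u0, h.u1] at e1 e2
  rw [e2, e1, h1]; linarith

lemma sq_upper (h : Luc a₁ a₂ u) (hΔ : a₁ ^ 2 + 4 * a₂ < 0) (n : ℕ) : (u n) ^ 2 ≤ 4 * (-a₂) ^ n := by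
  have e := h.cross n 1
  rw [h.u1, h.recur n] at e
  nlinarith [sq_nonneg (2 * u (n + 1) - a₁ * u n), mul_nonneg (show 0 ≤ -(a₁ ^ 2 + 4 * a₂) - 1 by linarith) (sq_nonneg (u n))]

lemma two_bad (h : Luc a₁ a₂ u) (hΔ : a₁ ^ 2 + 4 * a₂ < 0) (R t s : ℕ) (hR : 9 ≤ R)
    (hts : t < s) (hsR : s ≤ t + R) (ht : 2 * R < t)
    (h1 : |(u t : ℝ)| < (1.09 : ℝ) ^ (2 * R)) (h2 : |(u s : ℝ)| < (1.09 : ℝ) ^ (2 * R)) : False := by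
  have hb := h.b_ge hΔ
  set b : ℝ := ((-a₂ : ℤ) : ℝ) with hbd
  have hb2 : (2 : ℝ) ≤ b := by rw [hbd]; exact_mod_cast hb
  have hU : ∀ n, (u n : ℝ) ^ 2 ≤ 4 * b ^ n := by
    intro n; rw [hbd]; exact_mod_cast h.sq_upper hΔ n
  set K : ℝ := (1.09 : ℝ) ^ (4 * R) with hK
  have hsq : ∀ x : ℝ, |x| < (1.09 : ℝ) ^ (2 * R) → x ^ 2 ≤ K := by
    intro x hx
    have : K = ((1.09 : ℝ) ^ (2 * R)) ^ 2 := by rw [hK, ← pow_mul]; congr 1; ring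
    rw [this, ← sq_abs]
    exact pow_le_pow_left₀ (abs_nonneg _) hx.le 2
  have k1 := hsq _ h1
  have k2 := hsq _ h2
  obtain ⟨r, rfl⟩ : ∃ r, s = t + r := ⟨s - t, by omega⟩
  have hcr : (u (t + r) : ℝ) * u (t + 1) - u (t + r + 1) * u t = b ^ t * u r := by
    rw [hbd]; exact_mod_cast h.cross t r
  have hur : (1 : ℝ) ≤ (u r : ℝ) ^ 2 := by
    have := h.nz r (by omega)
    have : 1 ≤ (u r) ^ 2 := by
      have := sq_pos_of_ne_zero this
      omega
    exact_mod_cast this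
  have hKp : 0 < K := by positivity
  have hbp : 0 < b := by linarith
  have m1 : b ^ (2 * t) ≤ 16 * K * b ^ (t + r + 1) := by
    calc b ^ (2 * t) ≤ b ^ (2 * t) * (u r : ℝ) ^ 2 := le_mul_of_one_le_right (by positivity) hur
      _ = (b ^ t * u r) ^ 2 := by ring
      _ = ((u (t + r) : ℝ) * u (t + 1) - u (t + r + 1) * u t) ^ 2 := by rw [hcr]
      _ ≤ 2 * ((u (t + r) : ℝ) ^ 2 * (u (t + 1) : ℝ) ^ 2) + 2 * ((u (t + r + 1) : ℝ) ^ 2 * (u t : ℝ) ^ 2) := by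
          nlinarith [sq_nonneg ((u (t + r) : ℝ) * u (t + 1) + u (t + r + 1) * u t)]
      _ ≤ 2 * (K * (4 * b ^ (t + 1))) + 2 * ((4 * b ^ (t + r + 1)) * K) := by
          gcongr
          · exact hU _
          · exact hU _
      _ ≤ 2 * (K * (4 * b ^ (t + r + 1))) + 2 * ((4 * b ^ (t + r + 1)) * K) := by
          have : b ^ (t + 1) ≤ b ^ (t + r + 1) := pow_le_pow_right₀ (by linarith) (by omega)
          gcongr
      _ = _ := by ring
  have m2 : b ^ R * b ^ (t + r + 1) ≤ b ^ (2 * t) := by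
    rw [← pow_add]; exact pow_le_pow_right₀ (by linarith) (by omega)
  have m3 : b ^ R ≤ 16 * K := by
    have : 0 < b ^ (t + r + 1) := by positivity
    exact le_of_mul_le_mul_right (m2.trans m1) this
  have m4 : K ^ 2 ≤ b ^ R := by
    have : K ^ 2 = ((1.09 : ℝ) ^ 8) ^ R := by rw [hK, ← pow_mul, ← pow_mul]; congr 1; ring
    rw [this]
    exact pow_le_pow_left₀ (by positivity) (le_trans (by norm_num) hb2) R
  have m5 : K ≤ 16 := by nlinarith
  have m6 : (2 : ℝ) ^ 9 ≤ b ^ R := (pow_le_pow_right₀ (by norm_num) hR).trans (pow_le_pow_left₀ (by norm_num) hb2 R)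
  norm_num at m6
  linarith

lemma growth (h : Luc a₁ a₂ u) (R : ℕ) (hR : 9 ≤ R) :
    ∃ B : Finset ℕ, B.card ≤ 2 ∧ ∀ t ∈ Ioc (2 * R) (4 * R), t ∉ B → (1.09 : ℝ) ^ (2 * R) ≤ |(u t : ℝ)| := by
  rcases lt_or_gt_of_ne h.disc with hΔ | hΔ
  · classical
    refine ⟨(Ioc (2 * R) (4 * R)).filter (fun t => |(u t : ℝ)| < (1.09 : ℝ) ^ (2 * R)), ?_, ?_⟩
    · set B := (Ioc (2 * R) (4 * R)).filter (fun t => |(u t : ℝ)| < (1.09 : ℝ) ^ (2 * R)) with hB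
      have : B.card ≤ (Finset.univ : Finset Bool).card := by
        apply Finset.card_le_card_of_injOn (fun t => decide (t ≤ 3 * R))
        · intro x _; exact mem_coe.2 (mem_univ _)
        · intro x hx y hy hxy
          have hx' := mem_filter.1 (mem_coe.1 hx)
          have hy' := mem_filter.1 (mem_coe.1 hy)
          have ex := mem_Ioc.1 hx'.1
          have ey := mem_Ioc.1 hy'.1
          simp only [decide_eq_decide] at hxy
          rcases lt_trichotomy x y with hl | hl | hl
          · exact (h.two_bad hΔ R x y hR hl (by omega) ex.1 hx'.2 hy'.2).elim
          · exact hl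
          · exact (h.two_bad hΔ R y x hR hl (by omega) ey.1 hy'.2 hx'.2).elim
      simpa using this
    · intro t ht hn
      by_contra hc
      exact hn (mem_filter.2 ⟨ht, not_le.1 hc⟩)
  · refine ⟨∅, by simp, ?_⟩
    intro t ht _
    have ht' := mem_Ioc.1 ht
    obtain ⟨n, rfl⟩ : ∃ n, t = n + 1 := ⟨t - 1, by omega⟩
    refine le_trans ?_ (h.grow_pos hΔ n)
    have : ((3 : ℝ) / 2) ^ (2 * R) ≤ (3 / 2) ^ n := pow_le_pow_right₀ (by norm_num) (by omega)
    refine le_trans ?_ (mul_le_mul_of_nonneg_left this (by norm_num))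
    have e : ((3 : ℝ) / 2) ^ (2 * R) = (3 / 2 / 1.09) ^ (2 * R) * 1.09 ^ (2 * R) := by
      rw [← mul_pow]; norm_num
    have : (2 : ℝ) ≤ (3 / 2 / 1.09) ^ (2 * R) :=
      le_trans (by norm_num) (pow_le_pow_right₀ (by norm_num) (show 3 ≤ 2 * R by omega))
    rw [e]
    have p : (0 : ℝ) < 1.09 ^ (2 * R) := by positivity
    nlinarith

end Luc
end LT

namespace LT
open Finset

/-- one greedy subset -/
lemma greedy (P : Finset ℕ) (ω : ℕ → ℝ) (A h : ℝ) (hA : 0 ≤ A) (hh : 0 ≤ h)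
    (hω : ∀ t ∈ P, ω t ≤ h) (hs : A ≤ ∑ t ∈ P, ω t) :
    ∃ Q ⊆ P, A ≤ ∑ t ∈ Q, ω t ∧ ∑ t ∈ Q, ω t ≤ A + h := by
  classical
  induction P using Finset.induction_on with
  | empty =>
    refine ⟨∅, by simp, hs, ?_⟩
    simp; linarith
  | insert a P ha ih =>
    by_cases hc : A ≤ ∑ t ∈ P, ω t
    · obtain ⟨Q, h1, h2⟩ := ih (fun t ht => hω t (mem_insert_of_mem ht)) hc
      exact ⟨Q, h1.trans (subset_insert _ _), h2⟩
    · refine ⟨insert a P, Subset.refl _, hs, ?_⟩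
      rw [sum_insert ha]
      have := hω a (mem_insert_self _ _)
      linarith

lemma grouping (ω : ℕ → ℝ) (A h : ℝ) (hA : 0 ≤ A) (hh : 0 ≤ h) (k : ℕ) :
    ∀ P : Finset ℕ, (∀ t ∈ P, ω t ≤ h) → (k : ℝ) * (A + h) ≤ ∑ t ∈ P, ω t →
    ∃ g : ℕ → Finset ℕ, (∀ i < k, g i ⊆ P ∧ A ≤ ∑ t ∈ g i, ω t ∧ ∑ t ∈ g i, ω t ≤ A + h) ∧
      ∀ i < k, ∀ j < k, i ≠ j → Disjoint (g i) (g j) := by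
  classical
  induction k with
  | zero => intro P _ _; exact ⟨fun _ => ∅, by simp, by simp⟩
  | succ k ih =>
    intro P hP hs
    push_cast at hs
    have hk : (0 : ℝ) ≤ k * (A + h) := by positivity
    obtain ⟨Q, hQ, q1, q2⟩ := greedy P ω A h hA hh hP (by linarith)
    have hsum := sum_sdiff (f := ω) hQ
    obtain ⟨g, g1, g2⟩ := ih (P \ Q) (fun t ht => hP t (mem_sdiff.1 ht).1) (by linarith)
    have hd : ∀ i < k, Disjoint (g i) Q := fun i hi =>
      disjoint_of_subset_left (g1 i hi).1 sdiff_disjoint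
    refine ⟨fun i => if i < k then g i else Q, ?_, ?_⟩
    · intro i _
      by_cases hi : i < k
      · simp only [if_pos hi]
        exact ⟨(g1 i hi).1.trans sdiff_subset, (g1 i hi).2⟩
      · simp only [if_neg hi]; exact ⟨hQ, q1, q2⟩
    · intro i hi j hj hij
      by_cases hi' : i < k <;> by_cases hj' : j < k
      · simp only [if_pos hi', if_pos hj']; exact g2 i hi' j hj' hij
      · simp only [if_pos hi', if_neg hj']; exact hd i hi'
      · simp only [if_neg hi', if_pos hj']; exact (hd j hj').symm
      · omega

lemma supply (K : ℝ) (S1 : ℕ) : ∃ J0 : ℕ, ∀ J : ℕ, J0 ≤ J → ∃ j < J, S1 ≤ 2 ^ j ∧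
    K * ((2 : ℝ) ^ J) ^ (7 / 4 : ℝ) ≤
      ((((Ioc (2 ^ j) (2 ^ (j + 1))).filter Nat.Prime).card : ℝ) - 2) * 2 ^ j := by
  obtain ⟨Y0, hY0, hY⟩ := theta_lower
  set ρ : ℝ := (2 : ℝ) ^ (1 / 4 : ℝ) with hρ
  have hρ1 : 1 < ρ := Real.one_lt_rpow (by norm_num) (by norm_num)
  have hρ4 : ρ ^ 4 = 2 := by
    rw [hρ, ← Real.rpow_natCast, ← Real.rpow_mul (by norm_num)]; norm_num
  set L : ℝ := 24 * |K| + 8 + 6 * S1 with hL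
  have hLp : 0 < L := by positivity
  have hlim := tendsto_pow_const_div_const_pow_of_one_lt 3 hρ1
  have hev := (hlim.eventually (gt_mem_nhds (show (0 : ℝ) < 1 / L by positivity))).and
    ((tendsto_pow_atTop_atTop_of_one_lt (show (1 : ℝ) < 2 by norm_num)).eventually_ge_atTop (Y0 : ℝ))
  obtain ⟨J1, hJ1⟩ := Filter.eventually_atTop.1 hev
  refine ⟨J1 + 1, ?_⟩
  intro J hJ
  obtain ⟨hJa, hJb⟩ := hJ1 J (by omega)
  have hJpos : (1 : ℝ) ≤ J := by exact_mod_cast (show 1 ≤ J by omega)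
  have hρJ : 0 < ρ ^ J := by positivity
  have hR : L * (J : ℝ) ^ 3 ≤ ρ ^ J := by
    rw [div_lt_div_iff₀ hρJ hLp] at hJa
    linarith
  set X : ℝ := ρ ^ J with hX
  set T : ℝ := (2 : ℝ) ^ J with hT
  have hTX : T = X ^ 4 := by rw [hT, hX, ← hρ4, ← pow_mul, ← pow_mul, mul_comm]
  have hT74 : T ^ (7 / 4 : ℝ) = X ^ 7 := by
    rw [hTX, ← Real.rpow_natCast, ← Real.rpow_mul hρJ.le, ← Real.rpow_natCast]; norm_num
  have hX1 : 1 ≤ X := one_le_pow₀ hρ1.le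
  have hth : T / 2 ≤ Chebyshev.theta T := by
    exact hY T hJb
  have htel : ∑ j ∈ range J, (Chebyshev.theta ((2 : ℝ) ^ (j + 1)) - Chebyshev.theta ((2 : ℝ) ^ j)) = Chebyshev.theta T := by
    rw [Finset.sum_range_sub (fun j => Chebyshev.theta ((2 : ℝ) ^ j))]
    have : Chebyshev.theta ((2 : ℝ) ^ 0) = 0 := by
      apply Chebyshev.theta_eq_zero_of_lt_two; norm_num
    rw [this, sub_zero]
  obtain ⟨j, hj, hjt⟩ : ∃ j ∈ range J, T / 2 / J ≤ Chebyshev.theta ((2 : ℝ) ^ (j + 1)) - Chebyshev.theta ((2 : ℝ) ^ j) := by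
    apply Finset.exists_le_of_sum_le (by simp; omega)
    rw [htel, sum_const, card_range, nsmul_eq_mul, mul_div_cancel₀ _ (by linarith)]
    exact hth
  have hj' := mem_range.1 hj
  set S : ℝ := (2 : ℝ) ^ j with hS
  have hSp : 0 < S := by positivity
  set N : ℝ := (((Ioc (2 ^ j) (2 ^ (j + 1))).filter Nat.Prime).card : ℝ) with hN
  have hlog4 : Real.log 4 ≤ 1.4 := by
    have : Real.log 4 = 2 * Real.log 2 := by
      rw [show (4 : ℝ) = 2 ^ 2 by norm_num, Real.log_pow]; norm_num
    rw [this]; linarith [Real.log_two_lt_d9]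
  -- size of S
  have hSlow : T ≤ 6 * J * S := by
    have h1 := Chebyshev.theta_le_log4_mul_x (x := (2 : ℝ) ^ (j + 1)) (by positivity)
    have h2 := Chebyshev.theta_nonneg ((2 : ℝ) ^ j)
    have h3 : T / 2 / J ≤ 1.4 * (2 * S) := by
      calc T / 2 / J ≤ Real.log 4 * 2 ^ (j + 1) := by linarith
        _ ≤ 1.4 * 2 ^ (j + 1) := by gcongr
        _ = _ := by rw [hS, pow_succ]; ring
    rw [div_le_iff₀ (by linarith)] at h3
    nlinarith [mul_pos hSp (show (0 : ℝ) < J by linarith)]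
  have hNlow : T ≤ 2 * J ^ 2 * N := by
    have := theta_count (2 ^ j) (2 ^ (j + 1)) (pow_le_pow_right₀ (by norm_num) (by omega)) J (by
      intro l hl
      have hl' := mem_Ioc.1 (mem_filter.1 hl).1
      have hlp : (0 : ℝ) < l := by exact_mod_cast (mem_filter.1 hl).2.pos
      calc Real.log l ≤ Real.log ((2 : ℝ) ^ (j + 1)) := by
            apply Real.log_le_log hlp; exact_mod_cast hl'.2
        _ = (j + 1 : ℕ) * Real.log 2 := by rw [Real.log_pow]
        _ ≤ (J : ℝ) * 1 := by
            gcongr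
            · exact_mod_cast hj'
            · linarith [Real.log_two_lt_d9]
        _ = J := mul_one _)
    push_cast at this
    have h3 : T / 2 / J ≤ N * J := by rw [hN]; push_cast; linarith
    rw [div_le_iff₀ (by linarith)] at h3
    linarith
  have hJ3 : (1 : ℝ) ≤ (J : ℝ) ^ 3 := one_le_pow₀ hJpos
  have hJ12 : (J : ℝ) ≤ (J : ℝ) ^ 3 := le_self_pow₀ hJpos (by norm_num)
  have hJ23 : (J : ℝ) ^ 2 ≤ (J : ℝ) ^ 3 := pow_le_pow_right₀ hJpos (by norm_num)
  have hXT : X ≤ T := by rw [hTX]; exact le_self_pow₀ hX1 (by norm_num)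
  have hLJ : L * (J : ℝ) ^ 3 = 24 * |K| * J ^ 3 + 8 * J ^ 3 + 6 * S1 * J ^ 3 := by rw [hL]; ring
  have hK0 : 0 ≤ |K| * (J : ℝ) ^ 3 := by positivity
  have hS0 : 0 ≤ (S1 : ℝ) * (J : ℝ) ^ 3 := by positivity
  have hN4 : 4 ≤ N := by
    have : 8 * (J : ℝ) ^ 2 ≤ 2 * J ^ 2 * N := by linarith
    have hJ2 : 0 < (J : ℝ) ^ 2 := by positivity
    nlinarith
  refine ⟨j, hj', ?_, ?_⟩
  · have : (S1 : ℝ) ≤ S := by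
      have h1 : 6 * (S1 : ℝ) * J ≤ 6 * J * S := by
        have : (S1 : ℝ) * J ≤ S1 * J ^ 3 := by gcongr
        linarith
      nlinarith
    rw [hS] at this
    exact_mod_cast this
  · rw [hT74]
    have h1 : N / 2 ≤ N - 2 := by linarith
    have h2 : N / 2 * S ≤ (N - 2) * S := by gcongr
    refine le_trans ?_ h2
    have h3 : T * T ≤ (2 * J ^ 2 * N) * (6 * J * S) := mul_le_mul hNlow hSlow (by positivity) (by positivity)
    have h4 : T * T = X ^ 7 * X := by rw [hTX]; ring
    have h5 : X ^ 7 * (24 * |K| * J ^ 3) ≤ X ^ 7 * X := by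
      gcongr; linarith
    have h6 : (24 * (J : ℝ) ^ 3) * (|K| * X ^ 7) ≤ (24 * (J : ℝ) ^ 3) * (N / 2 * S) := by
      calc _ = X ^ 7 * (24 * |K| * J ^ 3) := by ring
        _ ≤ X ^ 7 * X := h5
        _ = T * T := h4.symm
        _ ≤ _ := h3
        _ = _ := by ring
    have h7 : |K| * X ^ 7 ≤ N / 2 * S := le_of_mul_le_mul_left h6 (by positivity)
    refine le_trans ?_ h7
    gcongr
    exact le_abs_self K

end LT

namespace LT
open Finset

lemma exists_family {a₁ a₂ : ℤ} {u : ℕ → ℤ} (h : Luc a₁ a₂ u) :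
    ∃ M1 : ℕ, ∀ M : ℕ, M1 ≤ M → ∃ (S k : ℕ) (g : ℕ → Finset ℕ), 2 ≤ S ∧
      (Real.log M) ^ (3 / 4 : ℝ) ≤ k ∧ k ≤ M ∧
      (∀ i < k, (∀ t ∈ g i, t.Prime ∧ S < t ∧ t ≤ 2 * S ∧ Real.log t ≤ Real.log |(u t : ℝ)| / 7) ∧
        10 * Real.log M ≤ ∑ t ∈ g i, Real.log |(u t : ℝ)| ∧
        ∑ t ∈ g i, Real.log |(u t : ℝ)| ≤ 10.5 * Real.log M) ∧
      ∀ i < k, ∀ j < k, i ≠ j → Disjoint (g i) (g j) := by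
  classical
  set C : ℝ := (((|a₁| + |a₂| + 1 : ℤ)) : ℝ) with hC
  have hC3 : (3 : ℝ) ≤ C := by
    have h1 := Int.one_le_abs h.a1_ne
    have h2 := Int.one_le_abs h.ne
    have : 3 ≤ |a₁| + |a₂| + 1 := by omega
    rw [hC]; exact_mod_cast this
  have hlC : 0 < Real.log C := Real.log_pos (by linarith)
  set κ : ℝ := 1.09 with hκ
  have hlκ : 0 < Real.log κ := Real.log_pos (by rw [hκ]; norm_num)
  set c1 : ℝ := 1 / (4 * Real.log C) with hc1
  have hc1p : 0 < c1 := by positivity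
  have hc7 : 0 < c1 ^ (7 / 4 : ℝ) := Real.rpow_pos_of_pos hc1p _
  obtain ⟨X1, hX1⟩ := Filter.eventually_atTop.1
    (Real.isLittleO_log_id_atTop.bound (show 0 < Real.log κ / 14 by positivity))
  obtain ⟨J0, hJ0⟩ := supply (21 / (c1 ^ (7 / 4 : ℝ) * Real.log κ)) (18 + ⌈X1⌉₊)
  set Lm : ℝ := 2 * Real.log C * 2 ^ J0 + 1 with hLm
  have hLm1 : 1 ≤ Lm := by rw [hLm]; have : 0 ≤ 2 * Real.log C * 2 ^ J0 := by positivity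
                           linarith
  refine ⟨⌈Real.exp Lm⌉₊ + 1, ?_⟩
  intro M hM
  have hMe : Real.exp Lm ≤ M := (Nat.le_ceil _).trans (by exact_mod_cast (by omega : ⌈Real.exp Lm⌉₊ ≤ M))
  have hMp : (0 : ℝ) < M := (Real.exp_pos _).trans_le hMe
  set l : ℝ := Real.log M with hl
  have hlL : Lm ≤ l := (Real.le_log_iff_exp_le hMp).2 hMe
  have hl1 : 1 ≤ l := hLm1.trans hlL
  set Y : ℝ := l / (2 * Real.log C) with hY
  have hYJ : (2 : ℝ) ^ J0 ≤ Y := by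
    rw [hY, le_div_iff₀ (by positivity)]
    linarith
  have hY1 : 1 ≤ Y := le_trans (one_le_pow₀ (by norm_num)) hYJ
  obtain ⟨J, hJ1, hJ2⟩ := exists_nat_pow_near hY1 (show (1 : ℝ) < 2 by norm_num)
  have hJJ : J0 ≤ J := by
    have : (2 : ℝ) ^ J0 < 2 ^ (J + 1) := hYJ.trans_lt hJ2
    have := (pow_lt_pow_iff_right₀ (show (1 : ℝ) < 2 by norm_num)).1 this
    omega
  obtain ⟨j, hj, hjS, hjN⟩ := hJ0 J hJJ
  set T : ℝ := (2 : ℝ) ^ J with hT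
  have hTl : c1 * l ≤ T := by
    have : Y ≤ 2 * T := by rw [pow_succ] at hJ2; linarith
    have e : Y = 2 * (c1 * l) := by rw [hY, hc1]; ring
    linarith
  have hj1 : 1 ≤ j := by
    by_contra hc
    have : j = 0 := by omega
    subst this
    norm_num at hjS
    omega
  obtain ⟨i, rfl⟩ : ∃ i, j = i + 1 := ⟨j - 1, by omega⟩
  set R : ℕ := 2 ^ i with hR
  have e2R : 2 ^ (i + 1) = 2 * R := by rw [hR, pow_succ]; ring
  have e4R : 2 ^ (i + 1 + 1) = 4 * R := by rw [hR, pow_succ, pow_succ]; ring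
  have e2R' : (2 : ℝ) ^ (i + 1) = ((2 * R : ℕ) : ℝ) := by rw [← e2R]; push_cast; rfl
  rw [e2R] at hjS
  rw [e2R, e4R, e2R'] at hjN
  have hR9 : 9 ≤ R := by omega
  have hTR : ((4 * R : ℕ) : ℝ) ≤ T := by
    rw [← e4R, hT]; push_cast
    exact pow_le_pow_right₀ (by norm_num) (by omega)
  obtain ⟨B, hB2, hB⟩ := h.growth R hR9
  set P0 := (Ioc (2 * R) (4 * R)).filter Nat.Prime with hP0
  set P := P0 \ B with hP
  have hPmem : ∀ t ∈ P, t.Prime ∧ 2 * R < t ∧ t ≤ 4 * R ∧ κ ^ (2 * R) ≤ |(u t : ℝ)| := by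
    intro t ht
    have h1 := mem_sdiff.1 ht
    have h2 := mem_filter.1 h1.1
    have h3 := mem_Ioc.1 h2.1
    exact ⟨h2.2, h3.1, h3.2, hB t h2.1 h1.2⟩
  have hcard : (P0.card : ℝ) - 2 ≤ P.card := by
    have h0 : P0.card ≤ P.card + B.card := by rw [hP]; exact Finset.card_le_card_sdiff_add_card
    have h3 : P0.card ≤ P.card + 2 := by omega
    have : (P0.card : ℝ) ≤ P.card + 2 := by exact_mod_cast h3
    linarith
  set ω : ℕ → ℝ := fun t => Real.log |(u t : ℝ)| with hω
  have hωlow : ∀ t ∈ P, ((2 * R : ℕ) : ℝ) * Real.log κ ≤ ω t := by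
    intro t ht
    have := Real.log_le_log (by rw [hκ]; positivity) (hPmem t ht).2.2.2
    rwa [Real.log_pow] at this
  have hωup : ∀ t ∈ P, ω t ≤ l / 2 := by
    intro t ht
    have h1 : |(u t : ℝ)| ≤ C ^ t := by rw [hC]; exact_mod_cast h.upper t
    have h0 : 0 < |(u t : ℝ)| := abs_pos.2 (by exact_mod_cast h.nz t (hPmem t ht).1.pos)
    have h2 := Real.log_le_log h0 h1
    rw [Real.log_pow] at h2
    have h3 : (t : ℝ) ≤ Y := by
      have : (t : ℝ) ≤ ((4 * R : ℕ) : ℝ) := by exact_mod_cast (hPmem t ht).2.2.1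
      linarith
    calc ω t ≤ t * Real.log C := h2
      _ ≤ Y * Real.log C := by gcongr
      _ = l / 2 := by rw [hY]; field_simp
  have hlogt : ∀ t ∈ P, Real.log t ≤ ω t / 7 := by
    intro t ht
    have h1 : X1 ≤ ((4 * R : ℕ) : ℝ) := by
      refine (Nat.le_ceil X1).trans ?_
      exact_mod_cast (by omega : ⌈X1⌉₊ ≤ 4 * R)
    have h2 := hX1 _ h1
    simp only [id, Real.norm_eq_abs] at h2
    have h3 := (le_abs_self _).trans h2
    rw [abs_of_nonneg (Nat.cast_nonneg (4 * R))] at h3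
    have h4 : Real.log t ≤ Real.log ((4 * R : ℕ) : ℝ) := by
      apply Real.log_le_log (by exact_mod_cast (hPmem t ht).1.pos)
      exact_mod_cast (hPmem t ht).2.2.1
    have h5 := hωlow t ht
    have e1 : ((4 * R : ℕ) : ℝ) = 2 * ((2 * R : ℕ) : ℝ) := by push_cast; ring
    have h6 : Real.log κ / 14 * ((4 * R : ℕ) : ℝ) = ((2 * R : ℕ) : ℝ) * Real.log κ / 7 := by rw [e1]; ring
    rw [h6] at h3
    exact (h4.trans h3).trans (div_le_div_of_nonneg_right h5 (by norm_num))
  set k : ℕ := ⌈l ^ (3 / 4 : ℝ)⌉₊ with hk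
  have hl34 : 1 ≤ l ^ (3 / 4 : ℝ) := Real.one_le_rpow hl1 (by norm_num)
  have hk2 : (k : ℝ) ≤ 2 * l ^ (3 / 4 : ℝ) := by
    have := Nat.ceil_lt_add_one (show 0 ≤ l ^ (3 / 4 : ℝ) by linarith)
    rw [← hk] at this
    linarith
  have hkM : k ≤ M := by
    rw [hk]
    apply Nat.ceil_le.2
    calc l ^ (3 / 4 : ℝ) ≤ l ^ (1 : ℝ) := Real.rpow_le_rpow_of_exponent_le hl1 (by norm_num)
      _ = l := Real.rpow_one _
      _ ≤ M := Real.log_le_self hMp.le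
  have hsum : (k : ℝ) * (10 * l + l / 2) ≤ ∑ t ∈ P, ω t := by
    have s1 : (P.card : ℝ) * (((2 * R : ℕ) : ℝ) * Real.log κ) ≤ ∑ t ∈ P, ω t := by
      rw [← nsmul_eq_mul]
      exact Finset.card_nsmul_le_sum P ω _ hωlow
    have s2 : (c1 * l) ^ (7 / 4 : ℝ) ≤ T ^ (7 / 4 : ℝ) :=
      Real.rpow_le_rpow (by positivity) hTl (by norm_num)
    rw [Real.mul_rpow hc1p.le (by linarith)] at s2
    have s3 : l ^ (7 / 4 : ℝ) = l ^ (3 / 4 : ℝ) * l := by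
      rw [← Real.rpow_add_one (by linarith)]; norm_num
    calc (k : ℝ) * (10 * l + l / 2) ≤ (2 * l ^ (3 / 4 : ℝ)) * (10 * l + l / 2) := by gcongr
      _ = 21 * l ^ (7 / 4 : ℝ) := by rw [s3]; ring
      _ = 21 / (c1 ^ (7 / 4 : ℝ) * Real.log κ) * (c1 ^ (7 / 4 : ℝ) * l ^ (7 / 4 : ℝ)) * Real.log κ := by
          field_simp
      _ ≤ 21 / (c1 ^ (7 / 4 : ℝ) * Real.log κ) * T ^ (7 / 4 : ℝ) * Real.log κ := by gcongr
      _ ≤ ((P0.card : ℝ) - 2) * ((2 * R : ℕ) : ℝ) * Real.log κ := by gcongr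
      _ ≤ (P.card : ℝ) * ((2 * R : ℕ) : ℝ) * Real.log κ := by gcongr
      _ ≤ _ := by rw [mul_assoc]; exact s1
  obtain ⟨g, g1, g2⟩ := grouping ω (10 * l) (l / 2) (by linarith) (by linarith) k P hωup hsum
  refine ⟨2 * R, k, g, by omega, Nat.le_ceil _, hkM, ?_, g2⟩
  intro i hi
  obtain ⟨q1, q2, q3⟩ := g1 i hi
  refine ⟨?_, q2, by linarith⟩
  intro t ht
  have h1 := hPmem t (q1 ht)
  exact ⟨h1.1, h1.2.1, by omega, hlogt t (q1 ht)⟩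

/-- the modulus attached to a set of primes -/
def DQ (u : ℕ → ℤ) (Q : Finset ℕ) : ℕ := ∏ t ∈ Q, t * (u t).natAbs

lemma DQ_coprime {a₁ a₂ : ℤ} {u : ℕ → ℤ} (h : Luc a₁ a₂ u) (S : ℕ) (hS : 2 ≤ S) (Q Q' : Finset ℕ)
    (hQ : ∀ t ∈ Q, t.Prime ∧ S < t ∧ t ≤ 2 * S) (hQ' : ∀ t ∈ Q', t.Prime ∧ S < t ∧ t ≤ 2 * S)
    (hd : Disjoint Q Q') : (DQ u Q).Coprime (DQ u Q') := by
  have nd : ∀ s t : ℕ, (s.Prime ∧ S < s ∧ s ≤ 2 * S) → (t.Prime ∧ S < t ∧ t ≤ 2 * S) → s ≠ t →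
      t.Coprime (u s).natAbs := by
    intro s t hs ht hst
    rw [Nat.Prime.coprime_iff_not_dvd ht.1]
    intro hc
    exact h.not_dvd S s t hS hs.1 ht.1 hst hs.2.1 hs.2.2 ht.2.1 ht.2.2 (Int.natCast_dvd.2 hc)
  apply Nat.Coprime.prod_left
  intro t ht
  apply Nat.Coprime.prod_right
  intro s hs
  have hts : t ≠ s := fun e => (Finset.disjoint_left.1 hd ht) (e ▸ hs)
  have h1 : t.Coprime s := (Nat.coprime_primes (hQ t ht).1 (hQ' s hs).1).2 hts
  apply Nat.Coprime.mul_left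
  · exact Nat.Coprime.mul_right h1 (nd s t (hQ' s hs) (hQ t ht) hts.symm)
  · apply Nat.Coprime.mul_right
    · exact (nd t s (hQ t ht) (hQ' s hs) hts).symm
    · exact Int.isCoprime_iff_gcd_eq_one.1 (h.coprime_of_coprime t s h1)

lemma prod_le_gcd {a₁ a₂ : ℤ} {u : ℕ → ℤ} (h : Luc a₁ a₂ u) (Q : Finset ℕ)
    (hQ : ∀ t ∈ Q, t.Prime) (n : ℕ) (hn : 0 < n) (hd : DQ u Q ∣ n) :
    ∏ t ∈ Q, (u t).natAbs ≤ Int.gcd (n : ℤ) (u n) := by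
  have h1 : ∏ t ∈ Q, (u t).natAbs ∣ n :=
    (Finset.prod_dvd_prod_of_dvd _ _ (fun t _ => Dvd.intro_left t rfl)).trans hd
  have h2 : ∏ t ∈ Q, u t ∣ u n := by
    apply Finset.prod_dvd_of_coprime
    · intro s hs t ht hst
      exact h.coprime_of_coprime s t ((Nat.coprime_primes (hQ s hs) (hQ t ht)).2 hst)
    · intro t ht
      apply h.dvd_of_dvd
      refine Dvd.dvd.trans ?_ hd
      exact (Dvd.intro _ rfl : t ∣ t * (u t).natAbs).trans
        (Finset.dvd_prod_of_mem (fun t => t * (u t).natAbs) ht)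
  have h3 : ∏ t ∈ Q, (u t).natAbs ∣ (u n).natAbs := by
    have : (∏ t ∈ Q, u t).natAbs = ∏ t ∈ Q, (u t).natAbs := map_prod Int.natAbsHom u Q
    rw [← this]
    exact Int.natAbs_dvd_natAbs.2 h2
  apply Nat.le_of_dvd
  · apply Int.gcd_pos_of_ne_zero_left; exact_mod_cast hn.ne'
  · exact Nat.dvd_gcd (by simpa using h1) h3

lemma final_M {a₁ a₂ : ℤ} {u : ℕ → ℤ} (h : Luc a₁ a₂ u) :
    ∃ M1 : ℕ, ∀ M : ℕ, M1 ≤ M → ∃ q : ℕ, q.Prime ∧ q ≤ M ^ 100 ∧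
      M ^ 10 ≤ Int.gcd ((q - 1 : ℕ) : ℤ) (u (q - 1)) := by
  classical
  obtain ⟨M0, hM0⟩ := core
  obtain ⟨M1, hM1⟩ := exists_family h
  refine ⟨M0 + M1 + 2, ?_⟩
  intro M hM
  obtain ⟨S, k, g, hS, hk1, hk2, hg, hdis⟩ := hM1 M (by omega)
  have hMp : (0 : ℝ) < M := by exact_mod_cast (by omega : 0 < M)
  have hupos : ∀ i < k, ∀ t ∈ g i, 0 < |(u t : ℝ)| := by
    intro i hi t ht
    exact abs_pos.2 (by exact_mod_cast h.nz t ((hg i hi).1 t ht).1.pos)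
  have hprodlow : ∀ i < k, M ^ 10 ≤ ∏ t ∈ g i, (u t).natAbs := by
    intro i hi
    have h1 := (hg i hi).2.1
    rw [← Real.log_prod (fun t ht => (hupos i hi t ht).ne')] at h1
    have h2 : Real.log ((M : ℝ) ^ 10) ≤ Real.log (∏ t ∈ g i, |(u t : ℝ)|) := by
      rw [Real.log_pow]; push_cast; linarith
    have h3 := (Real.log_le_log_iff (by positivity) (Finset.prod_pos (hupos i hi))).1 h2
    have h4 : ((∏ t ∈ g i, (u t).natAbs : ℕ) : ℝ) = ∏ t ∈ g i, |(u t : ℝ)| := by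
      push_cast
      apply Finset.prod_congr rfl
      intro t _
      rw [Nat.cast_natAbs, Int.cast_abs]
    rw [← h4] at h3
    exact_mod_cast h3
  have hDup : ∀ i < k, DQ u (g i) ≤ M ^ 12 := by
    intro i hi
    have e : ((DQ u (g i) : ℕ) : ℝ) = ∏ t ∈ g i, ((t : ℝ) * |(u t : ℝ)|) := by
      rw [DQ]; push_cast
      apply Finset.prod_congr rfl
      intro t _
      rw [Nat.cast_natAbs, Int.cast_abs]
    have hpos : ∀ t ∈ g i, 0 < (t : ℝ) * |(u t : ℝ)| := by
      intro t ht
      have : (0 : ℝ) < t := by exact_mod_cast ((hg i hi).1 t ht).1.pos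
      exact mul_pos this (hupos i hi t ht)
    have h1 : Real.log (∏ t ∈ g i, ((t : ℝ) * |(u t : ℝ)|)) ≤ 12 * Real.log M := by
      rw [Real.log_prod (fun t ht => (hpos t ht).ne')]
      calc ∑ t ∈ g i, Real.log ((t : ℝ) * |(u t : ℝ)|) ≤ ∑ t ∈ g i, (8 / 7) * Real.log |(u t : ℝ)| := by
            apply Finset.sum_le_sum
            intro t ht
            have ht' := (hg i hi).1 t ht
            have : (t : ℝ) ≠ 0 := by exact_mod_cast ht'.1.ne_zero
            rw [Real.log_mul this (hupos i hi t ht).ne']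
            linarith [ht'.2.2.2]
        _ = (8 / 7) * ∑ t ∈ g i, Real.log |(u t : ℝ)| := by rw [Finset.mul_sum]
        _ ≤ (8 / 7) * (10.5 * Real.log M) := by gcongr; exact (hg i hi).2.2
        _ = _ := by ring
    have h2 : Real.log (∏ t ∈ g i, ((t : ℝ) * |(u t : ℝ)|)) ≤ Real.log ((M : ℝ) ^ 12) := by
      rw [Real.log_pow]; push_cast; exact h1
    have h3 := (Real.log_le_log_iff (Finset.prod_pos hpos) (by positivity)).1 h2
    rw [← e] at h3
    exact_mod_cast h3
  have hDlow : ∀ i < k, 2 ≤ DQ u (g i) := by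
    intro i hi
    have h1 : ∏ t ∈ g i, (u t).natAbs ≤ DQ u (g i) := by
      apply Finset.prod_le_prod'
      intro t ht
      exact Nat.le_mul_of_pos_left _ ((hg i hi).1 t ht).1.pos
    have h2 : M ≤ M ^ 10 := Nat.le_self_pow (by norm_num) M
    have := hprodlow i hi
    omega
  have hmem : ∀ i < k, ∀ t ∈ g i, t.Prime ∧ S < t ∧ t ≤ 2 * S := by
    intro i hi t ht
    have := (hg i hi).1 t ht
    exact ⟨this.1, this.2.1, this.2.2.1⟩
  have hcop : ∀ i < k, ∀ j < k, i ≠ j → (DQ u (g i)).Coprime (DQ u (g j)) := fun i hi j hj hij =>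
    DQ_coprime h S hS _ _ (hmem i hi) (hmem j hj) (hdis i hi j hj hij)
  set G : Finset ℕ := (range k).image (fun i => DQ u (g i)) with hG
  have hGcard : G.card = k := by
    rw [hG, Finset.card_image_of_injOn, card_range]
    intro i hi j hj hij
    by_contra hne
    have hi' := mem_range.1 (mem_coe.1 hi)
    have hj' := mem_range.1 (mem_coe.1 hj)
    have h1 := hcop i hi' j hj' hne
    simp only at hij
    rw [← hij, Nat.coprime_self] at h1
    have := hDlow i hi'
    omega
  have hFam : Fam M G := by
    refine ⟨?_, ?_, ?_, ?_⟩
    · intro D hD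
      obtain ⟨i, hi, rfl⟩ := mem_image.1 hD
      exact hDlow i (mem_range.1 hi)
    · intro D hD
      obtain ⟨i, hi, rfl⟩ := mem_image.1 hD
      exact hDup i (mem_range.1 hi)
    · intro D hD D' hD' hne
      obtain ⟨i, hi, rfl⟩ := mem_image.1 hD
      obtain ⟨j, hj, rfl⟩ := mem_image.1 hD'
      exact hcop i (mem_range.1 hi) j (mem_range.1 hj) (fun e => hne (by rw [e]))
    · rw [hGcard]; exact hk2
  obtain ⟨D, hD, q, hq, hqM, hqD⟩ := hM0 M (by omega) G hFam (by rw [hGcard]; exact hk1)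
  obtain ⟨i, hi, rfl⟩ := mem_image.1 hD
  have hi' := mem_range.1 hi
  refine ⟨q, hq, hqM, ?_⟩
  refine (hprodlow i hi').trans ?_
  have hq2 := hq.two_le
  apply prod_le_gcd h (g i) (fun t ht => (hmem i hi' t ht).1) (q - 1) (by omega)
  have := Nat.dvd_sub_mod (n := DQ u (g i)) q
  rwa [hqD] at this

lemma final_x {a₁ a₂ : ℤ} {u : ℕ → ℤ} (h : Luc a₁ a₂ u) :
    ∃ c x₀ : ℝ, 0 < c ∧ 0 < x₀ ∧ ∀ x : ℝ, x₀ ≤ x → ∃ q : ℕ, q.Prime ∧ (q : ℝ) ≤ x ∧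
      c * x ^ (0.1 : ℝ) ≤ (Int.gcd ((q - 1 : ℕ) : ℤ) (u (q - 1)) : ℝ) := by
  obtain ⟨M1, hM1⟩ := final_M h
  refine ⟨1 / 1024, ((M1 : ℝ) + 1) ^ 100, by norm_num, by positivity, ?_⟩
  intro x hx
  have hx0 : 0 < x := lt_of_lt_of_le (by positivity) hx
  set y : ℝ := x ^ (1 / 100 : ℝ) with hy
  have hy0 : 0 < y := Real.rpow_pos_of_pos hx0 _
  have hyx : y ^ 100 = x := by
    rw [hy, ← Real.rpow_natCast, ← Real.rpow_mul hx0.le]; norm_num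
  have hyM : (M1 : ℝ) + 1 ≤ y := by
    rw [← hyx] at hx
    exact le_of_pow_le_pow_left₀ (by norm_num) hy0.le hx
  set M := ⌊y⌋₊ with hM
  have hMy : (M : ℝ) ≤ y := Nat.floor_le hy0.le
  have hyM2 : y < M + 1 := Nat.lt_floor_add_one y
  have hMM : M1 ≤ M := Nat.le_floor (by linarith)
  have hM1' : (1 : ℝ) ≤ M := by
    have : 1 ≤ M := Nat.le_floor (by push_cast; linarith [(Nat.cast_nonneg M1 : (0 : ℝ) ≤ M1)])
    exact_mod_cast this
  obtain ⟨q, hq, hqM, hg⟩ := hM1 M hMM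
  refine ⟨q, hq, ?_, ?_⟩
  · calc (q : ℝ) ≤ (M : ℝ) ^ 100 := by exact_mod_cast hqM
      _ ≤ y ^ 100 := by gcongr
      _ = x := hyx
  · have hx1 : x ^ (0.1 : ℝ) = y ^ 10 := by
      rw [hy, ← Real.rpow_natCast, ← Real.rpow_mul hx0.le]; norm_num
    have hg' : (M : ℝ) ^ 10 ≤ (Int.gcd ((q - 1 : ℕ) : ℤ) (u (q - 1)) : ℝ) := by exact_mod_cast hg
    refine le_trans ?_ hg'
    rw [hx1]
    calc 1 / 1024 * y ^ 10 ≤ 1 / 1024 * (2 * (M : ℝ)) ^ 10 := by gcongr; linarith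
      _ = _ := by ring

end LT

/-- There are `c, x₀ > 0` (depending on `a₁, a₂`) such that for all
`x ≥ x₀`, `G(x) = max{g_u(p−1) : p ≤ x prime} ≥ c·x^{0.1}`, i.e. some prime `p ≤ x` satisfies
`g_u(p−1) ≥ c·x^{0.1}`. -/
theorem statement12 (a₁ a₂ : ℤ) (hcop : IsCoprime a₁ a₂) (ha₂ : a₂ ≠ 0)
    (hΔ : a₁ ^ 2 + 4 * a₂ ≠ 0)
    (u : ℕ → ℤ) (hu0 : u 0 = 0) (hu1 : u 1 = 1)
    (hrec : ∀ n : ℕ, u (n + 2) = a₁ * u (n + 1) + a₂ * u n)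
    (hnd : ∀ α β : ℂ, α ^ 2 = (a₁ : ℂ) * α + (a₂ : ℂ) →
      β ^ 2 = (a₁ : ℂ) * β + (a₂ : ℂ) → α ≠ β → ∀ k : ℕ, 0 < k → (α / β) ^ k ≠ 1) :
    ∃ c x₀ : ℝ, 0 < c ∧ 0 < x₀ ∧ ∀ x : ℝ, x₀ ≤ x →
      ∃ q : ℕ, q.Prime ∧ (q : ℝ) ≤ x ∧ c * x ^ (0.1 : ℝ) ≤ (gu u (q - 1) : ℝ) := by
  exact LT.final_x ⟨hcop, ha₂, hΔ, hu0, hu1, hrec, LT.luc_nz a₁ a₂ ha₂ hΔ u hu0 hu1 hrec hnd⟩
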